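/- arXiv:math/9905209 — 2 statements merged into one kernel-verified Lean document; each statement's English description precedes it below -/
import Mathlib

section
/- The mapping torus M(Φ) of an injective endomorphism Φ of a (possibly infinite rank) free group is coherent: every finitely generated subgroup of M(Φ) is finitely presented. -/
/-- The relators `t eᵢ t⁻¹ Φ(eᵢ)⁻¹` of the mapping torus of an endomorphism `Φ` of the
free group on `I`; the generator `none` plays the role of the stable letter `t`. -/
def mtRels {I : Type} (Φ : FreeGroup I →* FreeGroup I) : Set (FreeGroup (Option I)) :=
  Set.range fun i : I =>
    FreeGroup.of (none : Option I) * FreeGroup.of (some i) * (FreeGroup.of (none : Option I))⁻¹ *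
      (FreeGroup.map some (Φ (FreeGroup.of i)))⁻¹

/-- The mapping torus `M(Φ) = ⟨t, eᵢ (i ∈ I) | t eᵢ t⁻¹ Φ(eᵢ)⁻¹ (i ∈ I)⟩`. -/
abbrev MT {I : Type} (Φ : FreeGroup I →* FreeGroup I) : Type := PresentedGroup (mtRels Φ)

/-- The stable letter `t` of the mapping torus. -/
def mtT {I : Type} (Φ : FreeGroup I →* FreeGroup I) : MT Φ := PresentedGroup.of none

/-- The natural homomorphism `ι : 𝔽 → M(Φ)`. -/
def mtι {I : Type} (Φ : FreeGroup I →* FreeGroup I) : FreeGroup I →* MT Φ :=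
  (PresentedGroup.mk (mtRels Φ)).comp (FreeGroup.map some)

/-- A group is finitely presented if it is isomorphic to the quotient of a finitely
generated free group by the normal closure of a finite set of relators. -/
def FinitelyPresented (G : Type) [Group G] : Prop :=
  ∃ (n : ℕ) (rels : Set (FreeGroup (Fin n))),
    rels.Finite ∧ Nonempty (PresentedGroup rels ≃* G)



namespace FH

/-! ### Words -/

/-- The element of the free group given by a letter. -/
def lt {I : Type} (l : I × Bool) : FreeGroup I := FreeGroup.mk [l]

/-- The inverse letter. -/
def li {I : Type} (l : I × Bool) : I × Bool := (l.1, !l.2)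

open scoped Classical in
/-- The reduced word of `h` starts with the letter `l`. -/
def starts {I : Type} (h : FreeGroup I) (l : I × Bool) : Prop := h.toWord.head? = some l

section words
variable {I : Type}

theorem li_li (l : I × Bool) : li (li l) = l := by simp [li]
theorem li_ne (l : I × Bool) : li l ≠ l := by
  intro h
  have := congrArg Prod.snd h
  simp [li] at this

theorem lt_inv (l : I × Bool) : (lt l)⁻¹ = lt (li l) := by simp [lt, li, FreeGroup.invRev]

theorem not_starts_one (l : I × Bool) : ¬ starts (1 : FreeGroup I) l := by simp [starts]

theorem starts_unique {h : FreeGroup I} {l l' : I × Bool} (h1 : starts h l) (h2 : starts h l') :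
    l = l' := by
  unfold starts at *
  rw [h1] at h2
  exact Option.some.inj h2

theorem exists_starts {h : FreeGroup I} (hh : h ≠ 1) : ∃ l, starts h l := by
  classical
  unfold starts
  rcases hw : h.toWord with _ | ⟨l, L⟩
  · exact absurd (FreeGroup.toWord_eq_nil_iff.1 hw) hh
  · refine ⟨l, ?_⟩
    rfl

/-- Multiplying a reduced word by a letter on the left. -/
theorem toWord_lt_mul [DecidableEq I] (l : I × Bool) (h : FreeGroup I) :
    (lt l * h).toWord = if h.toWord.head? = some (li l) then h.toWord.tail else l :: h.toWord := by
  have h0 : (lt l * h).toWord = FreeGroup.reduce (l :: h.toWord) := by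
    rw [FreeGroup.toWord_mul, lt, FreeGroup.toWord_mk]
    simp
  rw [h0, FreeGroup.reduce.cons, FreeGroup.reduce_toWord]
  rcases h.toWord with _ | ⟨m, L⟩
  · simp
  · obtain ⟨m1, m2⟩ := m
    obtain ⟨l1, l2⟩ := l
    simp only [List.head?_cons, li, Option.some.injEq, List.tail_cons, Prod.mk.injEq]
    by_cases h1 : l1 = m1
    · subst h1
      cases l2 <;> cases m2 <;> simp
    · have : ¬ m1 = l1 := fun h => h1 h.symm
      simp [h1, this]

theorem starts_lt_mul (l : I × Bool) (h : FreeGroup I) :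
    starts (lt l * h) l ↔ ¬ starts h (li l) := by
  classical
  unfold starts
  have key := toWord_lt_mul l h
  have hred : FreeGroup.IsReduced h.toWord := FreeGroup.isReduced_toWord
  by_cases hs : h.toWord.head? = some (li l)
  · rw [if_pos hs] at key
    have : ¬ (lt l * h).toWord.head? = some l := by
      rw [key]
      intro h2
      rcases hw : h.toWord with _ | ⟨m, _ | ⟨m', L⟩⟩ <;> rw [hw] at hs h2 hred
      · simp at hs
      · simp at h2
      · simp at hs h2
        subst hs h2
        rw [FreeGroup.isReduced_cons_cons] at hred
        simpa [li] using hred.1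
    constructor
    · intro h2; exact absurd (by convert h2) this
    · intro h2; exact absurd (by convert hs) h2
  · rw [if_neg hs] at key
    constructor
    · intro _ h2; exact hs (by convert h2)
    · intro _
      have := congrArg List.head? key
      rw [List.head?_cons] at this
      convert this

theorem starts_lt_mul_ne {l m : I × Bool} {h : FreeGroup I} (hne : m ≠ l)
    (hs : starts (lt m * h) l) : starts h (li m) := by
  by_contra hc
  exact hne (starts_unique ((starts_lt_mul m h).2 hc) hs)

/-- Induction on reduced words. -/
theorem word_induction {P : FreeGroup I → Prop} (h1 : P 1)
    (hl : ∀ l h, ¬ starts h (li l) → P h → P (lt l * h)) (g : FreeGroup I) : P g := by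
  classical
  generalize hn : g.toWord.length = n
  induction n generalizing g with
  | zero =>
    have : g = 1 := by simpa using hn
    rw [this]; exact h1
  | succ n ih =>
    have hg : g ≠ 1 := by rintro rfl; simp at hn
    obtain ⟨l, hs⟩ := exists_starts hg
    have hs' : g.toWord.head? = some l := by unfold starts at hs; convert hs
    have key := toWord_lt_mul (li l) g
    rw [li_li, if_pos hs'] at key
    have h2 : g = lt l * (lt (li l) * g) := by rw [← lt_inv]; group
    rw [h2]
    apply hl
    · rw [starts_lt_mul, li_li]
      exact not_not.2 hs
    · apply ih
      rw [key, List.length_tail, hn]; rfl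

theorem crossing {l k : I × Bool} {h : FreeGroup I} (h1 : ¬ starts h l)
    (h2 : starts (h * lt k) l) : h = 1 ∧ k = l := by
  induction h using word_induction generalizing l with
  | h1 =>
    refine ⟨rfl, ?_⟩
    rw [one_mul] at h2
    have : starts (lt k * 1) k := (starts_lt_mul k 1).2 (not_starts_one _)
    rw [mul_one] at this
    exact starts_unique this h2
  | hl m h' hm ih =>
    have hml : m ≠ l := by
      rintro rfl
      exact h1 ((starts_lt_mul m h').2 hm)
    rw [mul_assoc] at h2
    obtain ⟨rfl, rfl⟩ := ih hm (starts_lt_mul_ne hml h2)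
    rw [one_mul, ← lt_inv, mul_inv_cancel] at h2
    exact absurd h2 (not_starts_one _)

theorem no_cancel {A G : FreeGroup I} {l l' : I × Bool} (hA : A ≠ 1) (h1 : ¬ starts A l)
    (h2 : starts G l') (h3 : ¬ starts A⁻¹ l') : ¬ starts (A * G) l := by
  -- walk along `G`
  have key : ∀ (G P : FreeGroup I), (∀ l, starts G l → ¬ starts P⁻¹ l) → ¬ starts (A * P) l →
      P ≠ 1 → (∀ m, starts P m → ¬ starts A⁻¹ m) → ¬ starts (A * P * G) l := by
    intro G
    induction G using word_induction with
    | h1 => intro P _ h _ _; simpa using h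
    | hl k G' hk ih =>
      intro P hP hAP hP1 hm
      have hk1 : starts (lt k * G') k := (starts_lt_mul k G').2 hk
      have hPk := hP k hk1
      have hPk' : ∀ m, starts (P * lt k) m → starts P m := by
        intro m hm'
        by_contra hc
        exact hP1 (crossing hc hm').1
      have : A * P * (lt k * G') = A * (P * lt k) * G' := by group
      rw [this]
      have hinv : starts (P * lt k)⁻¹ (li k) := by
        rw [mul_inv_rev, lt_inv, starts_lt_mul, li_li]
        exact hPk
      apply ih
      · intro m hm1 hm2
        rw [starts_unique hm2 hinv] at hm1
        exact hk hm1
      · intro hs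
        rw [← mul_assoc] at hs
        have h5 := (crossing hAP hs).1
        obtain ⟨m, hm1⟩ := exists_starts hP1
        have : A⁻¹ = P := by rw [inv_eq_iff_mul_eq_one]; exact h5
        rw [this] at hm
        exact hm m hm1 hm1
      · intro h; rw [h, inv_one] at hinv; exact not_starts_one _ hinv
      · intro m hm'; exact hm m (hPk' m hm')
  induction G using word_induction with
  | h1 => exact absurd h2 (not_starts_one _)
  | hl k G' hk _ =>
    have hk1 : starts (lt k * G') k := (starts_lt_mul k G').2 hk
    have hkl := starts_unique hk1 h2
    subst hkl
    rw [← mul_assoc]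
    have hone : starts (lt k) k := by
      have : starts (lt k * 1) k := (starts_lt_mul k 1).2 (not_starts_one _)
      rwa [mul_one] at this
    apply key G' (lt k)
    · intro m hm1 hm2
      have hone' : starts (lt (li k)) (li k) := by
        have : starts (lt (li k) * 1) (li k) := (starts_lt_mul _ 1).2 (not_starts_one _)
        rwa [mul_one] at this
      rw [lt_inv] at hm2
      rw [starts_unique hm2 hone'] at hm1
      exact hk hm1
    · intro hs
      exact hA (crossing h1 hs).1
    · rintro h; rw [h] at hone; exact not_starts_one _ hone
    · intro m hm; rw [starts_unique hm hone]; exact h3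

end words

/-! ### Good subsets -/

/-- Adjacency inside `T`. -/
def step {I : Type} (T : Set (FreeGroup I)) (y z : FreeGroup I) : Prop :=
  y ∈ T ∧ z ∈ T ∧ ∃ l, z = y * lt l

/-- `T` is a connected `X`-invariant subset of the Cayley tree containing `1`. -/
structure Good {I : Type} (X : Subgroup (FreeGroup I)) (T : Set (FreeGroup I)) : Prop where
  one : 1 ∈ T
  smul : ∀ x ∈ X, ∀ y ∈ T, x * y ∈ T
  conn : ∀ y ∈ T, Relation.ReflTransGen (step T) 1 y

section good
variable {I : Type} {X : Subgroup (FreeGroup I)} {T : Set (FreeGroup I)}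

theorem step.symm {y z : FreeGroup I} (h : step T y z) : step T z y := by
  obtain ⟨hy, hz, l, rfl⟩ := h
  exact ⟨hz, hy, li l, by rw [← lt_inv]; group⟩

theorem reach_symm {y z : FreeGroup I} (h : Relation.ReflTransGen (step T) y z) :
    Relation.ReflTransGen (step T) z y := by
  induction h with
  | refl => exact .refl
  | tail _ h ih => exact .head h.symm ih

theorem Good.conn2 (hT : Good X T) {y z : FreeGroup I} (hy : y ∈ T) (hz : z ∈ T) :
    Relation.ReflTransGen (step T) y z :=
  (reach_symm (hT.conn y hy)).trans (hT.conn z hz)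

theorem reach_mono {T' : Set (FreeGroup I)} (h : T ⊆ T') {y z : FreeGroup I}
    (hr : Relation.ReflTransGen (step T) y z) : Relation.ReflTransGen (step T') y z :=
  hr.lift id (fun _ _ ⟨h1, h2, h3⟩ => ⟨h h1, h h2, h3⟩)

theorem reach_mul {T' : Set (FreeGroup I)} (g : FreeGroup I) (h : ∀ y ∈ T, g * y ∈ T')
    {y z : FreeGroup I}
    (hr : Relation.ReflTransGen (step T) y z) :
    Relation.ReflTransGen (step T') (g * y) (g * z) := by
  induction hr with
  | refl => exact .refl
  | tail _ hs ih =>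
    obtain ⟨h1, h2, l, rfl⟩ := hs
    exact .tail ih ⟨h _ h1, h _ h2, l, by group⟩

theorem Good.convex (hT : Good X T) {y y' : FreeGroup I} (hy : y ∈ T) (hy' : y' ∈ T)
    {l : I × Bool} (hs : starts (y⁻¹ * y') l) : y * lt l ∈ T := by
  have hr := hT.conn2 hy hy'
  induction hr with
  | refl => rw [inv_mul_cancel] at hs; exact absurd hs (not_starts_one _)
  | @tail z w _ hst ih =>
    obtain ⟨hz, hw, k, rfl⟩ := hst
    by_cases hc : starts (y⁻¹ * z) l
    · exact ih hz hc
    · rw [← mul_assoc] at hs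
      obtain ⟨h1, rfl⟩ := crossing hc hs
      have : y = z := by rwa [inv_mul_eq_one] at h1
      rw [this]; exact hw

theorem Good.disj (hT : Good X T) {y y' g : FreeGroup I} (hy : y ∈ T) (hy' : y' ∈ T)
    {l l' : I × Bool} (hl : y * lt l ∉ T) (hl' : y' * lt l' ∉ T)
    (hs : starts (y⁻¹ * g) l) (hs' : starts (y'⁻¹ * g) l') : y = y' ∧ l = l' := by
  by_cases h : y = y'
  · subst h
    exact ⟨rfl, starts_unique hs hs'⟩
  · exfalso
    refine no_cancel (A := y⁻¹ * y') (G := y'⁻¹ * g) (l := l) (l' := l') ?_ ?_ hs' ?_ ?_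
    · rwa [Ne, inv_mul_eq_one]
    · exact fun h => hl (hT.convex hy hy' h)
    · intro h
      rw [mul_inv_rev, inv_inv] at h
      exact hl' (hT.convex hy' hy h)
    · convert hs using 1
      group

/-- A ping-pong certificate that `X` and `b` generate their free product with `b` of infinite
order. -/
def PP {G : Type} [Group G] (X : Subgroup G) (b : G) : Prop :=
  ∃ S : Set G, 1 ∉ S ∧
    (∀ x ∈ X, x ≠ 1 → ∀ g ∈ X ⊔ Subgroup.zpowers b, g ∈ S → x * g ∉ S) ∧
    (∀ n : ℤ, n ≠ 0 → ∀ g ∈ X ⊔ Subgroup.zpowers b, g ∉ S → b ^ n * g ∈ S)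

theorem Good.pingpong (hT : Good X T) {b v v' : FreeGroup I} {a : I × Bool} (hv : v ∈ T)
    (hv' : v' ∈ T) (hb : b * v' = v * lt a) (hd : ∀ y ∈ T, b * y ∉ T) : PP X b := by
  have hva : v * lt a ∉ T := hb ▸ hd v' hv'
  have hva' : v' * lt (li a) ∉ T := by
    intro h
    apply hd _ h
    rw [← mul_assoc, hb, ← lt_inv]
    simpa using hv
  have e1 : ∀ g, starts (v⁻¹ * (b * g)) a ↔ ¬ starts (v'⁻¹ * g) (li a) := by
    intro g
    rw [← starts_lt_mul]
    have : v⁻¹ * (b * g) = lt a * (v'⁻¹ * g) := by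
      have : b = v * lt a * v'⁻¹ := by rw [← hb]; group
      rw [this]; group
    rw [this]
  have e2 : ∀ g, starts (v'⁻¹ * (b⁻¹ * g)) (li a) ↔ ¬ starts (v⁻¹ * g) a := by
    intro g
    have := e1 (b⁻¹ * g)
    rw [mul_inv_cancel_left] at this
    rw [this, not_not]
  have e3 : ∀ g, starts (v⁻¹ * g) a → ¬ starts (v'⁻¹ * g) (li a) := by
    intro g h1 h2
    exact li_ne a (hT.disj hv hv' hva hva' h1 h2).2.symm
  have tr : ∀ x ∈ X, ∀ y l, y * lt l ∉ T → x * y * lt l ∉ T := by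
    intro x hx y l h h'
    apply h
    have := hT.smul x⁻¹ (X.inv_mem hx) _ h'
    convert this using 1
    group
  refine ⟨{g | starts (v⁻¹ * g) a ∨ starts (v'⁻¹ * g) (li a)}, ?_, ?_, ?_⟩
  · rintro (h | h)
    · exact hva (hT.convex hv hT.one h)
    · exact hva' (hT.convex hv' hT.one h)
  · rintro x hx hx1 g - hg hg'
    have hX : ∀ y l, starts (y⁻¹ * g) l → starts ((x * y)⁻¹ * (x * g)) l := by
      intro y l h; convert h using 1; group
    rcases hg with hg | hg <;> rcases hg' with hg' | hg'
    · have := (hT.disj (hT.smul x hx v hv) hv (tr x hx v a hva) hva (hX _ _ hg) hg').1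
      exact hx1 (by simpa using this)
    · have := (hT.disj (hT.smul x hx v hv) hv' (tr x hx v a hva) hva' (hX _ _ hg) hg').2
      exact li_ne a this.symm
    · have := (hT.disj (hT.smul x hx v' hv') hv (tr x hx v' _ hva') hva (hX _ _ hg) hg').2
      exact li_ne a this
    · have := (hT.disj (hT.smul x hx v' hv') hv' (tr x hx v' _ hva') hva' (hX _ _ hg) hg').1
      exact hx1 (by simpa using this)
  · rintro n hn g - hg
    simp only [Set.mem_ofPred_eq, not_or] at hg ⊢
    have pos : ∀ n : ℕ, starts (v⁻¹ * (b ^ (n + 1) * g)) a := by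
      intro n
      induction n with
      | zero => rw [zero_add, pow_one, e1]; exact hg.2
      | succ n ih => rw [pow_succ' b, mul_assoc, e1]; exact e3 _ ih
    have neg : ∀ n : ℕ, starts (v'⁻¹ * ((b⁻¹) ^ (n + 1) * g)) (li a) := by
      intro n
      induction n with
      | zero => rw [zero_add, pow_one, e2]; exact hg.1
      | succ n ih => rw [pow_succ' b⁻¹, mul_assoc, e2]; exact fun h => e3 _ h ih
    rcases n with n | n
    · rcases n with _ | n
      · exact absurd rfl hn
      · left; exact_mod_cast pos n
    · right
      rw [zpow_negSucc, ← inv_pow]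
      exact neg n

end good

end FH


namespace FH

section pp
variable {G G' : Type} [Group G] [Group G']

theorem PP.comap {X : Subgroup G} {c : G} {Z : Subgroup G'} (Ψ : G →* G')
    (hΨ : Function.Injective Ψ) (hX : X.map Ψ ≤ Z) (h : PP Z (Ψ c)) : PP X c := by
  obtain ⟨S, h1, h2, h3⟩ := h
  have hg : ∀ g ∈ X ⊔ Subgroup.zpowers c, Ψ g ∈ Z ⊔ Subgroup.zpowers (Ψ c) := by
    intro g hg
    have : (X ⊔ Subgroup.zpowers c).map Ψ ≤ Z ⊔ Subgroup.zpowers (Ψ c) := by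
      rw [Subgroup.map_sup, MonoidHom.map_zpowers]
      exact sup_le_sup_right hX _
    exact this (Subgroup.mem_map_of_mem Ψ hg)
  refine ⟨Ψ ⁻¹' S, by simpa using h1, ?_, ?_⟩
  · intro x hx hx1 g hgm hgS
    rw [Set.mem_preimage, map_mul]
    exact h2 _ (hX (Subgroup.mem_map_of_mem Ψ hx)) (by rwa [Ne, map_eq_one_iff Ψ hΨ]) _ (hg g hgm) hgS
  · intro n hn g hgm hgS
    rw [Set.mem_preimage, map_mul, map_zpow]
    exact h3 n hn _ (hg g hgm) hgS

theorem PP.map {X : Subgroup G} {c : G} (Ψ : G →* G')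
    (hΨ : Function.Injective Ψ) (h : PP X c) : PP (X.map Ψ) (Ψ c) := by
  obtain ⟨S, h1, h2, h3⟩ := h
  have hg : ∀ g ∈ X.map Ψ ⊔ Subgroup.zpowers (Ψ c), ∃ g' ∈ X ⊔ Subgroup.zpowers c, Ψ g' = g := by
    intro g hg
    rw [← MonoidHom.map_zpowers, ← Subgroup.map_sup] at hg
    exact hg
  have hS : ∀ g, Ψ g ∈ Ψ '' S ↔ g ∈ S := fun g => hΨ.mem_set_image
  refine ⟨Ψ '' S, by rwa [← map_one Ψ, hS], ?_, ?_⟩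
  · rintro _ ⟨x, hx, rfl⟩ hx1 g hgm hgS
    obtain ⟨g, hg', rfl⟩ := hg g hgm
    rw [hS] at hgS
    rw [← map_mul, hS]
    exact h2 x hx (by rintro rfl; simp at hx1) g hg' hgS
  · rintro n hn g hgm hgS
    obtain ⟨g, hg', rfl⟩ := hg g hgm
    rw [hS] at hgS
    rw [← map_zpow, ← map_mul, hS]
    exact h3 n hn g hg' hgS

theorem PP.zpow_ne {X : Subgroup G} {b : G} (h : PP X b) {n : ℤ} (hn : n ≠ 0) : b ^ n ≠ 1 := by
  obtain ⟨S, h1, _, h3⟩ := h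
  have := h3 n hn 1 (one_mem _) h1
  intro h
  rw [h, mul_one] at this
  exact h1 this

open scoped Pointwise in
theorem PP.free {X : Subgroup G} {b : G} (h : PP X b) {α : Type} {x : α → G}
    (hx : Function.Injective (FreeGroup.lift x)) (hX : (FreeGroup.lift x).range = X) :
    Function.Injective (FreeGroup.lift (fun o : Option α => o.elim b x)) := by
  have hinf := fun n (hn : n ≠ 0) => h.zpow_ne (n := n) hn
  obtain ⟨S, h1, h2, h3⟩ := h
  let W := X ⊔ Subgroup.zpowers b
  let b' : W := ⟨b, Subgroup.mem_sup_right (Subgroup.mem_zpowers b)⟩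
  let K : Bool → Subgroup W := fun i => bif i then X.subgroupOf W else Subgroup.zpowers b'
  have hb' : ∀ n : ℤ, n ≠ 0 → b' ^ n ≠ 1 := by
    intro n hn h
    exact hinf n hn (by simpa [b'] using congrArg (Subtype.val) h)
  let f : ∀ i, K i →* W := fun i => (K i).subtype
  let Y : Bool → Set W := fun i => bif i then {g | g.1 ∉ S} else {g | g.1 ∈ S}
  have hinj : Function.Injective (Monoid.CoprodI.lift f) := by
    apply Monoid.CoprodI.lift_injective_of_ping_pong f (X := Y)
    · right
      refine ⟨false, ?_⟩
      have : Infinite (K false) := by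
        change Infinite (Subgroup.zpowers b')
        refine Infinite.of_injective (fun n : ℤ => (⟨b' ^ n, n, rfl⟩ : Subgroup.zpowers b')) ?_
        intro m n hmn
        have hmn : b' ^ m = b' ^ n := congrArg Subtype.val hmn
        by_contra hc
        apply hb' (m - n) (sub_ne_zero.2 hc)
        rw [zpow_sub, hmn, mul_inv_cancel]
      exact (Cardinal.natCast_lt_aleph0 (n := 3)).le.trans (Cardinal.aleph0_le_mk _)
    · intro i
      cases i
      · refine ⟨b', ?_⟩
        change b ∈ S
        have := h3 1 one_ne_zero 1 (one_mem _) h1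
        simpa using this
      · exact ⟨1, h1⟩
    · intro i j hij
      rw [Function.onFun, Set.disjoint_left]
      cases i <;> cases j <;> simp_all [Y]
    · intro i j hij k hk
      rintro _ ⟨g, hg, rfl⟩
      cases i <;> cases j <;> first | exact absurd rfl hij | skip
      · obtain ⟨k, n, rfl⟩ := k
        change g.1 ∉ S at hg
        have hn : n ≠ 0 := by
          rintro rfl; exact hk (Subtype.ext (by simp))
        have := h3 n hn g.1 g.2 hg
        change (b' ^ n * g).1 ∈ S
        simpa [b'] using this
      · obtain ⟨k, hk'⟩ := k
        change g.1 ∈ S at hg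
        have := h2 k.1 hk' (by intro h; exact hk (Subtype.ext (Subtype.ext h))) g.1 g.2 hg
        exact this
  -- the comparison map
  have hxX : ∀ a, x a ∈ X := by
    intro a; rw [← hX]; exact ⟨FreeGroup.of a, by simp⟩
  let xW : α → W := fun a => ⟨x a, Subgroup.mem_sup_left (hxX a)⟩
  let ψ : FreeGroup (Option α) →* Monoid.CoprodI (fun i => K i) :=
    FreeGroup.lift (fun o => o.elim (Monoid.CoprodI.of (i := false) ⟨b', Subgroup.mem_zpowers b'⟩)
      (fun a => Monoid.CoprodI.of (i := true) ⟨xW a, hxX a⟩))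
  have hcomp : FreeGroup.lift (fun o : Option α => o.elim b x) =
      (W.subtype.comp (Monoid.CoprodI.lift f)).comp ψ := by
    ext o
    cases o <;> simp [ψ, f, b', xW]
  -- left inverse
  let eX : FreeGroup α ≃* X := (MonoidHom.ofInjective hx).trans (MulEquiv.subgroupCongr hX)
  let lX : K true →* FreeGroup (Option α) := (FreeGroup.map some).comp
    (eX.symm.toMonoidHom.comp ((W.subtype.comp (K true).subtype).codRestrict X (fun k => k.2)))
  have hbz : Function.Injective (zpowersHom W b') := by
    rw [injective_iff_map_eq_one]
    intro n hn
    by_contra hc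
    exact hb' n.toAdd (by intro h; exact hc h) (by simpa using hn)
  let eb : Multiplicative ℤ ≃* (zpowersHom W b').range := MonoidHom.ofInjective hbz
  let lb : K false →* FreeGroup (Option α) := (zpowersHom _ (FreeGroup.of none)).comp
    (eb.symm.toMonoidHom.comp ((K false).subtype.codRestrict (zpowersHom W b').range
      (by rintro ⟨k, n, rfl⟩; exact ⟨Multiplicative.ofAdd n, by simp⟩)))
  let L : ∀ i, K i →* FreeGroup (Option α) := fun i => match i with
    | true => lX
    | false => lb
  have hleft : (Monoid.CoprodI.lift L).comp ψ = MonoidHom.id _ := by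
    ext o
    cases o with
    | none =>
      have : eb.symm ⟨b', ⟨Multiplicative.ofAdd 1, by simp⟩⟩ = Multiplicative.ofAdd 1 := by
        rw [MulEquiv.symm_apply_eq]
        apply Subtype.ext
        change b' = zpowersHom W b' (Multiplicative.ofAdd 1)
        simp
      simp only [ψ, L, lb, MonoidHom.comp_apply, FreeGroup.lift_apply_of, Option.elim,
        Monoid.CoprodI.lift_of, MonoidHom.id_apply]
      erw [this]
      simp
    | some a =>
      have : eX.symm ⟨x a, hxX a⟩ = FreeGroup.of a := by
        rw [MulEquiv.symm_apply_eq]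
        apply Subtype.ext
        change x a = FreeGroup.lift x (FreeGroup.of a)
        simp
      simp only [ψ, L, lX, MonoidHom.comp_apply, FreeGroup.lift_apply_of, Option.elim,
        Monoid.CoprodI.lift_of, MonoidHom.id_apply]
      erw [this]
      simp
  have hψ : Function.Injective ψ := by
    intro u v huv
    have := congrArg (Monoid.CoprodI.lift L) huv
    rw [← MonoidHom.comp_apply, ← MonoidHom.comp_apply, hleft] at this
    exact this
  rw [hcomp]
  exact (Subtype.val_injective.comp hinj).comp hψ

end pp

theorem PP_none (α : Type) : PP (FreeGroup.map (some : α → Option α)).range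
    (FreeGroup.of (none : Option α)) := by
  have hgood : Good (FreeGroup.map (some : α → Option α)).range
      ((FreeGroup.map (some : α → Option α)).range : Set (FreeGroup (Option α))) := by
    refine ⟨one_mem _, fun x hx y hy => mul_mem hx hy, ?_⟩
    rintro _ ⟨y, rfl⟩
    have : ∀ L : List (α × Bool), Relation.ReflTransGen
        (step ((FreeGroup.map (some : α → Option α)).range : Set (FreeGroup (Option α))))
          1 (FreeGroup.map some (FreeGroup.mk L)) := by
      intro L
      induction L using List.reverseRecOn with
      | nil => exact .refl
      | append_singleton L l ih =>
        refine .tail ih ⟨⟨_, rfl⟩, ⟨_, rfl⟩, (some l.1, l.2), ?_⟩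
        rw [← FreeGroup.mul_mk, map_mul]
        rfl
    obtain ⟨L, rfl⟩ := Quot.exists_rep y
    exact this L
  refine hgood.pingpong (v := 1) (v' := 1) (a := (none, true)) (one_mem _) (one_mem _) ?_ ?_
  · simp [lt, FreeGroup.of]
  · rintro _ ⟨y, rfl⟩ ⟨z, hz⟩
    let χ : FreeGroup (Option α) →* Multiplicative ℤ :=
      FreeGroup.lift (fun o => o.elim (Multiplicative.ofAdd 1) (fun _ => 1))
    have hχ : ∀ y : FreeGroup α, χ (FreeGroup.map some y) = 1 := by
      intro y
      have : χ.comp (FreeGroup.map some) = 1 := by ext a; simp [χ]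
      exact DFunLike.congr_fun this y
    have := congrArg χ hz
    rw [map_mul, hχ, hχ] at this
    simp [χ] at this
    exact absurd this (by decide)

theorem PP_of_free {G : Type} [Group G] {α : Type} (v : Option α → G)
    (hv : Function.Injective (FreeGroup.lift v)) :
    PP (FreeGroup.lift (fun a => v (some a))).range (v none) := by
  have := (PP_none α).map (FreeGroup.lift v) hv
  rw [FreeGroup.lift_apply_of, MonoidHom.map_range] at this
  convert this
  ext a; simp

end FH


namespace FH

/-- Free groups are residually finite. -/
theorem exists_perm_ne_one {α : Type} (w : FreeGroup α) (hw : w ≠ 1) :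
    ∃ (V : Type) (_ : Finite V) (f : FreeGroup α →* Equiv.Perm V), f w ≠ 1 := by
  classical
  obtain ⟨L, rfl⟩ := Quot.exists_rep w
  change FreeGroup.mk L ≠ 1 at hw
  let S : Set (FreeGroup α) := FreeGroup.mk '' {M | M <:+ L}
  have hS : S.Finite := by
    apply Set.Finite.image
    have : {M | M <:+ L} = {M | M ∈ L.tails} := by ext; simp
    rw [this]
    exact List.finite_toSet _
  have : Fintype S := hS.fintype
  let e : ∀ a : α, {h : S // FreeGroup.of a * h.1 ∈ S} ≃ {h : S // (FreeGroup.of a)⁻¹ * h.1 ∈ S} :=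
    fun a =>
    { toFun := fun h => ⟨⟨FreeGroup.of a * h.1.1, h.2⟩, by simp⟩
      invFun := fun h => ⟨⟨(FreeGroup.of a)⁻¹ * h.1.1, h.2⟩, by simp⟩
      left_inv := fun h => by simp
      right_inv := fun h => by simp }
  let σ : α → Equiv.Perm S := fun a => (e a).extendSubtype
  have hσ : ∀ a (h : S) (hh : FreeGroup.of a * h.1 ∈ S), σ a h = ⟨FreeGroup.of a * h.1, hh⟩ := by
    intro a h hh
    exact Equiv.extendSubtype_apply_of_mem (e a) h hh
  have hone : (1 : FreeGroup α) ∈ S := ⟨[], List.nil_suffix, rfl⟩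
  refine ⟨S, inferInstance, FreeGroup.lift σ, ?_⟩
  have key : ∀ M (hM : M <:+ L), FreeGroup.lift σ (FreeGroup.mk M) ⟨1, hone⟩ =
      ⟨FreeGroup.mk M, ⟨M, hM, rfl⟩⟩ := by
    intro M
    induction M with
    | nil => intro _; rfl
    | cons l M ih =>
      intro hM
      have hM' : M <:+ L := (List.suffix_cons l M).trans hM
      have hsplit : FreeGroup.mk (l :: M) = FreeGroup.mk [l] * FreeGroup.mk M := by
        rw [FreeGroup.mul_mk]; rfl
      have hmem : FreeGroup.mk [l] * FreeGroup.mk M ∈ S := ⟨l :: M, hM, hsplit⟩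
      have hmem' : FreeGroup.mk M ∈ S := ⟨M, hM', rfl⟩
      have h1 : FreeGroup.lift σ (FreeGroup.mk (l :: M)) ⟨1, hone⟩ =
        FreeGroup.lift σ (FreeGroup.mk [l]) ⟨FreeGroup.mk M, hmem'⟩ := by
        rw [hsplit, map_mul, Equiv.Perm.mul_apply, ih hM']
      rw [h1]
      obtain ⟨a, b⟩ := l
      cases b
      · have h2 : FreeGroup.mk [(a, false)] = (FreeGroup.of a)⁻¹ := by simp [FreeGroup.of]; rfl
        rw [h2, map_inv, FreeGroup.lift_apply_of, Equiv.Perm.inv_eq_iff_eq, hσ]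
        · apply Subtype.ext; simp [hsplit, h2]
        · simp only [hsplit, h2]; simpa using hmem'
      · have h2 : FreeGroup.mk [(a, true)] = FreeGroup.of a := rfl
        rw [h2, FreeGroup.lift_apply_of, hσ _ _ hmem]
        apply Subtype.ext; exact hsplit.symm
  intro h
  have := key L List.suffix_rfl
  change FreeGroup.lift σ (FreeGroup.mk L) = 1 at h
  rw [h] at this
  exact hw (congrArg Subtype.val this).symm

/-- Finitely generated free groups are Hopfian. -/
theorem hopf {κ : Type} [Finite κ] (θ : FreeGroup κ →* FreeGroup κ)
    (hθ : Function.Surjective θ) : Function.Injective θ := by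
  rw [injective_iff_map_eq_one]
  intro w hw
  by_contra hne
  obtain ⟨V, _, f, hf⟩ := exists_perm_ne_one w hne
  have : Finite (FreeGroup κ →* Equiv.Perm V) := Finite.of_equiv _ (FreeGroup.lift (α := κ))
  have hinj : Function.Injective (fun g : FreeGroup κ →* Equiv.Perm V => g.comp θ) := by
    intro g g' h
    ext1 a
    obtain ⟨y, hy⟩ := hθ (FreeGroup.of a)
    rw [← hy]
    exact DFunLike.congr_fun h y
  obtain ⟨g, hg⟩ := Finite.surjective_of_injective hinj f
  apply hf
  rw [← hg]
  simp [hw]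

/-- `Z` is free of rank `n`. -/
def HasRank {G : Type} [Group G] (Z : Subgroup G) (n : ℕ) : Prop :=
  ∃ v : Fin n → G, Function.Injective (FreeGroup.lift v) ∧ (FreeGroup.lift v).range = Z

section rank
variable {G : Type} [Group G]

theorem lift_comp_equiv {α β : Type} (e : α ≃ β) (v : β → G) :
    FreeGroup.lift (v ∘ e) = (FreeGroup.lift v).comp (FreeGroup.freeGroupCongr e).toMonoidHom := by
  ext a; simp

theorem HasRank.of_fam {Z : Subgroup G} {κ : Type} [Fintype κ] {n : ℕ} (hn : Fintype.card κ = n)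
    (v : κ → G) (hv : Function.Injective (FreeGroup.lift v)) (hZ : (FreeGroup.lift v).range = Z) :
    HasRank Z n := by
  let e : Fin n ≃ κ := (Fintype.equivFinOfCardEq hn).symm
  refine ⟨v ∘ e, ?_, ?_⟩
  · rw [lift_comp_equiv]
    exact hv.comp (MulEquiv.injective _)
  · rw [lift_comp_equiv, MonoidHom.range_comp,
      MonoidHom.range_eq_top_of_surjective (FreeGroup.freeGroupCongr e).toMonoidHom
        (FreeGroup.freeGroupCongr e).surjective, ← MonoidHom.range_eq_map, hZ]

theorem HasRank.free {Z : Subgroup G} {n : ℕ} (h : HasRank Z n) {κ : Type} [Fintype κ]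
    (hn : Fintype.card κ = n) (w : κ → G) (hw : (FreeGroup.lift w).range = Z) :
    Function.Injective (FreeGroup.lift w) := by
  obtain ⟨v, hv, hZ⟩ := h
  let e : κ ≃ Fin n := Fintype.equivFinOfCardEq hn
  let E : FreeGroup κ ≃* Z := ((FreeGroup.freeGroupCongr e).trans (MonoidHom.ofInjective hv)).trans
    (MulEquiv.subgroupCongr hZ)
  let p : FreeGroup κ →* Z := (FreeGroup.lift w).codRestrict Z (fun x => hw ▸ ⟨x, rfl⟩)
  have hp : Function.Surjective p := by
    rintro ⟨z, hz⟩
    rw [← hw] at hz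
    obtain ⟨x, hx⟩ := hz
    exact ⟨x, Subtype.ext hx⟩
  have := hopf (E.symm.toMonoidHom.comp p) (E.symm.surjective.comp hp)
  have hp : Function.Injective p := by
    intro x y hxy
    apply this
    simp [hxy]
  intro x y hxy
  exact hp (Subtype.ext hxy)

theorem HasRank.add {X : Subgroup G} {r : ℕ} (h : HasRank X r) {b : G} (hb : PP X b) :
    HasRank (X ⊔ Subgroup.zpowers b) (r + 1) := by
  obtain ⟨x, hx, hX⟩ := h
  refine HasRank.of_fam (κ := Option (Fin r)) (by simp) _ (hb.free hx hX) ?_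
  rw [FreeGroup.range_lift_eq_closure, ← hX, FreeGroup.range_lift_eq_closure,
    Subgroup.zpowers_eq_closure, ← Subgroup.closure_union]
  congr 1
  ext g
  constructor
  · rintro ⟨_ | i, rfl⟩
    · right; simp
    · left; simp
  · rintro (⟨i, rfl⟩ | h)
    · exact ⟨some i, rfl⟩
    · exact ⟨none, h.symm⟩

theorem HasRank.bot : HasRank (⊥ : Subgroup G) 0 := by
  refine ⟨Fin.elim0, ?_, ?_⟩
  · intro x y _; exact Subsingleton.elim _ _
  · rw [FreeGroup.range_lift_eq_closure]; simp

end rank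
end FH


namespace FH

/-- The subgroup generated by `X` and the list `B`. -/
def gen {G : Type} [Group G] (X : Subgroup G) (B : List G) : Subgroup G :=
  X ⊔ Subgroup.closure {b | b ∈ B}

section gen
variable {G : Type} [Group G]

theorem gen_le {X Z : Subgroup G} {B : List G} : gen X B ≤ Z ↔ X ≤ Z ∧ ∀ b ∈ B, b ∈ Z := by
  rw [gen, sup_le_iff, Subgroup.closure_le]; rfl

theorem le_gen (X : Subgroup G) (B : List G) : X ≤ gen X B := le_sup_left

theorem mem_gen (X : Subgroup G) {B : List G} {b : G} (hb : b ∈ B) : b ∈ gen X B :=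
  Subgroup.mem_sup_right (Subgroup.subset_closure hb)

theorem gen_nil (X : Subgroup G) : gen X [] = X := by simp [gen]

theorem mem_gen_left {X : Subgroup G} {B : List G} {b : G} (hb : b ∈ X) : b ∈ gen X B :=
  le_gen X B hb

theorem gen_cons (X : Subgroup G) (b : G) (B : List G) :
    gen X (b :: B) = gen (X ⊔ Subgroup.zpowers b) B := by
  apply le_antisymm
  · rw [gen_le]
    refine ⟨le_sup_left.trans (le_gen _ _), ?_⟩
    intro c hc
    rcases List.mem_cons.1 hc with rfl | hc
    · exact mem_gen_left (Subgroup.mem_sup_right (Subgroup.mem_zpowers _))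
    · exact mem_gen _ hc
  · rw [gen_le, sup_le_iff, Subgroup.zpowers_le]
    refine ⟨⟨le_gen _ _, mem_gen _ (by simp)⟩, fun c hc => mem_gen _ (by simp [hc])⟩

theorem gen_cons_congr {X : Subgroup G} {c c' : G} {B : List G} (h : c' ∈ gen X (c :: B))
    (h' : c ∈ gen X (c' :: B)) : gen X (c' :: B) = gen X (c :: B) := by
  apply le_antisymm
  · rw [gen_le]
    refine ⟨le_gen _ _, ?_⟩
    intro d hd
    rcases List.mem_cons.1 hd with rfl | hd
    · exact h
    · exact mem_gen _ (by simp [hd])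
  · rw [gen_le]
    refine ⟨le_gen _ _, ?_⟩
    intro d hd
    rcases List.mem_cons.1 hd with rfl | hd
    · exact h'
    · exact mem_gen _ (by simp [hd])

theorem gen_swap (X : Subgroup G) (b c : G) (B : List G) :
    gen X (b :: c :: B) = gen X (c :: b :: B) := by
  unfold gen
  congr 2
  ext d
  simp only [List.mem_cons, Set.mem_ofPred_eq]
  tauto

theorem gen_cons_mem {X : Subgroup G} {b : G} (B : List G) (hb : b ∈ X) :
    gen X (b :: B) = gen X B := by
  rw [gen_cons, sup_eq_left.2 ((Subgroup.zpowers_le).2 hb)]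

end gen

section extend
variable {I : Type} {X : Subgroup (FreeGroup I)} {T : Set (FreeGroup I)}

/-- Saturation of `T` under `X`. -/
def sat (X : Subgroup (FreeGroup I)) (T : Set (FreeGroup I)) : Set (FreeGroup I) :=
  {g | ∃ x ∈ X, ∃ y ∈ T, g = x * y}

theorem subset_sat (X : Subgroup (FreeGroup I)) (T : Set (FreeGroup I)) : T ⊆ sat X T :=
  fun y hy => ⟨1, one_mem _, y, hy, by simp⟩

theorem Good.extend (hT : Good X T) {b v v' : FreeGroup I} (hv : v ∈ T) (hv' : v' ∈ T)
    (hb : b * v' = v ∨ ∃ l, b * v' = v * lt l) :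
    Good (X ⊔ Subgroup.zpowers b) (sat (X ⊔ Subgroup.zpowers b) T) := by
  set X1 := X ⊔ Subgroup.zpowers b with hX1
  have hbX : b ∈ X1 := Subgroup.mem_sup_right (Subgroup.mem_zpowers b)
  have hmul : ∀ g ∈ X1, ∀ y ∈ sat X1 T, g * y ∈ sat X1 T := by
    rintro g hg _ ⟨x, hx, y, hy, rfl⟩
    exact ⟨g * x, mul_mem hg hx, y, hy, by group⟩
  have hmul' : ∀ g ∈ X1, ∀ y ∈ T, g * y ∈ sat X1 T :=
    fun g hg y hy => hmul g hg y (subset_sat X1 T hy)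
  have hsub := subset_sat X1 T
  let R : Subgroup (FreeGroup I) :=
    { carrier := {g | g ∈ X1 ∧ Relation.ReflTransGen (step (sat X1 T)) 1 g}
      one_mem' := ⟨one_mem _, .refl⟩
      mul_mem' := by
        rintro g h ⟨hg, hg'⟩ ⟨hh, hh'⟩
        refine ⟨mul_mem hg hh, hg'.trans ?_⟩
        have := reach_mul (T' := sat X1 T) g (hmul g hg) hh'
        rwa [mul_one] at this
      inv_mem' := by
        rintro g ⟨hg, hg'⟩
        refine ⟨inv_mem hg, ?_⟩
        have := reach_mul (T' := sat X1 T) g⁻¹ (hmul _ (inv_mem hg)) (reach_symm hg')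
        rwa [mul_one, inv_mul_cancel] at this }
  have hR : X1 ≤ R := by
    rw [hX1, sup_le_iff, Subgroup.zpowers_le]
    constructor
    · intro x hx
      refine ⟨Subgroup.mem_sup_left hx, reach_mono hsub (hT.conn x ?_)⟩
      have := hT.smul x hx 1 hT.one
      rwa [mul_one] at this
    · refine ⟨hbX, ?_⟩
      have h1 : Relation.ReflTransGen (step (sat X1 T)) 1 v := reach_mono hsub (hT.conn v hv)
      have h2 : Relation.ReflTransGen (step (sat X1 T)) (b * v') b := by
        have := reach_mul (T' := sat X1 T) b (hmul' b hbX) (reach_symm (hT.conn v' hv'))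
        rwa [mul_one] at this
      rcases hb with hb | ⟨l, hb⟩
      · rw [hb] at h2; exact h1.trans h2
      · exact (h1.tail ⟨hsub hv, hmul' b hbX v' hv', l, hb⟩).trans h2
  refine ⟨hsub hT.one, hmul, ?_⟩
  rintro _ ⟨x, hx, y, hy, rfl⟩
  refine (hR hx).2.trans ?_
  have := reach_mul (T' := sat X1 T) x (hmul' x hx) (hT.conn y hy)
  rwa [mul_one] at this

/-- Adding a whisker. -/
def whisk (X : Subgroup (FreeGroup I)) (T : Set (FreeGroup I)) (w : FreeGroup I) :
    Set (FreeGroup I) := T ∪ {g | ∃ x ∈ X, g = x * w}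

theorem Good.whisk (hT : Good X T) {v : FreeGroup I} (hv : v ∈ T) (l : I × Bool) :
    Good X (whisk X T (v * lt l)) := by
  refine ⟨Or.inl hT.one, ?_, ?_⟩
  · rintro x hx y (hy | ⟨x', hx', rfl⟩)
    · exact Or.inl (hT.smul x hx y hy)
    · exact Or.inr ⟨x * x', mul_mem hx hx', by group⟩
  · rintro y (hy | ⟨x, hx, rfl⟩)
    · exact reach_mono Set.subset_union_left (hT.conn y hy)
    · refine .tail (reach_mono Set.subset_union_left (hT.conn (x * v) (hT.smul x hx v hv)))
        ⟨Or.inl (hT.smul x hx v hv), Or.inr ⟨x, hx, rfl⟩, l, by group⟩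

/-- The trichotomy of Lemma G. -/
def Out (X : Subgroup (FreeGroup I)) (T : Set (FreeGroup I)) (Z : Subgroup (FreeGroup I))
    (m : ℕ) : Prop :=
  (∃ B : List (FreeGroup I), B.length < m ∧ gen X B = Z) ∨
  (∃ (c : FreeGroup I) (B : List (FreeGroup I)), B.length + 1 = m ∧ gen X (c :: B) = Z ∧ c ∉ X ∧
    ∃ u ∈ T, c * u ∈ T) ∨
  (∀ r, HasRank X r → HasRank Z (r + m))

theorem Out.meet {b : FreeGroup I} {B : List (FreeGroup I)} (h : ∃ u ∈ T, b * u ∈ T) :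
    Out X T (gen X (b :: B)) (B.length + 1) := by
  by_cases hb : b ∈ X
  · left
    exact ⟨B, by simp, (gen_cons_mem B hb).symm⟩
  · right; left
    exact ⟨b, B, rfl, rfl, hb, h⟩

theorem Out.short {n : ℕ}
    (IH : ∀ (X : Subgroup (FreeGroup I)) (T : Set (FreeGroup I)), Good X T →
      ∀ B : List (FreeGroup I), B.length = n → Out X T (gen X B) n)
    (hT : Good X T) {b v v' : FreeGroup I} (hv : v ∈ T) (hv' : v' ∈ T) {l : I × Bool}
    (hb : b * v' = v * lt l) (B : List (FreeGroup I)) (hB : B.length = n) :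
    Out X T (gen X (b :: B)) (n + 1) := by
  by_cases hd : ∃ u ∈ T, b * u ∈ T
  · subst hB; exact Out.meet hd
  push Not at hd
  have hPP := hT.pingpong hv hv' hb hd
  have hG := hT.extend hv hv' (Or.inr ⟨l, hb⟩)
  rcases IH _ _ hG B hB with ⟨B1, h1, h2⟩ | ⟨c, B1, h1, h2, h3, h4⟩ | h
  · left
    refine ⟨b :: B1, by simpa using h1, ?_⟩
    rw [gen_cons, gen_cons, h2]
  · right; left
    obtain ⟨_, ⟨g', hg', y', hy', rfl⟩, ⟨g, hg, y, hy, h5⟩⟩ := h4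
    refine ⟨g⁻¹ * c * g', b :: B1, by simpa using h1, ?_, ?_, y', hy', ?_⟩
    · rw [gen_swap, gen_cons, gen_cons X b B, ← h2]
      apply gen_cons_congr
      · exact mul_mem (mul_mem (mem_gen_left (inv_mem hg)) (mem_gen _ (by simp)))
          (mem_gen_left hg')
      · have h6 := mul_mem (mul_mem (mem_gen_left hg) (mem_gen (X ⊔ Subgroup.zpowers b)
          (List.mem_cons_self (a := g⁻¹ * c * g') (l := B1)))) (mem_gen_left (inv_mem hg'))
        rwa [show g * (g⁻¹ * c * g') * g'⁻¹ = c by group] at h6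
    · intro h
      apply h3
      have : c = g * (g⁻¹ * c * g') * g'⁻¹ := by group
      rw [this]
      exact mul_mem (mul_mem hg (Subgroup.mem_sup_left h)) (inv_mem hg')
    · have : g⁻¹ * c * g' * y' = g⁻¹ * (c * (g' * y')) := by group
      rw [this, h5]
      simpa using hy
  · right; right
    intro r hr
    have := h (r + 1) (hr.add hPP)
    rw [gen_cons]
    convert this using 1
    ring

theorem lemmaG (n : ℕ) : ∀ (X : Subgroup (FreeGroup I)) (T : Set (FreeGroup I)), Good X T →
      ∀ B : List (FreeGroup I), B.length = n → Out X T (gen X B) n := by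
  induction n with
  | zero =>
    intro X T hT B hB
    right; right
    intro r hr
    have : B = [] := List.length_eq_zero_iff.1 hB
    subst this
    rwa [gen_nil]
  | succ n IH =>
    intro X T hT B hB
    rcases B with _ | ⟨b, B⟩
    · simp at hB
    have hB : B.length = n := by simpa using hB
    have key : ∀ (L : List (I × Bool)) (T : Set (FreeGroup I)) (v : FreeGroup I),
        Good X T → v ∈ T → b * 1 = v * FreeGroup.mk L → Out X T (gen X (b :: B)) (n + 1) := by
      intro L
      induction L with
      | nil =>
        intro T v hT hv hb
        subst hB
        refine Out.meet ⟨1, hT.one, ?_⟩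
        rw [hb]
        simpa [← FreeGroup.one_eq_mk] using hv
      | cons l L ih =>
        intro T v hT hv hb
        have hsplit : FreeGroup.mk (l :: L) = lt l * FreeGroup.mk L := by
          rw [lt, FreeGroup.mul_mk]; rfl
        rw [hsplit, ← mul_assoc] at hb
        rcases ih _ (v * lt l) (hT.whisk hv l) (Or.inr ⟨1, one_mem _, by simp⟩) hb with
          h | ⟨c, B1, h1, h2, h3, u, hu, hcu⟩ | h
        · exact Or.inl h
        · have h1 : B1.length = n := by omega
          rw [← h2]
          rcases hu with hu | ⟨x, hx, rfl⟩ <;> rcases hcu with hcu | ⟨x', hx', hcu⟩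
          · right; left
            exact ⟨c, B1, by omega, rfl, h3, u, hu, hcu⟩
          · have e : gen X ((x'⁻¹ * c) :: B1) = gen X (c :: B1) := by
              apply gen_cons_congr
              · exact mul_mem (mem_gen_left (inv_mem hx')) (mem_gen _ (by simp))
              · have h6 := mul_mem (mem_gen_left hx') (mem_gen X
                  (List.mem_cons_self (a := x'⁻¹ * c) (l := B1)))
                rwa [show x' * (x'⁻¹ * c) = c by group] at h6
            rw [← e]
            refine Out.short IH hT hv hu (l := l) ?_ B1 h1
            rw [mul_assoc, hcu]; group
          · have e : gen X ((c * x)⁻¹ :: B1) = gen X (c :: B1) := by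
              apply gen_cons_congr
              · exact inv_mem (mul_mem (mem_gen _ (by simp)) (mem_gen_left hx))
              · have h6 := mul_mem (inv_mem (mem_gen X
                  (List.mem_cons_self (a := (c * x)⁻¹) (l := B1)))) (mem_gen_left (inv_mem hx))
                rwa [show ((c * x)⁻¹)⁻¹ * x⁻¹ = c by group] at h6
            rw [← e]
            refine Out.short IH hT hv hcu (l := l) ?_ B1 h1
            group
          · exfalso
            apply h3
            have : c * x = x' := by
              have : c * x * (v * lt l) = x' * (v * lt l) := by rw [← hcu]; group
              exact mul_right_cancel this
            have : c = x' * x⁻¹ := by rw [← this]; group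
            rw [this]
            exact mul_mem hx' (inv_mem hx)
        · exact Or.inr (Or.inr h)
    obtain ⟨L, hL⟩ := Quot.exists_rep b
    exact key L T 1 hT hT.one (by rw [mul_one, one_mul]; exact hL.symm)

end extend
end FH


namespace FH

section cov
variable {I : Type} {X : Subgroup (FreeGroup I)} {T : Set (FreeGroup I)}

theorem good_bot : Good (⊥ : Subgroup (FreeGroup I)) {1} := by
  refine ⟨rfl, ?_, ?_⟩
  · rintro x hx y hy
    rw [Subgroup.mem_bot] at hx
    simpa [hx] using hy
  · rintro y rfl; exact .refl

/-- `X` is finitely generated. -/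
def FGL {G : Type} [Group G] (X : Subgroup G) : Prop := ∃ B, gen ⊥ B = X

theorem FGL.sup {G : Type} [Group G] {X : Subgroup G} (h : FGL X) (c : G) :
    FGL (X ⊔ Subgroup.zpowers c) := by
  obtain ⟨B, rfl⟩ := h
  refine ⟨c :: B, ?_⟩
  apply le_antisymm
  · rw [gen_le]
    refine ⟨bot_le, fun b hb => ?_⟩
    rcases List.mem_cons.1 hb with rfl | hb
    · exact Subgroup.mem_sup_right (Subgroup.mem_zpowers _)
    · exact Subgroup.mem_sup_left (mem_gen _ hb)
  · rw [sup_le_iff, gen_le, Subgroup.zpowers_le]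
    exact ⟨⟨bot_le, fun b hb => mem_gen _ (by simp [hb])⟩, mem_gen _ (by simp)⟩

theorem FGL.gen {G : Type} [Group G] {X : Subgroup G} (h : FGL X) (B : List G) :
    FGL (gen X B) := by
  induction B generalizing X with
  | nil => rwa [gen_nil]
  | cons b B ih => rw [gen_cons]; exact ih (h.sup b)

theorem FGL.rank (h : FGL X) : ∃ n, HasRank X n := by
  obtain ⟨B, rfl⟩ := h
  generalize hn : B.length = n
  induction n using Nat.strong_induction_on generalizing B with
  | _ n ih =>
    rcases lemmaG n ⊥ {1} good_bot B hn with ⟨B1, h1, h2⟩ | ⟨c, B1, _, _, h3, u, hu, hcu⟩ | h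
    · rw [← h2]
      exact ih _ h1 B1 rfl
    · rw [Set.mem_singleton_iff] at hu hcu
      rw [hu, mul_one] at hcu
      exact absurd (hcu ▸ one_mem _) h3
    · exact ⟨_, h 0 HasRank.bot⟩

/-- `T` is covered by at most `k` orbits of `X`. -/
def Cov (X : Subgroup (FreeGroup I)) (T : Set (FreeGroup I)) (k : ℕ) : Prop :=
  ∃ S : Finset (FreeGroup I), S.card ≤ k ∧ ∀ y ∈ T, ∃ x ∈ X, ∃ s ∈ S, y = x * s

theorem cov_whisk {k : ℕ} (h : Cov X T k) (w : FreeGroup I) : Cov X (whisk X T w) (k + 1) := by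
  classical
  obtain ⟨S, hS, h⟩ := h
  refine ⟨insert w S, (Finset.card_insert_le _ _).trans (by omega), ?_⟩
  rintro y (hy | ⟨x, hx, rfl⟩)
  · obtain ⟨x, hx, s, hs, rfl⟩ := h y hy
    exact ⟨x, hx, s, by simp [hs], rfl⟩
  · exact ⟨x, hx, w, by simp, rfl⟩

theorem Cov.sat {k : ℕ} (h : Cov X T k) {X' : Subgroup (FreeGroup I)} (hX : X ≤ X') :
    Cov X' (sat X' T) k := by
  obtain ⟨S, hS, h⟩ := h
  refine ⟨S, hS, ?_⟩
  rintro _ ⟨x, hx, y, hy, rfl⟩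
  obtain ⟨x', hx', s, hs, rfl⟩ := h y hy
  exact ⟨x * x', mul_mem hx (hX hx'), s, hs, by group⟩

theorem Cov.drop {k : ℕ} (h : Cov X T (k + 1)) {c u : FreeGroup I} (hc : c ∉ X) (hu : u ∈ T)
    (hcu : c * u ∈ T) :
    Cov (X ⊔ Subgroup.zpowers c) (FH.sat (X ⊔ Subgroup.zpowers c) T) k := by
  classical
  obtain ⟨S, hS, h⟩ := h
  obtain ⟨x, hx, s, hs, hu⟩ := h _ hu
  obtain ⟨x', hx', s', hs', hcu⟩ := h _ hcu
  have hXX : X ≤ X ⊔ Subgroup.zpowers c := le_sup_left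
  have hcX : c ∈ X ⊔ Subgroup.zpowers c := Subgroup.mem_sup_right (Subgroup.mem_zpowers _)
  have hne : s ≠ s' := by
    rintro rfl
    apply hc
    rw [hu, ← mul_assoc] at hcu
    have := mul_right_cancel hcu
    have : c = x' * x⁻¹ := by rw [← this]; group
    rw [this]; exact mul_mem hx' (inv_mem hx)
  have hss : s' = x'⁻¹ * c * x * s := by
    have : s' = x'⁻¹ * (x' * s') := by group
    rw [this, ← hcu, hu]; group
  refine ⟨S.erase s', ?_, ?_⟩
  · rw [Finset.card_erase_of_mem hs']; omega
  · rintro _ ⟨g, hg, y, hy, rfl⟩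
    obtain ⟨z, hz, r, hr, rfl⟩ := h y hy
    by_cases hrs : r = s'
    · refine ⟨g * z * (x'⁻¹ * c * x), mul_mem (mul_mem hg (hXX hz))
        (mul_mem (mul_mem (inv_mem (hXX hx')) hcX) (hXX hx)), s, by simp [hs, hne], ?_⟩
      rw [hrs, hss]; group
    · exact ⟨g * z, mul_mem hg (hXX hz), r, by simp [hr, hrs], by group⟩

theorem Cov.pos {k : ℕ} (h : Cov X T k) (hT : Good X T) : k ≠ 0 := by
  rintro rfl
  obtain ⟨S, hS, h⟩ := h
  obtain ⟨_, _, s, hs, _⟩ := h 1 hT.one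
  simp at hS
  simp [hS] at hs

theorem exists_whisks (L : List (I × Bool)) : ∀ (T : Set (FreeGroup I)) (k : ℕ) (v : FreeGroup I),
    Good X T → Cov X T k → v ∈ T → ∃ T' k', Good X T' ∧ Cov X T' k' ∧ v * FreeGroup.mk L ∈ T' := by
  induction L with
  | nil =>
    intro T k v hT hk hv
    refine ⟨T, k, hT, hk, ?_⟩
    simpa [← FreeGroup.one_eq_mk] using hv
  | cons l L ih =>
    intro T k v hT hk hv
    have hsplit : FreeGroup.mk (l :: L) = lt l * FreeGroup.mk L := by
      rw [lt, FreeGroup.mul_mk]; rfl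
    obtain ⟨T', k', h1, h2, h3⟩ := ih _ _ (v * lt l) (hT.whisk hv l) (cov_whisk hk _)
      (Or.inr ⟨1, one_mem _, by simp⟩)
    refine ⟨T', k', h1, h2, ?_⟩
    rwa [hsplit, ← mul_assoc]

theorem exists_good_gen (B : List (FreeGroup I)) : ∀ (X : Subgroup (FreeGroup I))
    (T : Set (FreeGroup I)) (k : ℕ), Good X T → Cov X T k →
    ∃ T' k', Good (gen X B) T' ∧ Cov (gen X B) T' k' := by
  induction B with
  | nil => intro X T k h1 h2; rw [gen_nil]; exact ⟨T, k, h1, h2⟩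
  | cons b B ih =>
    intro X T k h1 h2
    rw [gen_cons]
    obtain ⟨L, hL⟩ := Quot.exists_rep b
    obtain ⟨T', k', h3, h4, h5⟩ := exists_whisks L T k 1 h1 h2 h1.one
    rw [one_mul] at h5
    change Quot.mk _ L ∈ _ at h5
    rw [hL] at h5
    exact ih _ _ k' (h3.extend h5 h3.one (Or.inl (mul_one b))) (h4.sat le_sup_left)

theorem FGL.exists_good (h : FGL X) : ∃ T k, Good X T ∧ Cov X T k := by
  obtain ⟨B, rfl⟩ := h
  exact exists_good_gen B ⊥ {1} 1 good_bot ⟨{1}, by simp, by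
    rintro y rfl; exact ⟨1, one_mem _, 1, by simp, by simp⟩⟩

end cov

/-! ### The main claim -/

section main
variable {I : Type}

/-- A relative generating system: `Ψ X ≤ ⟨X, B⟩`, satisfying an invariant property `P` -/
structure Sys (Ψ : FreeGroup I →* FreeGroup I) (P : Subgroup (FreeGroup I) → Prop)
    (X : Subgroup (FreeGroup I)) (B : List (FreeGroup I)) : Prop where
  fg : FGL X
  map : X.map Ψ ≤ gen X B
  prop : P (gen X B)

/-- family of a basis together with a list -/
def fam {r : ℕ} (x : Fin r → FreeGroup I) (B : List (FreeGroup I)) :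
    Fin r ⊕ Fin B.length → FreeGroup I := Sum.elim x B.get

theorem range_fam {r : ℕ} (x : Fin r → FreeGroup I) (B : List (FreeGroup I)) :
    (FreeGroup.lift (fam x B)).range = gen (FreeGroup.lift x).range B := by
  rw [FreeGroup.range_lift_eq_closure, FreeGroup.range_lift_eq_closure, gen,
    ← Subgroup.closure_union]
  congr 1
  rw [fam, Set.Sum.elim_range]
  congr 1
  ext b
  exact List.mem_iff_get.symm

theorem main_claim (Ψ : FreeGroup I →* FreeGroup I) (hΨ : Function.Injective Ψ)
    (P : Subgroup (FreeGroup I) → Prop)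
    (hP : ∀ Z (c : FreeGroup I), c ∈ Z → P Z → P (Z ⊔ Subgroup.zpowers (Ψ c)))
    (m : ℕ) (hmin : ∀ X B, Sys Ψ P X B → m ≤ B.length) (k : ℕ) :
    ∀ X B T, Sys Ψ P X B → B.length = m → Good X T → Cov X T k →
      ∀ r, HasRank X r → HasRank (gen X B) (r + m) := by
  induction k with
  | zero => intro X B T _ _ h1 h2; exact absurd rfl (h2.pos h1)
  | succ k ih =>
    intro X B T hS hB hT hk r hr
    rcases lemmaG m X T hT B hB with ⟨B1, h1, h2⟩ | ⟨c, B1, h1, h2, h3, u, hu, hcu⟩ | h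
    · exfalso
      have := hmin X B1 ⟨hS.fg, h2 ▸ hS.map, h2 ▸ hS.prop⟩
      omega
    · set X' := X ⊔ Subgroup.zpowers c with hX'
      have hZ : gen X' B1 = gen X B := by rw [← h2, gen_cons]
      have hZ' : gen X' (Ψ c :: B1) = gen X B ⊔ Subgroup.zpowers (Ψ c) := by
        apply le_antisymm
        · rw [gen_le]
          refine ⟨(le_gen X' B1).trans (hZ ▸ le_sup_left), fun b hb => ?_⟩
          rcases List.mem_cons.1 hb with rfl | hb
          · exact Subgroup.mem_sup_right (Subgroup.mem_zpowers _)
          · exact Subgroup.mem_sup_left (hZ ▸ mem_gen _ hb)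
        · rw [sup_le_iff, ← hZ, gen_le, Subgroup.zpowers_le]
          exact ⟨⟨le_gen _ _, fun b hb => mem_gen _ (by simp [hb])⟩, mem_gen _ (by simp)⟩
      have hcZ : c ∈ gen X B := by rw [← h2]; exact mem_gen _ (by simp)
      have hS' : Sys Ψ P X' (Ψ c :: B1) := by
        refine ⟨hS.fg.sup c, ?_, ?_⟩
        · rw [hZ', hX', Subgroup.map_sup, MonoidHom.map_zpowers]
          exact sup_le_sup_right hS.map _
        · rw [hZ']; exact hP _ _ hcZ hS.prop
      have hrec := ih X' (Ψ c :: B1) _ hS' (by simpa using h1)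
        (hT.extend (b := c) hcu hu (Or.inl rfl)) (hk.drop h3 hu hcu)
      have hfree : ∀ r', HasRank X' r' → ∃ w : Option (Fin r' ⊕ Fin B1.length) → FreeGroup I,
          Function.Injective (FreeGroup.lift w) ∧ w none = Ψ c ∧
          (FreeGroup.lift (fun a => w (some a))).range = gen X B := by
        intro r' hr'
        have hr2 := hr'
        obtain ⟨x, hx, hxX⟩ := hr2
        refine ⟨fun o => o.elim (Ψ c) (fam x B1), ?_, rfl, ?_⟩
        · refine HasRank.free (hrec r' hr') ?_ _ ?_
          · simp; omega
          · rw [hZ', ← hZ, ← hxX, ← range_fam, FreeGroup.range_lift_eq_closure,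
              FreeGroup.range_lift_eq_closure, Subgroup.zpowers_eq_closure, ← Subgroup.closure_union]
            congr 1
            ext g
            constructor
            · rintro ⟨_ | i, rfl⟩
              · right; simp
              · left; exact ⟨i, rfl⟩
            · rintro (⟨i, rfl⟩ | h)
              · exact ⟨some i, rfl⟩
              · exact ⟨none, h.symm⟩
        · rw [← hZ, ← hxX, ← range_fam]; rfl
      obtain ⟨r', hr'⟩ := (hS.fg.sup c).rank
      obtain ⟨w, hw, hwn, hws⟩ := hfree r' hr'
      have hPP := PP_of_free w hw
      rw [hwn, hws] at hPP
      have hPPc : PP X c := hPP.comap Ψ hΨ hS.map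
      obtain ⟨w, hw, hwn, hws⟩ := hfree (r + 1) (hr.add hPPc)
      refine HasRank.of_fam (κ := Fin (r + 1) ⊕ Fin B1.length) (by simp; omega)
        (fun a => w (some a)) ?_ hws
      have : FreeGroup.lift (fun a => w (some a)) =
          (FreeGroup.lift w).comp (FreeGroup.map some) := by ext a; simp
      rw [this]
      exact hw.comp (FreeGroup.map_injective (Option.some_injective _))
    · exact h r hr

end main
end FH


namespace FH

theorem conj_pow_mem {G : Type} [Group G] {t : G} {A : Subgroup G} (hA : ∀ y ∈ A, t * y * t⁻¹ ∈ A)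
    (n : ℕ) {y : G} (hy : y ∈ A) : t ^ n * y * (t ^ n)⁻¹ ∈ A := by
  induction n with
  | zero => simpa using hy
  | succ n ih =>
    have := hA _ ih
    convert this using 1
    rw [pow_succ']; group

theorem normal_form {G : Type} [Group G] {t : G} {A : Subgroup G}
    (hA : ∀ y ∈ A, t * y * t⁻¹ ∈ A) {g : G} (hg : g ∈ Subgroup.zpowers t ⊔ A) :
    ∃ p q : ℕ, ∃ y ∈ A, g = (t ^ p)⁻¹ * y * t ^ q := by
  let R : Subgroup G :=
    { carrier := {g | ∃ p q : ℕ, ∃ y ∈ A, g = (t ^ p)⁻¹ * y * t ^ q}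
      one_mem' := ⟨0, 0, 1, one_mem _, by simp⟩
      inv_mem' := by
        rintro _ ⟨p, q, y, hy, rfl⟩
        exact ⟨q, p, y⁻¹, inv_mem hy, by group⟩
      mul_mem' := by
        rintro _ _ ⟨p, q, y, hy, rfl⟩ ⟨p', q', y', hy', rfl⟩
        rcases le_total p' q with h | h
        · obtain ⟨d, rfl⟩ := Nat.exists_eq_add_of_le h
          refine ⟨p, d + q', y * (t ^ d * y' * (t ^ d)⁻¹), mul_mem hy (conj_pow_mem hA d hy'), ?_⟩
          have e1 : t ^ (p' + d) = t ^ d * t ^ p' := by rw [← pow_add, add_comm]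
          rw [e1, pow_add]; group
        · obtain ⟨d, rfl⟩ := Nat.exists_eq_add_of_le h
          refine ⟨p + d, q', (t ^ d * y * (t ^ d)⁻¹) * y', mul_mem (conj_pow_mem hA d hy) hy', ?_⟩
          have e1 : t ^ (p + d) = t ^ d * t ^ p := by rw [← pow_add, add_comm]
          have e2 : t ^ (q + d) = t ^ d * t ^ q := by rw [← pow_add, add_comm]
          rw [e1, e2]; group }
  have : Subgroup.zpowers t ⊔ A ≤ R := by
    rw [sup_le_iff, Subgroup.zpowers_le]
    exact ⟨⟨0, 1, 1, one_mem _, by simp⟩, fun y hy => ⟨0, 0, y, hy, by simp⟩⟩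
  exact this hg

section
variable {I : Type}

/-- The family `xᵢ, Ψᵏ bⱼ`. -/
def bigfam (Ψ : FreeGroup I →* FreeGroup I) {r m : ℕ} (x : Fin r → FreeGroup I)
    (b : Fin m → FreeGroup I) : Fin r ⊕ ℕ × Fin m → FreeGroup I :=
  Sum.elim x (fun p => Ψ^[p.1] (b p.2))

theorem range_emb {r m : ℕ} (w : FreeGroup (Fin r ⊕ ℕ × Fin m)) :
    ∃ k : ℕ, ∃ w' : FreeGroup (Fin r ⊕ Fin k × Fin m),
      FreeGroup.map (Sum.map id (Prod.map Fin.val id)) w' = w := by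
  have mono : ∀ k k' : ℕ, k ≤ k' → ∀ w' : FreeGroup (Fin r ⊕ Fin k × Fin m),
      ∃ w'' : FreeGroup (Fin r ⊕ Fin k' × Fin m),
      FreeGroup.map (Sum.map id (Prod.map Fin.val id) : _ → Fin r ⊕ ℕ × Fin m) w'' =
      FreeGroup.map (Sum.map id (Prod.map Fin.val id)) w' := by
    intro k k' h w'
    refine ⟨FreeGroup.map (Sum.map id (Prod.map (Fin.castLE h) id)) w', ?_⟩
    rw [FreeGroup.map.comp]
    congr 2
    ext a
    rcases a with a | ⟨a, b⟩ <;> simp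
  induction w using FreeGroup.induction_on with
  | C1 => exact ⟨0, 1, map_one _⟩
  | of a =>
    rcases a with a | ⟨k, j⟩
    · exact ⟨0, FreeGroup.of (Sum.inl a), by simp⟩
    · exact ⟨k + 1, FreeGroup.of (Sum.inr (⟨k, by omega⟩, j)), by simp⟩
  | inv_of a h =>
    obtain ⟨k, w', h⟩ := h
    exact ⟨k, w'⁻¹, by rw [map_inv, h]⟩
  | mul u v hu hv =>
    obtain ⟨k, u', hu⟩ := hu
    obtain ⟨k', v', hv⟩ := hv
    obtain ⟨u'', hu''⟩ := mono k (max k k') (le_max_left _ _) u'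
    obtain ⟨v'', hv''⟩ := mono k' (max k k') (le_max_right _ _) v'
    exact ⟨max k k', u'' * v'', by rw [map_mul, hu'', hv'', hu, hv]⟩

/-- The iterated systems. -/
def Xk (Ψ : FreeGroup I →* FreeGroup I) (X : Subgroup (FreeGroup I)) (B : List (FreeGroup I)) :
    ℕ → Subgroup (FreeGroup I)
  | 0 => X
  | k + 1 => gen (Xk Ψ X B k) (B.map (Ψ^[k]))

theorem exists_free_system (Ψ : FreeGroup I →* FreeGroup I) (hΨ : Function.Injective Ψ)
    (P : Subgroup (FreeGroup I) → Prop)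
    (hP : ∀ Z (c : FreeGroup I), c ∈ Z → P Z → P (Z ⊔ Subgroup.zpowers (Ψ c)))
    (hex : ∃ X B, Sys Ψ P X B) :
    ∃ (r m : ℕ) (x : Fin r → FreeGroup I) (b : Fin m → FreeGroup I),
      Function.Injective (FreeGroup.lift (bigfam Ψ x b)) ∧
      (∀ i, Ψ (x i) ∈ (FreeGroup.lift (Sum.elim x b)).range) ∧
      P (FreeGroup.lift (Sum.elim x b)).range := by
  classical
  have hex' : ∃ m, ∃ X B, Sys Ψ P X B ∧ B.length = m := by
    obtain ⟨X, B, h⟩ := hex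
    exact ⟨_, X, B, h, rfl⟩
  set m := Nat.find hex' with hm
  have hmin : ∀ X B, Sys Ψ P X B → m ≤ B.length := fun X B h => Nat.find_min' hex' ⟨X, B, h, rfl⟩
  obtain ⟨X, B, hS, hB⟩ := Nat.find_spec hex'
  rw [← hm] at hB
  have claim : ∀ X B, Sys Ψ P X B → B.length = m → ∀ r, HasRank X r →
      HasRank (gen X B) (r + m) := by
    intro X B hS hB
    obtain ⟨T, k, hT, hk⟩ := hS.fg.exists_good
    exact main_claim Ψ hΨ P hP m hmin k X B T hS hB hT hk
  have hPl : ∀ (C : List (FreeGroup I)) Z, (∀ c ∈ C, c ∈ Z) → P Z → P (gen Z (C.map Ψ)) := by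
    intro C
    induction C with
    | nil => intro Z _ h; rwa [List.map_nil, gen_nil]
    | cons c C ih =>
      intro Z hC h
      rw [List.map_cons, gen_cons]
      exact ih _ (fun d hd => Subgroup.mem_sup_left (hC d (by simp [hd])))
        (hP Z c (hC c (by simp)) h)
  have hsys : ∀ k, Sys Ψ P (Xk Ψ X B k) (B.map (Ψ^[k])) := by
    intro k
    induction k with
    | zero => simpa [Xk] using hS
    | succ k ih =>
      have e : B.map (Ψ^[k + 1]) = (B.map (Ψ^[k])).map Ψ := by
        rw [List.map_map, Function.iterate_succ']
      refine ⟨ih.fg.gen _, ?_, ?_⟩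
      · rw [Subgroup.map_le_iff_le_comap]
        change gen (Xk Ψ X B k) (B.map (Ψ^[k])) ≤ _
        rw [gen_le]
        constructor
        · rw [← Subgroup.map_le_iff_le_comap]
          exact ih.map.trans (le_gen _ _)
        · intro b hb
          rw [Subgroup.mem_comap]
          apply mem_gen
          rw [e]
          exact List.mem_map_of_mem hb
      · rw [e]
        exact hPl _ _ (fun c hc => mem_gen _ hc) ih.prop
  obtain ⟨r, hr⟩ := hS.fg.rank
  have hrank : ∀ k, HasRank (Xk Ψ X B k) (r + k * m) := by
    intro k
    induction k with
    | zero => simpa [Xk] using hr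
    | succ k ih =>
      have := claim _ _ (hsys k) (by simpa using hB) _ ih
      have e : r + (k + 1) * m = r + k * m + m := by rw [Nat.add_mul, one_mul, add_assoc]
      rw [e]
      exact this
  obtain ⟨x, hx, hxX⟩ := hr
  let b : Fin m → FreeGroup I := fun j => B.get (j.cast hB.symm)
  have hb : ∀ k, Set.range (fun j => Ψ^[k] (b j)) = {c | c ∈ B.map (Ψ^[k])} := by
    intro k
    ext c
    simp only [Set.mem_range, Set.mem_ofPred_eq, List.mem_map, b]
    constructor
    · rintro ⟨j, rfl⟩
      exact ⟨_, List.get_mem _ _, rfl⟩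
    · rintro ⟨c, hc, rfl⟩
      obtain ⟨j, rfl⟩ := List.mem_iff_get.1 hc
      exact ⟨j.cast hB, rfl⟩
  let fk : ∀ k : ℕ, Fin r ⊕ Fin k × Fin m → FreeGroup I :=
    fun k => bigfam Ψ x b ∘ Sum.map id (Prod.map Fin.val id)
  have hfk : ∀ k, (FreeGroup.lift (fk k)).range = Xk Ψ X B k := by
    intro k
    rw [FreeGroup.range_lift_eq_closure]
    have hr' : ∀ k, Set.range (fk k) =
        Set.range x ∪ {g | ∃ i < k, g ∈ Set.range (fun j => Ψ^[i] (b j))} := by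
      intro k
      ext g
      constructor
      · rintro ⟨i | ⟨i, j⟩, rfl⟩
        · left; exact ⟨i, rfl⟩
        · right; exact ⟨i, i.2, j, rfl⟩
      · rintro (⟨i, rfl⟩ | ⟨i, hi, j, rfl⟩)
        · exact ⟨Sum.inl i, rfl⟩
        · exact ⟨Sum.inr (⟨i, hi⟩, j), rfl⟩
    induction k with
    | zero =>
      rw [hr']
      simp [Xk, ← hxX, FreeGroup.range_lift_eq_closure]
    | succ k ih =>
      rw [Xk, gen, ← ih, ← Subgroup.closure_union, hr', hr', ← hb, Set.union_assoc]
      congr 2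
      ext g
      constructor
      · rintro ⟨i, hi, hg⟩
        rcases Nat.lt_succ_iff_lt_or_eq.1 hi with h | rfl
        · exact Or.inl ⟨i, h, hg⟩
        · exact Or.inr hg
      · rintro (⟨i, hi, hg⟩ | hg)
        · exact ⟨i, by omega, hg⟩
        · exact ⟨k, by omega, hg⟩
  have hfree : ∀ k, Function.Injective (FreeGroup.lift (fk k)) := by
    intro k
    exact HasRank.free (hrank k) (by simp) _ (hfk k)
  have hsum : (FreeGroup.lift (Sum.elim x b)).range = gen X B := by
    rw [FreeGroup.range_lift_eq_closure, Set.Sum.elim_range, Subgroup.closure_union,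
      ← FreeGroup.range_lift_eq_closure, hxX, gen]
    have := hb 0
    simp only [Function.iterate_zero, id_eq, List.map_id] at this
    rw [this]
  refine ⟨r, m, x, b, ?_, ?_, ?_⟩
  · rw [injective_iff_map_eq_one]
    intro w hw
    obtain ⟨k, w', rfl⟩ := range_emb w
    have e : (FreeGroup.lift (bigfam Ψ x b)).comp
        (FreeGroup.map (Sum.map id (Prod.map Fin.val id))) = FreeGroup.lift (fk k) := by
      ext a; simp [fk]
    have : FreeGroup.lift (fk k) w' = 1 := by rw [← e]; exact hw
    rw [(map_eq_one_iff _ (hfree k)).1 this, map_one]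
  · intro i
    rw [hsum]
    apply hS.map
    apply Subgroup.mem_map_of_mem
    rw [← hxX]
    exact ⟨FreeGroup.of i, by simp⟩
  · rw [hsum]; exact hS.prop

theorem fp_of_free_system {G : Type} [Group G] (ι : FreeGroup I →* G) (hι : Function.Injective ι)
    (s : G) (Ψ : FreeGroup I →* FreeGroup I)
    (hs : ∀ f, s * ι f * s⁻¹ = ι (Ψ f)) (χ : G →* Multiplicative ℤ) (hχ : ∀ f, χ (ι f) = 1)
    (hχs : χ s ≠ 1) (r m : ℕ) (x : Fin r → FreeGroup I) (b : Fin m → FreeGroup I)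
    (hfree : Function.Injective (FreeGroup.lift (bigfam Ψ x b)))
    (hx : ∀ i, Ψ (x i) ∈ (FreeGroup.lift (Sum.elim x b)).range) :
    Group.IsFinitelyPresented
      (Subgroup.zpowers s ⊔ ((FreeGroup.lift (Sum.elim x b)).range).map ι : Subgroup G) := by
  choose w hw using hx
  let rel : Fin r → FreeGroup (Option (Fin r ⊕ Fin m)) := fun i =>
    FreeGroup.of none * FreeGroup.of (some (Sum.inl i)) * (FreeGroup.of none)⁻¹ *
      (FreeGroup.map some (w i))⁻¹
  let PG := PresentedGroup (Set.range rel)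
  have hfp : Group.IsFinitelyPresented PG := inferInstance
  let gens : Option (Fin r ⊕ Fin m) → G := fun o => o.elim s (fun a => ι (Sum.elim x b a))
  have hgens : ∀ v, FreeGroup.lift gens (FreeGroup.map some v) =
      ι (FreeGroup.lift (Sum.elim x b) v) := by
    intro v
    have : (FreeGroup.lift gens).comp (FreeGroup.map some) =
      ι.comp (FreeGroup.lift (Sum.elim x b)) := by ext a; simp [gens]
    exact DFunLike.congr_fun this v
  let π : PG →* G := PresentedGroup.toGroup (f := gens) (by
    rintro _ ⟨i, rfl⟩
    simp only [rel, map_mul, map_inv, hgens, hw, FreeGroup.lift_apply_of]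
    simp [gens, hs])
  have hπof : ∀ o, π (PresentedGroup.of o) = gens o := fun o => PresentedGroup.toGroup.of _
  let t : PG := PresentedGroup.of none
  let a : Fin r ⊕ ℕ × Fin m → PG := Sum.elim (fun i => PresentedGroup.of (some (Sum.inl i)))
    (fun p => t ^ p.1 * PresentedGroup.of (some (Sum.inr p.2)) * (t ^ p.1)⁻¹)
  let A : Subgroup PG := (FreeGroup.lift a).range
  have hs' : ∀ (k : ℕ) f, s ^ k * ι f * (s ^ k)⁻¹ = ι (Ψ^[k] f) := by
    intro k f
    induction k with
    | zero => simp
    | succ k ih =>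
      rw [Function.iterate_succ_apply', ← hs, ← ih, pow_succ']; group
  have hπa : ∀ v, π (FreeGroup.lift a v) = ι (FreeGroup.lift (bigfam Ψ x b) v) := by
    intro v
    have : π.comp (FreeGroup.lift a) = ι.comp (FreeGroup.lift (bigfam Ψ x b)) := by
      ext c
      rcases c with i | ⟨k, j⟩
      · simp [a, bigfam, hπof, gens]
      · simp [a, bigfam, hπof, gens, t, hs']
    exact DFunLike.congr_fun this v
  have haA : ∀ c, a c ∈ A := fun c => ⟨FreeGroup.of c, by simp⟩
  have hmapA : ∀ v : FreeGroup (Fin r ⊕ Fin m),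
      PresentedGroup.mk (Set.range rel) (FreeGroup.map some v) ∈ A := by
    intro v
    have : ((PresentedGroup.mk (Set.range rel)).comp (FreeGroup.map some)).range ≤ A := by
      have e : (PresentedGroup.mk (Set.range rel)).comp (FreeGroup.map some) =
        FreeGroup.lift (fun c : Fin r ⊕ Fin m => PresentedGroup.of (some c)) := by
        ext c; simp; rfl
      rw [e, FreeGroup.range_lift_eq_closure, Subgroup.closure_le]
      rintro _ ⟨i | j, rfl⟩
      · exact haA (Sum.inl i)
      · have := haA (Sum.inr (0, j))
        simpa [a] using this
    exact this ⟨v, rfl⟩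
  have hA : ∀ y ∈ A, t * y * t⁻¹ ∈ A := by
    have : A ≤ A.comap (MulAut.conj t).toMonoidHom := by
      conv_lhs => rw [show A = (FreeGroup.lift a).range from rfl,
        FreeGroup.range_lift_eq_closure]
      rw [Subgroup.closure_le]
      rintro _ ⟨i | ⟨k, j⟩, rfl⟩
      · change t * PresentedGroup.of (some (Sum.inl i)) * t⁻¹ ∈ A
        have h1 : PresentedGroup.mk (Set.range rel) (rel i) = 1 :=
          PresentedGroup.one_of_mem ⟨i, rfl⟩
        have h2 : t * PresentedGroup.of (some (Sum.inl i)) * t⁻¹ =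
            PresentedGroup.mk (Set.range rel) (FreeGroup.map some (w i)) := by
          simp only [rel, map_mul, map_inv] at h1
          exact mul_inv_eq_one.1 h1
        rw [h2]
        exact hmapA _
      · have := haA (Sum.inr (k + 1, j))
        change t * (t ^ k * PresentedGroup.of (some (Sum.inr j)) * (t ^ k)⁻¹) * t⁻¹ ∈ A
        convert this using 1
        simp only [a, Sum.elim_inr]
        rw [pow_succ']; group
    exact fun y hy => this hy
  have htop : (Subgroup.zpowers t ⊔ A) = ⊤ := by
    rw [eq_top_iff, ← PresentedGroup.closure_range_of, Subgroup.closure_le]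
    rintro _ ⟨_ | c, rfl⟩
    · exact Subgroup.mem_sup_left (Subgroup.mem_zpowers _)
    · refine Subgroup.mem_sup_right ?_
      have := hmapA (FreeGroup.of c)
      rw [FreeGroup.map.of] at this
      exact this
  have hinj : Function.Injective π := by
    rw [injective_iff_map_eq_one]
    intro g hg
    obtain ⟨p, q, y, ⟨v, rfl⟩, rfl⟩ := normal_form hA (g := g) (htop ▸ Subgroup.mem_top g)
    have ht : π t = s := hπof none
    rw [map_mul, map_mul, map_inv, map_pow, map_pow, ht, hπa] at hg
    have h1 := congrArg χ hg
    simp only [map_mul, map_inv, map_pow, hχ, map_one, mul_one] at h1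
    have hpq : p = q := by
      have h2 := congrArg Multiplicative.toAdd h1
      simp only [toAdd_mul, toAdd_inv, toAdd_pow, toAdd_one] at h2
      have h3 : Multiplicative.toAdd (χ s) ≠ 0 := fun h => hχs (by exact h)
      have h4 : ((q : ℤ) - p) * Multiplicative.toAdd (χ s) = 0 := by
        simp only [nsmul_eq_mul] at h2
        linarith
      rcases mul_eq_zero.1 h4 with h | h
      · omega
      · exact absurd h h3
    subst hpq
    have h2 : ι (FreeGroup.lift (bigfam Ψ x b) v) = 1 := by
      have : ι (FreeGroup.lift (bigfam Ψ x b) v) =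
        s ^ p * ((s ^ p)⁻¹ * ι (FreeGroup.lift (bigfam Ψ x b) v) * s ^ p) * (s ^ p)⁻¹ := by group
      rw [this, hg]; group
    rw [map_eq_one_iff _ hι, map_eq_one_iff _ hfree] at h2
    rw [h2]; simp
  have hrange : π.range = Subgroup.zpowers s ⊔ ((FreeGroup.lift (Sum.elim x b)).range).map ι := by
    rw [MonoidHom.range_eq_map, ← PresentedGroup.closure_range_of, MonoidHom.map_closure,
      FreeGroup.range_lift_eq_closure, MonoidHom.map_closure, Subgroup.zpowers_eq_closure,
      ← Subgroup.closure_union]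
    congr 1
    ext g
    constructor
    · rintro ⟨_, ⟨_ | c, rfl⟩, rfl⟩
      · left; rw [hπof]; rfl
      · right; rw [hπof]; exact ⟨_, ⟨c, rfl⟩, rfl⟩
    · rintro (h | ⟨_, ⟨c, rfl⟩, rfl⟩)
      · exact ⟨_, ⟨none, rfl⟩, (hπof none).trans h.symm⟩
      · exact ⟨_, ⟨some c, rfl⟩, hπof (some c)⟩
  rw [← hrange]
  exact Group.IsFinitelyPresented.equiv (MonoidHom.ofInjective hinj)

theorem main_thm {G : Type} [Group G] (ι : FreeGroup I →* G) (hι : Function.Injective ι)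
    (s : G) (Ψ : FreeGroup I →* FreeGroup I) (hΨ : Function.Injective Ψ)
    (hs : ∀ f, s * ι f * s⁻¹ = ι (Ψ f)) (χ : G →* Multiplicative ℤ) (hχ : ∀ f, χ (ι f) = 1)
    (hχs : χ s ≠ 1) (B : List (FreeGroup I)) :
    Group.IsFinitelyPresented (Subgroup.zpowers s ⊔ (gen ⊥ B).map ι : Subgroup G) := by
  obtain ⟨r, m, x, b, h1, h2, h3⟩ := exists_free_system Ψ hΨ
    (fun Z => Subgroup.zpowers s ⊔ Z.map ι = Subgroup.zpowers s ⊔ (gen ⊥ B).map ι) (by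
      intro Z c hc hZ
      rw [Subgroup.map_sup, ← sup_assoc, ← hZ, sup_eq_left, MonoidHom.map_zpowers,
        Subgroup.zpowers_le, ← hs]
      have h5 : s ∈ Subgroup.zpowers s ⊔ Z.map ι :=
        Subgroup.mem_sup_left (Subgroup.mem_zpowers s)
      exact mul_mem (mul_mem h5 (Subgroup.mem_sup_right (Subgroup.mem_map_of_mem ι hc)))
        (inv_mem h5)) ⟨⊥, B, ⟨[], gen_nil _⟩, by simp, rfl⟩
  have := fp_of_free_system ι hι s Ψ hs χ hχ hχs r m x b h1 h2
  rwa [h3] at this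

end
end FH

namespace FH

theorem fp_of_conj {G : Type} [Group G] (H : Subgroup G) (g : G)
    (h : Group.IsFinitelyPresented (H.map (MulAut.conj g).toMonoidHom)) :
    Group.IsFinitelyPresented H :=
  Group.IsFinitelyPresented.equiv
    (H.equivMapOfInjective (MulAut.conj g).toMonoidHom (MulAut.conj g).injective).symm

theorem exists_list {I : Type} {G : Type} [Group G] (ι : FreeGroup I →* G) (S : Finset G) (c : G → G)
    (h : ∀ g ∈ S, ∃ f, c g = ι f) :
    ∃ B : List (FreeGroup I), (gen ⊥ B).map ι = Subgroup.closure (c '' (S : Set G)) := by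
  choose! φ hφ using h
  refine ⟨S.toList.map φ, ?_⟩
  rw [gen, bot_sup_eq, MonoidHom.map_closure]
  congr 1
  ext g
  constructor
  · rintro ⟨f, hf, rfl⟩
    obtain ⟨u, hu, rfl⟩ := List.mem_map.1 hf
    rw [Finset.mem_toList] at hu
    exact ⟨u, hu, hφ u hu⟩
  · rintro ⟨u, hu, rfl⟩
    exact ⟨φ u, List.mem_map.2 ⟨u, Finset.mem_toList.2 hu, rfl⟩, (hφ u hu).symm⟩

section
variable {I G : Type} [Group G]

theorem abstract_coherent (ι : FreeGroup I →* G) (hι : Function.Injective ι)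
    (t : G) (Φ : FreeGroup I →* FreeGroup I) (hΦ : Function.Injective Φ)
    (ht : ∀ f, t * ι f * t⁻¹ = ι (Φ f)) (χ : G →* Multiplicative ℤ) (hχ : ∀ f, χ (ι f) = 1)
    (hχt : χ t = Multiplicative.ofAdd 1) (htop : Subgroup.zpowers t ⊔ ι.range = ⊤)
    (H : Subgroup G) (hH : H.FG) : Group.IsFinitelyPresented H := by
  classical
  have ht' : ∀ (k : ℕ) f, t ^ k * ι f * (t ^ k)⁻¹ = ι (Φ^[k] f) := by
    intro k f
    induction k with
    | zero => simp
    | succ k ih =>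
      rw [Function.iterate_succ_apply', ← ht, ← ih, pow_succ']; group
  have hA : ∀ y ∈ ι.range, t * y * t⁻¹ ∈ ι.range := by
    rintro _ ⟨f, rfl⟩; exact ⟨Φ f, (ht f).symm⟩
  have nf : ∀ g : G, ∃ p q : ℕ, ∃ f, g = (t ^ p)⁻¹ * ι f * t ^ q := by
    intro g
    obtain ⟨p, q, _, ⟨f, rfl⟩, h⟩ := normal_form hA (g := g) (htop ▸ Subgroup.mem_top g)
    exact ⟨p, q, f, h⟩
  have hχnf : ∀ (p q : ℕ) f, Multiplicative.toAdd (χ ((t ^ p)⁻¹ * ι f * t ^ q)) = (q : ℤ) - p := by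
    intro p q f
    rw [map_mul χ, map_mul χ, map_inv χ, map_pow χ, map_pow χ, hχ, hχt]
    simp only [toAdd_mul, toAdd_inv, toAdd_pow, toAdd_one, toAdd_ofAdd]
    simp; ring
  have hker : ∀ g, χ g = 1 → ∃ a : ℕ, ∀ N ≥ a, ∃ f, t ^ N * g * (t ^ N)⁻¹ = ι f := by
    intro g hg
    obtain ⟨p, q, f, rfl⟩ := nf g
    have h1 := hχnf p q f
    rw [hg, toAdd_one] at h1
    have : p = q := by omega
    subst this
    refine ⟨p, fun N hN => ?_⟩
    obtain ⟨d, rfl⟩ := Nat.exists_eq_add_of_le hN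
    refine ⟨Φ^[d] f, ?_⟩
    have e1 : t ^ (p + d) = t ^ d * t ^ p := by rw [← pow_add, add_comm]
    rw [← ht', e1]; group
  have hkerS : ∀ (S : Finset G) (κ : G → G), (∀ g ∈ S, χ (κ g) = 1) →
      ∃ a : ℕ, ∀ N ≥ a, ∀ g ∈ S, ∃ f, t ^ N * κ g * (t ^ N)⁻¹ = ι f := by
    intro S κ hS
    have : ∀ g ∈ S, ∃ a : ℕ, ∀ N ≥ a, ∃ f, t ^ N * κ g * (t ^ N)⁻¹ = ι f :=
      fun g hg => hker _ (hS g hg)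
    choose! a ha using this
    exact ⟨S.sup a, fun N hN g hg => ha g hg N ((Finset.le_sup hg).trans hN)⟩
  by_cases hcase : ∀ h ∈ H, χ h = 1
  · obtain ⟨S, rfl⟩ := hH
    obtain ⟨a, ha⟩ := hkerS S id (fun g hg => hcase g (Subgroup.subset_closure hg))
    obtain ⟨B, hB⟩ := exists_list ι S (fun g => t ^ a * g * (t ^ a)⁻¹) (ha a le_rfl)
    apply fp_of_conj _ (t ^ a)
    have : (Subgroup.closure (S : Set G)).map (MulAut.conj (t ^ a)).toMonoidHom =
        (gen ⊥ B).map ι := by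
      rw [hB, MonoidHom.map_closure]; rfl
    rw [this]
    obtain ⟨n, v, hv, hv'⟩ := FGL.rank (X := gen ⊥ B) ⟨B, rfl⟩
    have e : FreeGroup (Fin n) ≃* (gen ⊥ B).map ι :=
      ((MonoidHom.ofInjective hv).trans (MulEquiv.subgroupCongr hv')).trans
        ((gen ⊥ B).equivMapOfInjective ι hι)
    exact Group.IsFinitelyPresented.equiv e
  · push Not at hcase
    obtain ⟨h1, hh1, hh1'⟩ := hcase
    obtain ⟨⟨z, hz⟩, hgen⟩ := IsCyclic.exists_generator (α := H.map χ)
    obtain ⟨h0, hh0, rfl⟩ := hz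
    have hgen' : ∀ h ∈ H, ∃ k : ℤ, χ h = χ h0 ^ k := by
      intro h hh
      obtain ⟨k, hk⟩ := hgen ⟨χ h, Subgroup.mem_map_of_mem χ hh⟩
      exact ⟨k, (congrArg Subtype.val hk).symm⟩
    have hne : Multiplicative.toAdd (χ h0) ≠ 0 := by
      intro h
      have h : χ h0 = 1 := h
      obtain ⟨k, hk⟩ := hgen' h1 hh1
      rw [h, one_zpow] at hk
      exact hh1' hk
    have hpos : ∃ h0 ∈ H, 0 < Multiplicative.toAdd (χ h0) ∧
        ∀ h ∈ H, ∃ k : ℤ, χ h = χ h0 ^ k := by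
      rcases lt_or_gt_of_ne hne with h | h
      · refine ⟨h0⁻¹, inv_mem hh0, ?_, ?_⟩
        · rw [map_inv, toAdd_inv]; omega
        · intro g hg
          obtain ⟨k, hk⟩ := hgen' g hg
          exact ⟨-k, by rw [hk, map_inv, inv_zpow, zpow_neg, inv_inv]⟩
      · exact ⟨h0, hh0, h, hgen'⟩
    clear hgen' hne hgen hh0
    clear h0
    obtain ⟨h0, hh0, hpos, hgen⟩ := hpos
    obtain ⟨p, q, y, rfl⟩ := nf h0
    rw [hχnf] at hpos
    obtain ⟨d, rfl⟩ := Nat.exists_eq_add_of_le (show p ≤ q by omega)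
    have hd : 1 ≤ d := by omega
    set s : G := ι y * t ^ d with hs
    have hss : t ^ p * ((t ^ p)⁻¹ * ι y * t ^ (p + d)) * (t ^ p)⁻¹ = s := by
      have e1 : t ^ (p + d) = t ^ d * t ^ p := by rw [← pow_add, add_comm]
      rw [e1, hs]; group
    apply fp_of_conj H (t ^ p)
    set H' := H.map (MulAut.conj (t ^ p)).toMonoidHom with hH'
    have hsH' : s ∈ H' := ⟨_, hh0, hss⟩
    have hχs : χ s = χ ((t ^ p)⁻¹ * ι y * t ^ (p + d)) := by
      rw [← hss]; simp only [map_mul, map_inv]; rw [mul_comm]; simp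
    have hgen' : ∀ h ∈ H', ∃ k : ℤ, χ h = χ s ^ k := by
      rintro _ ⟨h, hh, rfl⟩
      obtain ⟨k, hk⟩ := hgen h hh
      refine ⟨k, ?_⟩
      rw [hχs, ← hk]
      change χ (t ^ p * h * (t ^ p)⁻¹) = _
      simp only [map_mul, map_inv]; rw [mul_comm]; simp
    have hH'fg : H'.FG := by
      obtain ⟨S0, hS0⟩ := hH
      exact ⟨S0.image (MulAut.conj (t ^ p)).toMonoidHom, by
        rw [Finset.coe_image, hH', ← hS0, MonoidHom.map_closure]⟩
    obtain ⟨S, hS⟩ := hH'fg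
    have hSH : ∀ g ∈ S, g ∈ H' := fun g hg => hS ▸ Subgroup.subset_closure hg
    choose! k hk using hgen'
    obtain ⟨a, ha⟩ := hkerS S (fun g => g * s ^ (-k g)) (by
      intro g hg
      rw [map_mul, map_zpow, hk g (hSH g hg), ← zpow_add]; simp)
    have hsn : ∀ n : ℕ, ∃ f, s ^ n = ι f * t ^ (d * n) := by
      intro n
      induction n with
      | zero => exact ⟨1, by simp⟩
      | succ n ih =>
        obtain ⟨f, hf⟩ := ih
        refine ⟨f * Φ^[d * n] y, ?_⟩
        rw [pow_succ, hf, map_mul, ← ht', hs, Nat.mul_succ, pow_add t]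
        group
    obtain ⟨f, hf⟩ := hsn a
    obtain ⟨B, hB⟩ := exists_list ι S (fun g => s ^ a * (g * s ^ (-k g)) * (s ^ a)⁻¹) (by
      intro g hg
      obtain ⟨f', hf'⟩ := ha (d * a) (Nat.le_mul_of_pos_left a hd) g hg
      refine ⟨f * f' * f⁻¹, ?_⟩
      rw [map_mul, map_mul, map_inv, ← hf', hf]
      simp only [mul_inv_rev, mul_assoc])
    have hfinal : H' = Subgroup.zpowers s ⊔ (gen ⊥ B).map ι := by
      rw [hB]
      apply le_antisymm
      · rw [← hS, Subgroup.closure_le]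
        intro g hg
        have h6 : s ∈ Subgroup.zpowers s ⊔ Subgroup.closure
            ((fun g => s ^ a * (g * s ^ (-k g)) * (s ^ a)⁻¹) '' (S : Set G)) :=
          Subgroup.mem_sup_left (Subgroup.mem_zpowers s)
        have h7 : s ^ a * (g * s ^ (-k g)) * (s ^ a)⁻¹ ∈ Subgroup.zpowers s ⊔ Subgroup.closure
            ((fun g => s ^ a * (g * s ^ (-k g)) * (s ^ a)⁻¹) '' (S : Set G)) :=
          Subgroup.mem_sup_right (Subgroup.subset_closure ⟨g, hg, rfl⟩)
        have h8 := mul_mem (mul_mem (mul_mem (inv_mem (pow_mem h6 a)) h7) (pow_mem h6 a))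
          (zpow_mem h6 (k g))
        have e : (s ^ a)⁻¹ * (s ^ a * (g * s ^ (-k g)) * (s ^ a)⁻¹) * s ^ a * s ^ (k g) = g := by
          rw [zpow_neg]
          simp only [mul_assoc, inv_mul_cancel_left, inv_mul_cancel, mul_one]
        rw [e] at h8
        exact h8
      · rw [sup_le_iff, Subgroup.zpowers_le, Subgroup.closure_le]
        refine ⟨hsH', ?_⟩
        rintro _ ⟨g, hg, rfl⟩
        exact mul_mem (mul_mem (pow_mem hsH' a) (mul_mem (hSH g hg) (zpow_mem hsH' _)))
          (inv_mem (pow_mem hsH' a))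
    rw [hfinal]
    have hΦn : ∀ n : ℕ, ∃ Φn : FreeGroup I →* FreeGroup I, ∀ f, Φn f = Φ^[n] f := by
      intro n
      induction n with
      | zero => exact ⟨MonoidHom.id _, fun f => rfl⟩
      | succ n ih =>
        obtain ⟨Φn, hn⟩ := ih
        exact ⟨Φ.comp Φn, fun f => by
          rw [Function.iterate_succ_apply', MonoidHom.comp_apply, hn]⟩
    obtain ⟨Φd, hΦd⟩ := hΦn d
    let Ψ : FreeGroup I →* FreeGroup I := (MulAut.conj y).toMonoidHom.comp Φd
    have hΨe : ∀ f, Ψ f = y * Φ^[d] f * y⁻¹ := by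
      intro f
      rw [← hΦd]; rfl
    refine main_thm ι hι s Ψ ?_ ?_ χ hχ ?_ B
    · intro u v huv
      rw [hΨe, hΨe] at huv
      exact hΦ.iterate d (mul_left_cancel (mul_right_cancel huv))
    · intro f
      rw [hΨe, map_mul, map_mul, map_inv, ← ht', hs]; group
    · intro h
      rw [hχs] at h
      have := hχnf p (p + d) y
      rw [h, toAdd_one] at this
      push_cast at this
      omega

end

section
variable {I : Type} (Φ : FreeGroup I →* FreeGroup I)

theorem mt_rel (f : FreeGroup I) : mtT Φ * mtι Φ f * (mtT Φ)⁻¹ = mtι Φ (Φ f) := by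
  have : ((MulAut.conj (mtT Φ)).toMonoidHom.comp (mtι Φ)) = (mtι Φ).comp Φ := by
    ext i
    have h1 : PresentedGroup.mk (mtRels Φ) _ = 1 := PresentedGroup.one_of_mem ⟨i, rfl⟩
    simp only [map_mul, map_inv] at h1
    exact mul_inv_eq_one.1 h1
  exact DFunLike.congr_fun this f

theorem mtι_injective (hΦ : Function.Injective Φ) : Function.Injective (mtι Φ) := by
  let e : (⊤ : Subgroup (FreeGroup I)) ≃* Φ.range :=
    Subgroup.topEquiv.trans (MonoidHom.ofInjective hΦ)
  let N := HNNExtension (FreeGroup I) ⊤ Φ.range e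
  let gens : Option I → N := fun o => o.elim HNNExtension.t (fun i => HNNExtension.of (FreeGroup.of i))
  have hg : ∀ v, FreeGroup.lift gens (FreeGroup.map some v) = HNNExtension.of v := by
    intro v
    have : (FreeGroup.lift gens).comp (FreeGroup.map some) = HNNExtension.of := by
      ext a; simp [gens]
    exact DFunLike.congr_fun this v
  let π : MT Φ →* N := PresentedGroup.toGroup (f := gens) (by
    rintro _ ⟨i, rfl⟩
    simp only [map_mul, map_inv, hg, FreeGroup.lift_apply_of]
    rw [mul_inv_eq_one]
    have := HNNExtension.equiv_eq_conj (φ := e) ⟨FreeGroup.of i, trivial⟩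
    exact this.symm)
  have hπ : ∀ v, π (mtι Φ v) = HNNExtension.of v := by
    intro v
    rw [← hg]; rfl
  intro u v huv
  have := congrArg π huv
  rw [hπ, hπ] at this
  exact HNNExtension.of_injective e this

/-- The height homomorphism. -/
noncomputable def mtχ : MT Φ →* Multiplicative ℤ :=
  PresentedGroup.toGroup (f := fun o : Option I => o.elim (Multiplicative.ofAdd 1) (fun _ => 1)) (by
    rintro _ ⟨i, rfl⟩
    have h : ∀ v : FreeGroup I, FreeGroup.lift
        (fun o : Option I => o.elim (Multiplicative.ofAdd (1 : ℤ)) (fun _ => 1))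
        (FreeGroup.map some v) = 1 := by
      intro v
      have : (FreeGroup.lift (fun o : Option I => o.elim (Multiplicative.ofAdd (1 : ℤ))
        (fun _ => 1))).comp (FreeGroup.map some) = 1 := by ext a; simp
      exact DFunLike.congr_fun this v
    simp only [map_mul, map_inv, h, FreeGroup.lift_apply_of]
    simp)

theorem mtχ_ι (v : FreeGroup I) : mtχ Φ (mtι Φ v) = 1 := by
  have : (mtχ Φ).comp (mtι Φ) = 1 := by
    ext i
    change mtχ Φ (PresentedGroup.of (some i)) = 1
    exact PresentedGroup.toGroup.of _
  exact DFunLike.congr_fun this v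

theorem mtχ_t : mtχ Φ (mtT Φ) = Multiplicative.ofAdd 1 := PresentedGroup.toGroup.of _

theorem mt_top : Subgroup.zpowers (mtT Φ) ⊔ (mtι Φ).range = ⊤ := by
  rw [eq_top_iff, ← PresentedGroup.closure_range_of, Subgroup.closure_le]
  rintro _ ⟨_ | i, rfl⟩
  · exact Subgroup.mem_sup_left (Subgroup.mem_zpowers _)
  · exact Subgroup.mem_sup_right ⟨FreeGroup.of i, rfl⟩

end

end FH

/-- **Main Theorem.** The mapping torus `M(Φ)` of an injective endomorphism `Φ` of a
(possibly infinite rank) free group is coherent: every finitely generated subgroup of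
`M(Φ)` is finitely presented. -/
theorem mappingTorus_coherent {I : Type} (Φ : FreeGroup I →* FreeGroup I)
    (hΦ : Function.Injective Φ) (H : Subgroup (MT Φ)) (hH : H.FG) :
    FinitelyPresented H := by
  have h := FH.abstract_coherent (mtι Φ) (FH.mtι_injective Φ hΦ) (mtT Φ) Φ hΦ (FH.mt_rel Φ)
    (FH.mtχ Φ) (FH.mtχ_ι Φ) (FH.mtχ_t Φ) (FH.mt_top Φ) H hH
  obtain ⟨n, s, hs, ⟨e⟩⟩ := h.exists_mulEquiv_presentedGroup
  exact ⟨n, s, hs, ⟨e.symm⟩⟩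
end

section
/- Every finitely generated subgroup of M(Ψ) is finitely presented; that is, M(Ψ) is coherent. -/
/-- Given `J ⊆ I`, the free factor `F = ⟨e_j : j ∈ J⟩` of the free group `G` on `I`. -/
def freeFactor {I : Type} (J : Set I) : Subgroup (FreeGroup I) :=
  Subgroup.closure (FreeGroup.of '' J)

/-- The relators `t e_j t⁻¹ Ψ(e_j)⁻¹ (j ∈ J)` of the mapping torus `M(Ψ)` of an injective
homomorphism `Ψ : F → G` from the free factor `F = ⟨e_j : j ∈ J⟩` of the free group `G` on `I`;
the generator `none` plays the role of the stable letter `t`. -/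
def mtRelsRel {I : Type} (J : Set I) (Ψ : freeFactor J →* FreeGroup I) :
    Set (FreeGroup (Option I)) :=
  Set.range fun j : J =>
    FreeGroup.of (none : Option I) * FreeGroup.of (some (j : I)) *
      (FreeGroup.of (none : Option I))⁻¹ *
      (FreeGroup.map some
        (Ψ ⟨FreeGroup.of (j : I),
          Subgroup.subset_closure (Set.mem_image_of_mem _ j.2)⟩))⁻¹

/-- The mapping torus `M(Ψ) = ⟨t, eᵢ (i ∈ I) | t e_j t⁻¹ Ψ(e_j)⁻¹ (j ∈ J)⟩`, i.e. the HNN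
extension `G ∗_F` with bonding maps the inclusion of `F` into `G` and `Ψ`. -/
abbrev MTRel {I : Type} (J : Set I) (Ψ : freeFactor J →* FreeGroup I) : Type :=
  PresentedGroup (mtRelsRel J Ψ)

namespace MTCoh

set_option linter.style.haveILetI false

open Function

/-! ### Partial permutations, residual finiteness and the Hopf property -/

theorem exists_perm_extend {V : Type} [Finite V] (R : V → V → Prop)
    (h1 : ∀ a b b', R a b → R a b' → b = b') (h2 : ∀ a a' b, R a b → R a' b → a = a') :
    ∃ σ : Equiv.Perm V, ∀ a b, R a b → σ a = b := by
  classical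
  haveI := Fintype.ofFinite V
  let f : V → V := fun a => if h : ∃ b, R a b then h.choose else a
  have hf : ∀ a b, R a b → f a = b := by
    intro a b hab
    have h : ∃ b, R a b := ⟨b, hab⟩
    simp only [f, dif_pos h]
    exact h1 _ _ _ h.choose_spec hab
  let s : Set V := {a | ∃ b, R a b}
  have hinj : Set.InjOn f s := by
    rintro a ⟨b, hb⟩ a' ⟨b', hb'⟩ hh
    rw [hf _ _ hb, hf _ _ hb'] at hh
    subst hh
    exact h2 _ _ _ hb hb'
  obtain ⟨g, hg⟩ := Set.MapsTo.exists_equiv_extend_of_card_eq (α := V) (β := V)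
    (t := Finset.univ) (by simp) (s := s) (f := f) (fun _ _ => by simp) hinj
  refine ⟨g.trans (Equiv.subtypeUnivEquiv (by simp)), fun a b hab => ?_⟩
  rw [← hf _ _ hab, ← hg a ⟨b, hab⟩]
  rfl

theorem freeGroup_resFin {α : Type} (g : FreeGroup α) (hg : g ≠ 1) :
    ∃ (Q : Type) (_ : Group Q) (_ : Finite Q) (f : FreeGroup α →* Q), f g ≠ 1 := by
  classical
  let S : Set (FreeGroup α) := {h | ∃ L, L <:+ g.toWord ∧ FreeGroup.mk L = h}
  have hS : S.Finite := by
    have : S = FreeGroup.mk '' {L | L ∈ g.toWord.tails} := by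
      ext h; simp [S]
    rw [this]
    exact (List.finite_toSet _).image _
  haveI : Finite S := hS
  have key : ∀ x : α, ∃ σ : Equiv.Perm S, ∀ a b : S, FreeGroup.of x * a.1 = b.1 → σ a = b := by
    intro x
    refine exists_perm_extend (fun a b : S => FreeGroup.of x * a.1 = b.1) ?_ ?_
    · intro a b b' h h'
      exact Subtype.ext (h.symm.trans h')
    · intro a a' b h h'
      exact Subtype.ext (mul_left_cancel (h.trans h'.symm))
  choose σ hσ using key
  refine ⟨Equiv.Perm S, inferInstance, inferInstance, FreeGroup.lift σ, fun hcontra => hg ?_⟩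
  have h1 : (1 : FreeGroup α) ∈ S := ⟨[], List.nil_suffix, rfl⟩
  have main : ∀ L : List (α × Bool), ∀ hL : L <:+ g.toWord,
      ((FreeGroup.lift σ (FreeGroup.mk L)) ⟨1, h1⟩).1 = FreeGroup.mk L := by
    intro L
    induction L with
    | nil => intro hL; rw [← FreeGroup.one_eq_mk]; simp
    | cons a L ih =>
      intro hL
      have hL' : L <:+ g.toWord := (List.suffix_cons a L).trans hL
      obtain ⟨x, b⟩ := a
      have e : FreeGroup.mk ((x, b) :: L) = FreeGroup.mk [(x, b)] * FreeGroup.mk L := by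
        rw [FreeGroup.mul_mk]; rfl
      have : (FreeGroup.lift σ (FreeGroup.mk ((x, b) :: L))) ⟨1, h1⟩
          = FreeGroup.lift σ (FreeGroup.mk [(x, b)]) ⟨FreeGroup.mk L, L, hL', rfl⟩ := by
        rw [e, map_mul, Equiv.Perm.mul_apply]
        exact congrArg _ (Subtype.ext (ih hL'))
      rw [this]
      cases b with
      | true =>
        have : FreeGroup.mk [(x, true)] = FreeGroup.of x := rfl
        rw [this, FreeGroup.lift_apply_of]
        exact congrArg Subtype.val (hσ x ⟨FreeGroup.mk L, L, hL', rfl⟩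
          ⟨FreeGroup.mk ((x, true) :: L), _, hL, rfl⟩ e.symm)
      | false =>
        have : FreeGroup.mk [(x, false)] = (FreeGroup.of x)⁻¹ := rfl
        have h := hσ x ⟨FreeGroup.mk ((x, false) :: L), _, hL, rfl⟩
          ⟨FreeGroup.mk L, L, hL', rfl⟩ (by
            change FreeGroup.of x * FreeGroup.mk ((x, false) :: L) = FreeGroup.mk L
            rw [e, this, mul_inv_cancel_left])
        rw [this, map_inv, FreeGroup.lift_apply_of, ← h]
        simp
  have := main g.toWord List.suffix_rfl
  rw [FreeGroup.mk_toWord, hcontra] at this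
  simpa using this.symm

theorem finite_hom {B Q : Type} [Group B] [Group Q] [Group.FG B] [Finite Q] : Finite (B →* Q) := by
  obtain ⟨S, hS⟩ := Group.fg_def.mp (inferInstance : Group.FG B)
  refine Finite.of_injective (fun f : B →* Q => fun s : S => f s.1) ?_
  intro f g hfg
  refine MonoidHom.eq_of_eqOn_dense hS ?_
  intro s hs
  exact congrFun hfg ⟨s, hs⟩

theorem hopf {B : Type} [Group B] [Group.FG B]
    (hrf : ∀ b : B, b ≠ 1 → ∃ (Q : Type) (_ : Group Q) (_ : Finite Q) (f : B →* Q), f b ≠ 1)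
    (f : B →* B) (hf : Surjective f) : Injective f := by
  rw [injective_iff_map_eq_one]
  intro b hb
  by_contra hne
  obtain ⟨Q, _, _, ρ, hρ⟩ := hrf b hne
  haveI : Finite (B →* Q) := finite_hom
  have hinj : Injective (fun r : B →* Q => r.comp f) := by
    intro r r' h
    ext x
    obtain ⟨y, rfl⟩ := hf x
    exact DFunLike.congr_fun h y
  obtain ⟨r, hr⟩ := (Finite.injective_iff_surjective.mp hinj) ρ
  apply hρ
  rw [← hr]
  simp [hb]

/-! ### Amalgams -/

/-- A two-element family of types. -/
def AmG (B C : Type) : Bool → Type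
  | true => B
  | false => C

instance (B C : Type) [Group B] [Group C] : ∀ b, Group (AmG B C b)
  | true => (inferInstance : Group B)
  | false => (inferInstance : Group C)

theorem exists_amalgam {A B C : Type} [Group A] [Group B] [Group C] (f : A →* B) (g : A →* C)
    (hf : Injective f) (hg : Injective g) :
    ∃ (P : Type) (_ : Group P) (i : B →* P) (j : C →* P), Injective i ∧ Injective j ∧
      ∀ a, i (f a) = j (g a) := by
  let φ : ∀ b, A →* AmG B C b := fun b => match b with
    | true => f
    | false => g
  have hφ : ∀ b, Injective (φ b) := by
    intro b
    cases b
    · exact hg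
    · exact hf
  refine ⟨Monoid.PushoutI φ, inferInstance, Monoid.PushoutI.of (φ := φ) true,
    Monoid.PushoutI.of (φ := φ) false, Monoid.PushoutI.of_injective hφ true,
    Monoid.PushoutI.of_injective hφ false, fun a => ?_⟩
  exact (Monoid.PushoutI.of_apply_eq_base φ true a).trans
    (Monoid.PushoutI.of_apply_eq_base φ false a).symm

/-! ### Relative freeness -/

section
variable {Γ : Type} [Group Γ]

/-- `φ` is multiplicative on the subgroup `A`. -/
def MulOn {Q : Type} [Group Q] (A : Subgroup Γ) (φ : Γ → Q) : Prop :=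
  ∀ g ∈ A, ∀ h ∈ A, φ (g * h) = φ g * φ h

/-- The family `c` is a free basis of `A ⊔ ⟨c⟩` relative to `A`. -/
def FreeOver {ι : Type} (A : Subgroup Γ) (c : ι → Γ) : Prop :=
  ∀ (Q : Type) [Group Q] (φ : Γ → Q), MulOn A φ → ∀ y : ι → Q,
    ∃ Φ : Γ → Q, MulOn (A ⊔ Subgroup.closure (Set.range c)) Φ ∧ (∀ a ∈ A, Φ a = φ a) ∧
      ∀ i, Φ (c i) = y i

namespace MulOn
variable {Q : Type} [Group Q] {A : Subgroup Γ} {φ : Γ → Q}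

/-- The homomorphism given by a function multiplicative on a subgroup. -/
def hom (h : MulOn A φ) : A →* Q where
  toFun a := φ a
  map_one' := by
    have := h 1 A.one_mem 1 A.one_mem
    simpa using this
  map_mul' a b := h a a.2 b b.2

@[simp] theorem hom_apply (h : MulOn A φ) (a : A) : h.hom a = φ a := rfl

theorem one (h : MulOn A φ) : φ 1 = 1 := h.hom.map_one

theorem inv (h : MulOn A φ) {a : Γ} (ha : a ∈ A) : φ a⁻¹ = (φ a)⁻¹ := h.hom.map_inv ⟨a, ha⟩

theorem mono (h : MulOn A φ) {A' : Subgroup Γ} (hA : A' ≤ A) : MulOn A' φ :=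
  fun g hg k hk => h g (hA hg) k (hA hk)

open Classical in
theorem exists_of_hom (f : A →* Q) : ∃ φ : Γ → Q, MulOn A φ ∧ ∀ a : A, φ a = f a := by
  refine ⟨fun g => if h : g ∈ A then f ⟨g, h⟩ else 1, ?_, ?_⟩
  · intro g hg h hh
    beta_reduce
    rw [dif_pos hg, dif_pos hh, dif_pos (mul_mem hg hh), ← map_mul]
    rfl
  · intro a
    simp

/-- Two functions multiplicative on `A ⊔ ⟨c⟩` agreeing on generators agree. -/
theorem eqOn {ι : Type} {c : ι → Γ} {Φ Φ' : Γ → Q}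
    (h : MulOn (A ⊔ Subgroup.closure (Set.range c)) Φ)
    (h' : MulOn (A ⊔ Subgroup.closure (Set.range c)) Φ')
    (hA : ∀ a ∈ A, Φ a = Φ' a) (hc : ∀ i, Φ (c i) = Φ' (c i)) :
    ∀ g ∈ A ⊔ Subgroup.closure (Set.range c), Φ g = Φ' g := by
  set B := A ⊔ Subgroup.closure (Set.range c) with hB
  have key : B ≤ (h.hom.eqLocus h'.hom).map B.subtype := by
    conv_lhs => rw [hB]
    rw [sup_le_iff, Subgroup.closure_le]
    constructor
    · intro a ha
      exact ⟨⟨a, le_sup_left (a := A) ha⟩, hA a ha, rfl⟩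
    · rintro _ ⟨i, rfl⟩
      exact ⟨⟨c i, le_sup_right (a := A) (Subgroup.subset_closure ⟨i, rfl⟩)⟩, hc i, rfl⟩
  intro g hg
  obtain ⟨g', hg', rfl⟩ := key hg
  exact hg'
end MulOn

theorem mem_sup_gen {ι : Type} (A : Subgroup Γ) (c : ι → Γ) (i : ι) :
    c i ∈ A ⊔ Subgroup.closure (Set.range c) :=
  le_sup_right (a := A) (Subgroup.subset_closure ⟨i, rfl⟩)

/-- Combining a family free over `A` with an element. -/
theorem sup_cons {m : ℕ} (A : Subgroup Γ) (l : Γ) (d : Fin m → Γ) :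
    A ⊔ Subgroup.closure (Set.range (Fin.cons l d : Fin (m + 1) → Γ)) =
      (A ⊔ Subgroup.closure {l}) ⊔ Subgroup.closure (Set.range d) := by
  rw [Fin.range_cons, Set.insert_eq, Subgroup.closure_union, sup_assoc]

theorem FreeOver.tail {m : ℕ} {A : Subgroup Γ} {l : Γ} {d : Fin m → Γ}
    (h : FreeOver A (Fin.cons l d : Fin (m + 1) → Γ)) : FreeOver A d := by
  intro Q _ φ hφ y
  obtain ⟨Φ, h1, h2, h3⟩ := h Q φ hφ (Fin.cons 1 y)
  refine ⟨Φ, h1.mono ?_, h2, fun i => ?_⟩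
  · rw [sup_cons]
    exact sup_le_sup_right le_sup_left _
  · simpa using h3 i.succ

theorem FreeOver.head {m : ℕ} {A : Subgroup Γ} {l : Γ} {d : Fin m → Γ}
    (h : FreeOver A (Fin.cons l d : Fin (m + 1) → Γ)) :
    FreeOver (A ⊔ Subgroup.closure (Set.range d)) (fun _ : Unit => l) := by
  intro Q _ φ hφ y
  obtain ⟨Φ, h1, h2, h3⟩ := h Q φ (hφ.mono le_sup_left) (Fin.cons (y ()) (φ ∘ d))
  have hle : (A ⊔ Subgroup.closure (Set.range d)) ≤
      A ⊔ Subgroup.closure (Set.range (Fin.cons l d : Fin (m + 1) → Γ)) := by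
    rw [sup_cons]
    exact sup_le_sup_right le_sup_left _
  refine ⟨Φ, h1.mono ?_, ?_, fun i => by simpa using h3 0⟩
  · rw [sup_cons, Set.range_const, sup_assoc, sup_assoc, sup_comm (Subgroup.closure (Set.range d))]
  · refine MulOn.eqOn (h1.mono hle) hφ h2 fun i => by simpa using h3 i.succ

theorem FreeOver.cons {m : ℕ} {A : Subgroup Γ} {l : Γ} {d : Fin m → Γ}
    (h : FreeOver A (fun _ : Unit => l)) (h' : FreeOver (A ⊔ Subgroup.closure {l}) d) :
    FreeOver A (Fin.cons l d : Fin (m + 1) → Γ) := by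
  intro Q _ φ hφ y
  obtain ⟨Φ, h1, h2, h3⟩ := h Q φ hφ (fun _ => y 0)
  rw [Set.range_const] at h1
  obtain ⟨Φ', h1', h2', h3'⟩ := h' Q Φ h1 (fun i => y i.succ)
  refine ⟨Φ', by rwa [sup_cons], fun a ha => ?_, fun i => ?_⟩
  · rw [h2' a (le_sup_left (a := A) ha), h2 a ha]
  · refine Fin.cases ?_ (fun j => ?_) i
    · simp only [Fin.cons_zero]
      rw [h2' l (le_sup_right (a := A) (Subgroup.subset_closure rfl))]
      exact h3 ()
    · simpa using h3' j

/-- Descend relative freeness of one element along an injective endomorphism. -/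
theorem FreeOver.descend (Θ : Γ →* Γ) (hΘ : Injective Θ) {A B : Subgroup Γ} {l : Γ}
    (hAB : A.map Θ ≤ B) (h : FreeOver B (fun _ : Unit => Θ l)) :
    FreeOver A (fun _ : Unit => l) := by
  intro Q _ φ hφ y
  let f : A →* B := (Θ.comp A.subtype).codRestrict B
    (fun a => hAB ⟨a, a.2, rfl⟩)
  have hf : Injective f := by
    intro a b hab
    exact Subtype.ext (hΘ (congrArg Subtype.val hab))
  let g : A →* Q × A := hφ.hom.prod (MonoidHom.id A)
  have hg : Injective g := fun a b hab => congrArg Prod.snd hab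
  obtain ⟨P, _, i, j, hi, hj, hij⟩ := exists_amalgam f g hf hg
  obtain ⟨ψ, hψ, hψi⟩ := MulOn.exists_of_hom i
  obtain ⟨Φ, h1, h2, h3⟩ := h P ψ hψ (fun _ => j (y (), 1))
  rw [Set.range_const] at h1 ⊢
  set C := A ⊔ Subgroup.closure {l} with hC
  have hCle : C ≤ (B ⊔ Subgroup.closure {Θ l}).comap Θ := by
    rw [hC, sup_le_iff, Subgroup.closure_le]
    constructor
    · intro a ha
      exact le_sup_left (a := B) (hAB ⟨a, ha, rfl⟩)
    · rintro _ rfl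
      exact le_sup_right (a := B) (Subgroup.subset_closure rfl)
  have hΦΘ : MulOn C (fun g => Φ (Θ g)) := by
    intro g hg h hh
    simp only [map_mul]
    exact h1 _ (hCle hg) _ (hCle hh)
  have hΦA : ∀ a : A, Φ (Θ a) = j (φ a, a) := by
    intro a
    rw [h2 _ (hAB ⟨a, a.2, rfl⟩)]
    exact (hψi (f a)).trans (hij a)
  have hrange : ∀ x : C, hΦΘ.hom x ∈ j.range := by
    have : C ≤ (j.range.comap hΦΘ.hom).map C.subtype := by
      conv_lhs => rw [hC]
      rw [sup_le_iff, Subgroup.closure_le]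
      constructor
      · intro a ha
        exact ⟨⟨a, le_sup_left (a := A) ha⟩, ⟨_, (hΦA ⟨a, ha⟩).symm⟩, rfl⟩
      · rintro _ rfl
        exact ⟨⟨_, le_sup_right (a := A) (Subgroup.subset_closure rfl)⟩, ⟨_, (h3 ()).symm⟩, rfl⟩
    intro x
    obtain ⟨x', hx', hxx⟩ := this x.2
    have : x' = x := Subtype.ext hxx
    rwa [this] at hx'
  let e := MonoidHom.ofInjective hj
  let r : C →* Q := (MonoidHom.fst Q A).comp
    (e.symm.toMonoidHom.comp (hΦΘ.hom.codRestrict j.range hrange))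
  have hr : ∀ (x : C) (z : Q × A), Φ (Θ x) = j z → r x = z.1 := by
    intro x z hz
    have : (hΦΘ.hom.codRestrict j.range hrange) x = e z := by
      apply Subtype.ext
      exact hz
    simp only [r, MonoidHom.comp_apply, this]
    simp
  obtain ⟨R, hR, hRr⟩ := MulOn.exists_of_hom r
  refine ⟨R, hR, fun a ha => ?_, fun _ => ?_⟩
  · have := hRr ⟨a, le_sup_left (a := A) ha⟩
    rw [this]
    exact hr ⟨a, _⟩ _ (hΦA ⟨a, ha⟩)
  · have := hRr ⟨l, le_sup_right (a := A) (Subgroup.subset_closure rfl)⟩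
    rw [this]
    exact hr ⟨l, _⟩ _ (h3 ())
end

/-- The Hopf step: any generating family of the right size of a relatively free extension is
relatively free. -/
theorem FreeOver.hopf {α : Type} {k : ℕ} {A : Subgroup (FreeGroup α)} (hA : A.FG)
    {c d : Fin k → FreeGroup α} (hc : FreeOver A c)
    (hcd : A ⊔ Subgroup.closure (Set.range c) = A ⊔ Subgroup.closure (Set.range d)) :
    FreeOver A d := by
  obtain ⟨Φ, h1, h2, h3⟩ := hc (FreeGroup α) id (fun _ _ _ _ => rfl) d
  set B := A ⊔ Subgroup.closure (Set.range c) with hB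
  have hdB : ∀ i, d i ∈ B := fun i => by rw [hcd]; exact mem_sup_gen A d i
  have hcB : ∀ i, c i ∈ B := fun i => mem_sup_gen A c i
  have hAB : A ≤ B := le_sup_left
  have hBFG : B.FG := hA.sup ((Subgroup.fg_iff _).mpr ⟨_, rfl, Set.finite_range c⟩)
  haveI : Group.FG B := (Group.fg_iff_subgroup_fg B).mpr hBFG
  have hmem : ∀ x : B, h1.hom x ∈ B := by
    have : B ≤ (B.comap h1.hom).map B.subtype := by
      conv_lhs => rw [hB]
      rw [sup_le_iff, Subgroup.closure_le]
      constructor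
      · intro a ha
        exact ⟨⟨a, hAB ha⟩, by simpa [h2 a ha] using hAB ha, rfl⟩
      · rintro _ ⟨i, rfl⟩
        exact ⟨⟨c i, hcB i⟩, by simpa [h3 i] using hdB i, rfl⟩
    intro x
    obtain ⟨x', hx', hxx⟩ := this x.2
    have : x' = x := Subtype.ext hxx
    rwa [this] at hx'
  let f : B →* B := h1.hom.codRestrict B hmem
  have hfA : ∀ a (ha : a ∈ A), f ⟨a, hAB ha⟩ = ⟨a, hAB ha⟩ := fun a ha => Subtype.ext (h2 a ha)
  have hfc : ∀ i, f ⟨c i, hcB i⟩ = ⟨d i, hdB i⟩ := fun i => Subtype.ext (h3 i)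
  have hsurj : Surjective f := by
    have : B ≤ f.range.map B.subtype := by
      conv_lhs => rw [hcd]
      rw [sup_le_iff, Subgroup.closure_le]
      constructor
      · intro a ha
        exact ⟨⟨a, hAB ha⟩, ⟨_, hfA a ha⟩, rfl⟩
      · rintro _ ⟨i, rfl⟩
        exact ⟨⟨d i, hdB i⟩, ⟨_, hfc i⟩, rfl⟩
    intro x
    obtain ⟨x', hx', hxx⟩ := this x.2
    have : x' = x := Subtype.ext hxx
    rwa [this] at hx'
  have hinj : Injective f := by
    refine MTCoh.hopf ?_ f hsurj
    intro b hb
    obtain ⟨Q, i1, i2, ρ, hρ⟩ := freeGroup_resFin b.1 (fun h => hb (Subtype.ext h))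
    exact ⟨Q, i1, i2, ρ.comp B.subtype, hρ⟩
  let e : B ≃* B := MulEquiv.ofBijective f ⟨hinj, hsurj⟩
  intro Q _ φ hφ y
  obtain ⟨Φ', h1', h2', h3'⟩ := hc Q φ hφ y
  obtain ⟨R, hR, hRr⟩ := MulOn.exists_of_hom (h1'.hom.comp e.symm.toMonoidHom)
  change MulOn B R at hR
  refine ⟨R, by rwa [← hcd], fun a ha => ?_, fun i => ?_⟩
  · have := hRr ⟨a, hAB ha⟩
    rw [this]
    have h : e.symm ⟨a, hAB ha⟩ = ⟨a, hAB ha⟩ := by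
      rw [MulEquiv.symm_apply_eq]; exact (hfA a ha).symm
    simp [h, h2' a ha]
  · have := hRr ⟨d i, hdB i⟩
    rw [this]
    have h : e.symm ⟨d i, hdB i⟩ = ⟨c i, hcB i⟩ := by
      rw [MulEquiv.symm_apply_eq]; exact (hfc i).symm
    simp [h, h3' i]

end MTCoh

namespace MTCoh

open Function

set_option linter.unusedSectionVars false

/-! ### Labelled graphs -/

section
variable {α : Type} [DecidableEq α]

/-- Walks in a labelled graph, with their labels. -/
inductive Walk (E : Finset (ℕ × α × ℕ)) : ℕ → FreeGroup α → ℕ → Prop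
  | nil (u : ℕ) : Walk E u 1 u
  | fwd {u v w : ℕ} {g : FreeGroup α} {x : α} : Walk E u g v → (v, x, w) ∈ E →
      Walk E u (g * FreeGroup.of x) w
  | bwd {u v w : ℕ} {g : FreeGroup α} {x : α} : Walk E u g v → (w, x, v) ∈ E →
      Walk E u (g * (FreeGroup.of x)⁻¹) w

/-- The map on edges induced by a map on vertices. -/
def emap (φ : ℕ → ℕ) (e : ℕ × α × ℕ) : ℕ × α × ℕ := (φ e.1, e.2.1, φ e.2.2)

/-- Merging `w` into `v`. -/
def mg (v w : ℕ) : ℕ → ℕ := fun n => if n = w then v else n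

namespace Walk
variable {E E' : Finset (ℕ × α × ℕ)} {u v w : ℕ} {g h : FreeGroup α}

theorem trans (h1 : Walk E u g v) (h2 : Walk E v h w) : Walk E u (g * h) w := by
  induction h2 with
  | nil => simpa using h1
  | fwd _ he ih => rw [← mul_assoc]; exact ih.fwd he
  | bwd _ he ih => rw [← mul_assoc]; exact ih.bwd he

theorem symm (h1 : Walk E u g v) : Walk E v g⁻¹ u := by
  induction h1 with
  | nil => simpa using Walk.nil _
  | fwd _ he ih =>
    rw [mul_inv_rev]
    have := ((Walk.nil _).bwd he).trans ih
    simpa using this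
  | bwd _ he ih =>
    rw [mul_inv_rev]
    have := ((Walk.nil _).fwd he).trans ih
    simpa using this

theorem mono (hE : E ⊆ E') (h1 : Walk E u g v) : Walk E' u g v := by
  induction h1 with
  | nil => exact Walk.nil _
  | fwd _ he ih => exact ih.fwd (hE he)
  | bwd _ he ih => exact ih.bwd (hE he)

theorem map (φ : ℕ → ℕ) (h1 : Walk E u g v) : Walk (E.image (emap φ)) (φ u) g (φ v) := by
  induction h1 with
  | nil => exact Walk.nil _
  | fwd _ he ih => exact ih.fwd (Finset.mem_image_of_mem (emap φ) he)
  | bwd _ he ih => exact ih.bwd (Finset.mem_image_of_mem (emap φ) he)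

theorem bound {p : ℕ → FreeGroup α} {S : Subgroup (FreeGroup α)}
    (hp : ∀ e ∈ E, p e.1 * FreeGroup.of e.2.1 * (p e.2.2)⁻¹ ∈ S) (h1 : Walk E u g v) :
    p u * g * (p v)⁻¹ ∈ S := by
  induction h1 with
  | nil => simp
  | @fwd v w g x _ he ih =>
    have := mul_mem ih (hp _ he)
    convert this using 1
    group
  | @bwd v w g x _ he ih =>
    have := mul_mem ih (inv_mem (hp _ he))
    convert this using 1
    simp only
    group

theorem crossing {S : Finset ℕ} (h1 : Walk E u g v) (hu : u ∈ S) (hv : v ∉ S) :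
    ∃ e ∈ E, (e.1 ∈ S ∧ e.2.2 ∉ S) ∨ (e.1 ∉ S ∧ e.2.2 ∈ S) := by
  induction h1 with
  | nil => exact absurd hu hv
  | @fwd v w g x _ he ih =>
    by_cases h : v ∈ S
    · exact ⟨_, he, Or.inl ⟨h, hv⟩⟩
    · exact ih h
  | @bwd v w g x _ he ih =>
    by_cases h : v ∈ S
    · exact ⟨_, he, Or.inr ⟨hv, h⟩⟩
    · exact ih h

theorem mem_closed {V : Finset ℕ} (hE : ∀ e ∈ E, e.1 ∈ V ∧ e.2.2 ∈ V) (h1 : Walk E u g v)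
    (hu : u ∈ V) : v ∈ V := by
  induction h1 with
  | nil => exact hu
  | fwd _ he ih => exact (hE _ he).2
  | bwd _ he ih => exact (hE _ he).1
end Walk

/-- The subgroup of labels of closed walks at `o`. -/
def pi1 (E : Finset (ℕ × α × ℕ)) (o : ℕ) : Subgroup (FreeGroup α) where
  carrier := {g | Walk E o g o}
  mul_mem' h1 h2 := Walk.trans h1 h2
  one_mem' := Walk.nil o
  inv_mem' h := Walk.symm h

theorem mem_pi1 {E : Finset (ℕ × α × ℕ)} {o : ℕ} {g : FreeGroup α} :
    g ∈ pi1 E o ↔ Walk E o g o := Iff.rfl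

theorem pi1_mono {E E' : Finset (ℕ × α × ℕ)} (h : E ⊆ E') (o : ℕ) : pi1 E o ≤ pi1 E' o :=
  fun _ hg => Walk.mono h hg

theorem pi1_empty (o : ℕ) : pi1 (∅ : Finset (ℕ × α × ℕ)) o = ⊥ := by
  rw [Subgroup.eq_bot_iff_forall]
  intro g hg
  have := Walk.bound (p := fun _ => 1) (S := ⊥) (by simp) hg
  simpa using this

theorem pi1_merge {E : Finset (ℕ × α × ℕ)} {V : Finset ℕ} {o v w : ℕ}
    (hE : ∀ e ∈ E, e.1 ∈ V ∧ e.2.2 ∈ V) {p : ℕ → FreeGroup α}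
    (hp : ∀ u ∈ V, Walk E o (p u) u) (ho : o ∈ V) (hv : v ∈ V) (hw : w ∈ V) :
    pi1 (E.image (emap (mg v w))) (mg v w o) =
      pi1 E o ⊔ Subgroup.closure {p v * (p w)⁻¹} := by
  set S := pi1 E o ⊔ Subgroup.closure {p v * (p w)⁻¹} with hS
  have hl : p v * (p w)⁻¹ ∈ S := le_sup_right (a := pi1 E o) (Subgroup.subset_closure rfl)
  have hE1 : pi1 E o ≤ S := le_sup_left
  apply le_antisymm
  · intro g hg
    have hε : ∀ n, ∃ ε ∈ S, p (mg v w n) = ε * p n := by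
      intro n
      unfold mg
      split_ifs with h
      · subst h
        exact ⟨_, hl, by group⟩
      · exact ⟨1, one_mem _, by simp⟩
    have := Walk.bound (p := p) (S := S) ?_ hg
    · obtain ⟨ε, hεS, he⟩ := hε o
      have hpo : p o ∈ S := hE1 (hp o ho)
      rw [he] at this
      have hk : ε * p o ∈ S := mul_mem hεS hpo
      have := mul_mem (mul_mem (inv_mem hk) this) hk
      convert this using 1
      group
    · intro e he
      rw [Finset.mem_image] at he
      obtain ⟨e', he', rfl⟩ := he
      obtain ⟨ε, hεS, h1⟩ := hε e'.1
      obtain ⟨δ, hδS, h2⟩ := hε e'.2.2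
      simp only [emap]
      rw [h1, h2]
      have h3 : p e'.1 * FreeGroup.of e'.2.1 * (p e'.2.2)⁻¹ ∈ S :=
        hE1 (((hp _ (hE _ he').1).fwd he').trans (hp _ (hE _ he').2).symm)
      have := mul_mem (mul_mem hεS h3) (inv_mem hδS)
      convert this using 1
      group
  · rw [hS, sup_le_iff, Subgroup.closure_le, Set.singleton_subset_iff]
    constructor
    · intro g hg
      exact Walk.map _ hg
    · have h1 := (hp v hv).map (mg v w)
      have h2 := (hp w hw).map (mg v w)
      have : mg v w v = mg v w w := by simp [mg]
      rw [this] at h1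
      exact h1.trans h2.symm

theorem pi1_hair {E : Finset (ℕ × α × ℕ)} {V : Finset ℕ} {o u n : ℕ} {x : α} {e : ℕ × α × ℕ}
    (hE : ∀ e ∈ E, e.1 ∈ V ∧ e.2.2 ∈ V) (hr : ∀ u ∈ V, ∃ g, Walk E o g u)
    (ho : o ∈ V) (hu : u ∈ V) (hn : n ∉ V) (he : e = (u, x, n) ∨ e = (n, x, u)) :
    pi1 (insert e E) o = pi1 E o := by
  apply le_antisymm _ (pi1_mono (Finset.subset_insert _ _) o)
  choose! p hp using hr
  have hun : u ≠ n := fun h => hn (h ▸ hu)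
  have hon : o ≠ n := fun h => hn (h ▸ ho)
  intro g hg
  rcases he with rfl | rfl
  · have := Walk.bound (p := Function.update p n (p u * FreeGroup.of x)) (S := pi1 E o) ?_ hg
    · rw [Function.update_of_ne hon] at this
      have h1 : p o ∈ pi1 E o := hp o ho
      have := mul_mem (mul_mem (inv_mem h1) this) h1
      convert this using 1
      group
    · intro e he
      rw [Finset.mem_insert] at he
      rcases he with rfl | he
      · simp [hun]
      · obtain ⟨h1, h2⟩ := hE e he
        have h1n : e.1 ≠ n := fun h => hn (h ▸ h1)
        have h2n : e.2.2 ≠ n := fun h => hn (h ▸ h2)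
        rw [Function.update_of_ne h1n, Function.update_of_ne h2n]
        exact ((hp _ h1).fwd he).trans (hp _ h2).symm
  · have := Walk.bound (p := Function.update p n (p u * (FreeGroup.of x)⁻¹)) (S := pi1 E o) ?_ hg
    · rw [Function.update_of_ne hon] at this
      have h1 : p o ∈ pi1 E o := hp o ho
      have := mul_mem (mul_mem (inv_mem h1) this) h1
      convert this using 1
      group
    · intro e he
      rw [Finset.mem_insert] at he
      rcases he with rfl | he
      · simp [hun]
      · obtain ⟨h1, h2⟩ := hE e he
        have h1n : e.1 ≠ n := fun h => hn (h ▸ h1)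
        have h2n : e.2.2 ≠ n := fun h => hn (h ▸ h2)
        rw [Function.update_of_ne h1n, Function.update_of_ne h2n]
        exact ((hp _ h1).fwd he).trans (hp _ h2).symm

/-! ### Graph pairs -/

/-- A pair `X ⊆ Z` of finite connected labelled graphs with a common base point. -/
structure GP (α : Type) where
  VX : Finset ℕ
  VZ : Finset ℕ
  EX : Finset (ℕ × α × ℕ)
  EZ : Finset (ℕ × α × ℕ)
  o : ℕ
  hV : VX ⊆ VZ
  hE : EX ⊆ EZ
  ho : o ∈ VX
  hEX : ∀ e ∈ EX, e.1 ∈ VX ∧ e.2.2 ∈ VX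
  hEZ : ∀ e ∈ EZ, e.1 ∈ VZ ∧ e.2.2 ∈ VZ
  rX : ∀ v ∈ VX, ∃ g, Walk EX o g v
  rZ : ∀ v ∈ VZ, ∃ g, Walk EZ o g v

namespace GP

/-- Subgroup of the small graph. -/
def A (G : GP α) : Subgroup (FreeGroup α) := pi1 G.EX G.o
/-- Subgroup of the large graph. -/
def B (G : GP α) : Subgroup (FreeGroup α) := pi1 G.EZ G.o
/-- Number of new edges. -/
def nE (G : GP α) : ℕ := (G.EZ \ G.EX).card
/-- Number of new vertices. -/
def nV (G : GP α) : ℕ := (G.VZ \ G.VX).card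

theorem A_le_B (G : GP α) : G.A ≤ G.B := pi1_mono G.hE _

/-- Merge `w` into `v`. -/
def merge (G : GP α) (v w : ℕ) : GP α where
  VX := G.VX.image (mg v w)
  VZ := G.VZ.image (mg v w)
  EX := G.EX.image (emap (mg v w))
  EZ := G.EZ.image (emap (mg v w))
  o := mg v w G.o
  hV := Finset.image_subset_image G.hV
  hE := Finset.image_subset_image G.hE
  ho := Finset.mem_image_of_mem _ G.ho
  hEX := by
    intro e he
    obtain ⟨e', he', rfl⟩ := Finset.mem_image.mp he
    exact ⟨Finset.mem_image_of_mem _ (G.hEX _ he').1, Finset.mem_image_of_mem _ (G.hEX _ he').2⟩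
  hEZ := by
    intro e he
    obtain ⟨e', he', rfl⟩ := Finset.mem_image.mp he
    exact ⟨Finset.mem_image_of_mem _ (G.hEZ _ he').1, Finset.mem_image_of_mem _ (G.hEZ _ he').2⟩
  rX := by
    intro v hv
    obtain ⟨v', hv', rfl⟩ := Finset.mem_image.mp hv
    obtain ⟨g, hg⟩ := G.rX v' hv'
    exact ⟨g, hg.map _⟩
  rZ := by
    intro v hv
    obtain ⟨v', hv', rfl⟩ := Finset.mem_image.mp hv
    obtain ⟨g, hg⟩ := G.rZ v' hv'
    exact ⟨g, hg.map _⟩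

theorem image_mg_of_notMem {V : Finset ℕ} {v w : ℕ} (hw : w ∉ V) : V.image (mg v w) = V := by
  conv_rhs => rw [← Finset.image_id (s := V)]
  refine Finset.image_congr ?_
  intro n hn
  have : n ≠ w := fun h => hw (h ▸ hn)
  simp [mg, this]

theorem image_mg_of_mem {V : Finset ℕ} {v w : ℕ} (hv : v ∈ V) (hvw : v ≠ w) :
    V.image (mg v w) = V.erase w := by
  ext n
  simp only [Finset.mem_image, Finset.mem_erase, mg]
  constructor
  · rintro ⟨m, hm, rfl⟩
    split_ifs with h
    · exact ⟨hvw, hv⟩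
    · exact ⟨h, hm⟩
  · rintro ⟨h1, h2⟩
    exact ⟨n, h2, by simp [h1]⟩

theorem image_emap_of_notMem {V : Finset ℕ} {E : Finset (ℕ × α × ℕ)} {v w : ℕ} (hw : w ∉ V)
    (hE : ∀ e ∈ E, e.1 ∈ V ∧ e.2.2 ∈ V) : E.image (emap (mg v w)) = E := by
  conv_rhs => rw [← Finset.image_id (s := E)]
  refine Finset.image_congr ?_
  intro e he
  have h1 : e.1 ≠ w := fun h => hw (h ▸ (hE e he).1)
  have h2 : e.2.2 ≠ w := fun h => hw (h ▸ (hE e he).2)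
  simp [emap, mg, h1, h2]

theorem nE_merge_le (G : GP α) (v w : ℕ) : (G.merge v w).nE ≤ G.nE := by
  unfold nE
  refine le_trans (Finset.card_le_card ?_)
    (Finset.card_image_le (f := emap (mg v w)) (s := G.EZ \ G.EX))
  intro e he
  simp only [merge, Finset.mem_sdiff, Finset.mem_image] at he ⊢
  obtain ⟨⟨e', he', rfl⟩, hne⟩ := he
  exact ⟨e', ⟨he', fun h => hne ⟨e', h, rfl⟩⟩, rfl⟩

theorem nE_merge_lt (G : GP α) {v w : ℕ} {e1 e2 : ℕ × α × ℕ} (h1 : e1 ∈ G.EZ) (h2 : e2 ∈ G.EZ)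
    (h12 : e1 ≠ e2) (hm : emap (mg v w) e1 = emap (mg v w) e2) (hn : e2 ∉ G.EX) :
    (G.merge v w).nE + 1 ≤ G.nE := by
  unfold nE
  have hmem : e2 ∈ G.EZ \ G.EX := Finset.mem_sdiff.mpr ⟨h2, hn⟩
  rw [← Finset.card_erase_add_one hmem]
  refine Nat.add_le_add_right (le_trans (Finset.card_le_card ?_)
    (Finset.card_image_le (f := emap (mg v w)) (s := (G.EZ \ G.EX).erase e2))) 1
  intro e he
  simp only [merge, Finset.mem_sdiff, Finset.mem_image, Finset.mem_erase] at he ⊢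
  obtain ⟨⟨e', he', rfl⟩, hne⟩ := he
  by_cases h : e' = e2
  · subst h
    exact ⟨e1, ⟨h12, h1, fun h => hne ⟨e1, h, hm⟩⟩, hm⟩
  · exact ⟨e', ⟨h, he', fun h => hne ⟨e', h, rfl⟩⟩, rfl⟩

theorem nV_merge_new (G : GP α) {v w : ℕ} (hv : v ∈ G.VZ) (hw : w ∈ G.VZ) (hvw : v ≠ w)
    (hwX : w ∉ G.VX) : (G.merge v w).nV + 1 = G.nV := by
  unfold nV
  simp only [merge]
  rw [image_mg_of_notMem hwX, image_mg_of_mem hv hvw, Finset.erase_sdiff_comm,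
    Finset.card_erase_add_one (Finset.mem_sdiff.mpr ⟨hw, hwX⟩)]

theorem nV_merge_old (G : GP α) {v w : ℕ} (hv : v ∈ G.VX) (hvw : v ≠ w)
    (hwX : w ∈ G.VX) : (G.merge v w).nV = G.nV := by
  unfold nV
  simp only [merge]
  rw [image_mg_of_mem hv hvw, image_mg_of_mem (G.hV hv) hvw]
  congr 1
  ext n
  simp only [Finset.mem_sdiff, Finset.mem_erase]
  constructor
  · rintro ⟨⟨h1, h2⟩, h3⟩
    exact ⟨h2, fun h => h3 ⟨h1, h⟩⟩
  · rintro ⟨h1, h2⟩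
    exact ⟨⟨fun h => h2 (h ▸ hwX), h1⟩, fun h => h2 h.2⟩

theorem A_merge_new (G : GP α) {v w : ℕ} (hwX : w ∉ G.VX) : (G.merge v w).A = G.A := by
  unfold A
  simp only [merge]
  have : mg v w G.o = G.o := by
    have : G.o ≠ w := fun h => hwX (h ▸ G.ho)
    simp [mg, this]
  rw [image_emap_of_notMem hwX G.hEX, this]

theorem A_merge_old (G : GP α) {v w : ℕ} (hv : v ∈ G.VX) (hw : w ∈ G.VX) {p : ℕ → FreeGroup α}
    (hp : ∀ u ∈ G.VX, Walk G.EX G.o (p u) u) :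
    (G.merge v w).A = G.A ⊔ Subgroup.closure {p v * (p w)⁻¹} :=
  pi1_merge G.hEX hp G.ho hv hw

theorem B_merge (G : GP α) {v w : ℕ} (hv : v ∈ G.VZ) (hw : w ∈ G.VZ) {p : ℕ → FreeGroup α}
    (hp : ∀ u ∈ G.VZ, Walk G.EZ G.o (p u) u) :
    (G.merge v w).B = G.B ⊔ Subgroup.closure {p v * (p w)⁻¹} :=
  pi1_merge G.hEZ hp (G.hV G.ho) hv hw

/-- Add a hair to `Z`. -/
def hair (G : GP α) (e : ℕ × α × ℕ) (u n : ℕ) (hu : u ∈ G.VZ)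
    (he : (e.1 = u ∧ e.2.2 = n) ∨ (e.1 = n ∧ e.2.2 = u)) : GP α where
  VX := G.VX
  VZ := insert n G.VZ
  EX := G.EX
  EZ := insert e G.EZ
  o := G.o
  hV := G.hV.trans (Finset.subset_insert _ _)
  hE := G.hE.trans (Finset.subset_insert _ _)
  ho := G.ho
  hEX := G.hEX
  hEZ := by
    intro e' he'
    rw [Finset.mem_insert] at he'
    rcases he' with rfl | he'
    · rcases he with ⟨h1, h2⟩ | ⟨h1, h2⟩ <;> rw [h1, h2] <;> simp [hu]
    · exact ⟨Finset.mem_insert_of_mem (G.hEZ _ he').1, Finset.mem_insert_of_mem (G.hEZ _ he').2⟩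
  rX := G.rX
  rZ := by
    intro v hv
    rw [Finset.mem_insert] at hv
    rcases hv with rfl | hv
    · obtain ⟨g, hg⟩ := G.rZ u hu
      have hg' := hg.mono (Finset.subset_insert e G.EZ)
      rcases e with ⟨a, x, b⟩
      simp only at he
      rcases he with ⟨rfl, rfl⟩ | ⟨rfl, rfl⟩
      · exact ⟨_, hg'.fwd (Finset.mem_insert_self _ _)⟩
      · exact ⟨_, hg'.bwd (Finset.mem_insert_self _ _)⟩
    · obtain ⟨g, hg⟩ := G.rZ v hv
      exact ⟨g, hg.mono (Finset.subset_insert _ _)⟩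

theorem B_hair (G : GP α) (e : ℕ × α × ℕ) (u n : ℕ) (hu : u ∈ G.VZ)
    (he : (e.1 = u ∧ e.2.2 = n) ∨ (e.1 = n ∧ e.2.2 = u)) (hn : n ∉ G.VZ) :
    (G.hair e u n hu he).B = G.B := by
  rcases e with ⟨a, x, b⟩
  refine pi1_hair (x := x) G.hEZ G.rZ (G.hV G.ho) hu hn ?_
  simp only at he
  rcases he with ⟨rfl, rfl⟩ | ⟨rfl, rfl⟩ <;> simp

theorem count_hair (G : GP α) (e : ℕ × α × ℕ) (u n : ℕ) (hu : u ∈ G.VZ)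
    (he : (e.1 = u ∧ e.2.2 = n) ∨ (e.1 = n ∧ e.2.2 = u)) (hn : n ∉ G.VZ) :
    (G.hair e u n hu he).nE = G.nE + 1 ∧ (G.hair e u n hu he).nV = G.nV + 1 := by
  have heZ : e ∉ G.EZ := by
    intro h
    have := G.hEZ e h
    rcases he with ⟨h1, h2⟩ | ⟨h1, h2⟩
    · exact hn (h2 ▸ this.2)
    · exact hn (h1 ▸ this.1)
  have heX : e ∉ G.EX := fun h => heZ (G.hE h)
  have hnX : n ∉ G.VX := fun h => hn (G.hV h)
  unfold nE nV
  simp only [hair]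
  rw [Finset.insert_sdiff_of_notMem _ heX, Finset.insert_sdiff_of_notMem _ hnX,
    Finset.card_insert_of_notMem (by simp [heZ]), Finset.card_insert_of_notMem (by simp [hn])]
  exact ⟨rfl, rfl⟩

theorem exists_path (g : FreeGroup α) (G : GP α) :
    ∃ (G' : GP α) (n : ℕ), G'.VX = G.VX ∧ G'.EX = G.EX ∧ G'.o = G.o ∧ G'.B = G.B ∧
      n ∈ G'.VZ ∧ Walk G'.EZ G'.o g n ∧ (n = G.o ∨ n ∉ G.VX) ∧
      G'.nE + G.nV = G.nE + G'.nV := by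
  have hg : g ∈ Subgroup.closure (Set.range (FreeGroup.of : α → FreeGroup α)) := by
    rw [FreeGroup.closure_range_of]; trivial
  induction hg using Subgroup.closure_induction_right with
  | one => exact ⟨G, G.o, rfl, rfl, rfl, rfl, G.hV G.ho, Walk.nil _, Or.inl rfl, rfl⟩
  | mul_right g _ y hy ih =>
    obtain ⟨x, rfl⟩ := hy
    obtain ⟨G', n, h1, h2, h3, h4, h5, h6, h7, h8⟩ := ih
    obtain ⟨n', hn'⟩ := Infinite.exists_notMem_finset G'.VZ
    let G'' := G'.hair (n, x, n') n n' h5 (Or.inl ⟨rfl, rfl⟩)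
    have hc := G'.count_hair (n, x, n') n n' h5 (Or.inl ⟨rfl, rfl⟩) hn'
    refine ⟨G'', n', h1, h2, h3, ?_, Finset.mem_insert_self _ _, ?_, Or.inr ?_, ?_⟩
    · rw [← h4]; exact G'.B_hair _ _ _ _ _ hn'
    · exact (h6.mono (Finset.subset_insert _ _)).fwd (Finset.mem_insert_self _ _)
    · rw [← h1]; exact fun h => hn' (G'.hV h)
    · simp only [G'']; omega
  | mul_inv_cancel g _ y hy ih =>
    obtain ⟨x, rfl⟩ := hy
    obtain ⟨G', n, h1, h2, h3, h4, h5, h6, h7, h8⟩ := ih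
    obtain ⟨n', hn'⟩ := Infinite.exists_notMem_finset G'.VZ
    let G'' := G'.hair (n', x, n) n n' h5 (Or.inr ⟨rfl, rfl⟩)
    have hc := G'.count_hair (n', x, n) n n' h5 (Or.inr ⟨rfl, rfl⟩) hn'
    refine ⟨G'', n', h1, h2, h3, ?_, Finset.mem_insert_self _ _, ?_, Or.inr ?_, ?_⟩
    · rw [← h4]; exact G'.B_hair _ _ _ _ _ hn'
    · exact (h6.mono (Finset.subset_insert _ _)).bwd (Finset.mem_insert_self _ _)
    · rw [← h1]; exact fun h => hn' (G'.hV h)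
    · simp only [G'']; omega

theorem exists_wedge (g : FreeGroup α) (G : GP α) :
    ∃ G' : GP α, G'.VX = G.VX ∧ G'.EX = G.EX ∧ G'.o = G.o ∧
      G'.B = G.B ⊔ Subgroup.closure {g} ∧ G'.nE + G.nV ≤ G.nE + G'.nV + 1 := by
  obtain ⟨G', n, h1, h2, h3, h4, h5, h6, h7, h8⟩ := exists_path g G
  by_cases hno : n = G.o
  · subst hno
    refine ⟨G', h1, h2, h3, ?_, by omega⟩
    rw [h4, eq_comm, sup_eq_left, Subgroup.closure_le, Set.singleton_subset_iff, ← h4]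
    rw [← h3] at h6
    exact h6
  · have hnX : n ∉ G'.VX := by rw [h1]; exact h7.resolve_left hno
    have hnX' : n ∉ G.VX := h7.resolve_left hno
    have hoV : G.o ∈ G'.VZ := by rw [← h3]; exact G'.hV G'.ho
    choose! p hp using G'.rZ
    let q : ℕ → FreeGroup α := Function.update (Function.update p G.o 1) n g
    have hq : ∀ u ∈ G'.VZ, Walk G'.EZ G'.o (q u) u := by
      intro u hu
      by_cases hun : u = n
      · subst hun; simpa [q] using h6
      · by_cases huo : u = G.o
        · subst huo
          simp only [q, Function.update_of_ne hun, Function.update_self]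
          rw [h3]
          exact Walk.nil _
        · simp only [q, Function.update_of_ne hun, Function.update_of_ne huo]
          exact hp u hu
    refine ⟨G'.merge G.o n, ?_, ?_, ?_, ?_, ?_⟩
    · simp only [merge]; rw [image_mg_of_notMem hnX, h1]
    · simp only [merge]; rw [image_emap_of_notMem hnX G'.hEX, h2]
    · simp only [merge, mg, h3]; simp
    · rw [B_merge G' hoV h5 hq, h4]
      congr 1
      have : q G.o * (q n)⁻¹ = g⁻¹ := by
        simp [q, Function.update_of_ne (Ne.symm hno)]
      rw [this, Subgroup.closure_singleton_inv]
    · have e1 := G'.nE_merge_le G.o n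
      have e2 := G'.nV_merge_new hoV h5 (Ne.symm hno) hnX
      omega

theorem exists_wedge_list (l : List (FreeGroup α)) (G : GP α) :
    ∃ G' : GP α, G'.VX = G.VX ∧ G'.EX = G.EX ∧ G'.o = G.o ∧
      G'.B = G.B ⊔ Subgroup.closure {g | g ∈ l} ∧ G'.nE + G.nV ≤ G.nE + G'.nV + l.length := by
  induction l with
  | nil => exact ⟨G, rfl, rfl, rfl, by simp, by simp⟩
  | cons g l ih =>
    obtain ⟨G', h1, h2, h3, h4, h5⟩ := ih
    obtain ⟨G'', k1, k2, k3, k4, k5⟩ := exists_wedge g G'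
    refine ⟨G'', k1.trans h1, k2.trans h2, k3.trans h3, ?_, ?_⟩
    · rw [k4, h4, sup_assoc, ← Subgroup.closure_union]
      congr 2
      ext x
      simp
    · simp only [List.length_cons]; omega

/-- The pair `Z ⊆ Z`. -/
def diag (G : GP α) : GP α where
  VX := G.VZ
  VZ := G.VZ
  EX := G.EZ
  EZ := G.EZ
  o := G.o
  hV := subset_rfl
  hE := subset_rfl
  ho := G.hV G.ho
  hEX := G.hEZ
  hEZ := G.hEZ
  rX := G.rZ
  rZ := G.rZ

/-- The pair `pt ⊆ X`. -/
def ptX (G : GP α) : GP α where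
  VX := {G.o}
  VZ := G.VX
  EX := ∅
  EZ := G.EX
  o := G.o
  hV := by simpa using G.ho
  hE := by simp
  ho := by simp
  hEX := by simp
  hEZ := G.hEX
  rX := by
    intro v hv
    rw [Finset.mem_singleton] at hv
    subst hv
    exact ⟨1, Walk.nil _⟩
  rZ := G.rX

/-- The one point pair. -/
def pt : GP α where
  VX := {0}
  VZ := {0}
  EX := ∅
  EZ := ∅
  o := 0
  hV := by simp
  hE := by simp
  ho := by simp
  hEX := by simp
  hEZ := by simp
  rX := by
    intro v hv
    rw [Finset.mem_singleton] at hv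
    subst hv
    exact ⟨1, Walk.nil _⟩
  rZ := by
    intro v hv
    rw [Finset.mem_singleton] at hv
    subst hv
    exact ⟨1, Walk.nil _⟩

theorem exists_gp {A : Subgroup (FreeGroup α)} (hA : A.FG) {k : ℕ} (c : Fin k → FreeGroup α) :
    ∃ G : GP α, G.A = A ∧ G.B = A ⊔ Subgroup.closure (Set.range c) ∧ G.nE ≤ G.nV + k := by
  obtain ⟨S, hS⟩ := hA
  obtain ⟨G1, -, -, -, h4, -⟩ := exists_wedge_list S.toList (pt : GP α)
  have hB1 : G1.B = A := by
    have : (pt : GP α).B = ⊥ := pi1_empty 0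
    rw [h4, this, bot_sup_eq, ← hS]
    congr 1
    ext; simp
  obtain ⟨G2, k1, k2, k3, k4, k5⟩ := exists_wedge_list (List.ofFn c) G1.diag
  have e1 : G1.diag.nV = 0 := by simp [nV, diag]
  have e2 : G1.diag.nE = 0 := by simp [nE, diag]
  refine ⟨G2, ?_, ?_, ?_⟩
  · unfold GP.A
    rw [k2, k3]
    exact hB1
  · have : G1.diag.B = A := hB1
    rw [k4, this]
    congr 2
    ext; simp [List.mem_ofFn]
  · simp only [List.length_ofFn] at k5
    omega

end GP
end
end MTCoh

namespace MTCoh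

open Function

set_option linter.unusedSectionVars false

section
variable {α : Type} [DecidableEq α]

/-- Folded (deterministic) labelled graphs. -/
def Folded (E : Finset (ℕ × α × ℕ)) : Prop :=
  (∀ u x v w, (u, x, v) ∈ E → (u, x, w) ∈ E → v = w) ∧
  (∀ u x v w, (v, x, u) ∈ E → (w, x, u) ∈ E → v = w)

namespace GP

/-- Absorb an edge of `Z` leaving `X` into `X`. -/
def absorb (G : GP α) (e : ℕ × α × ℕ) (u n : ℕ) (hu : u ∈ G.VX) (heZ : e ∈ G.EZ)
    (he : (e.1 = u ∧ e.2.2 = n) ∨ (e.1 = n ∧ e.2.2 = u)) : GP α where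
  VX := insert n G.VX
  VZ := G.VZ
  EX := insert e G.EX
  EZ := G.EZ
  o := G.o
  hV := by
    rw [Finset.insert_subset_iff]
    refine ⟨?_, G.hV⟩
    rcases he with ⟨h1, h2⟩ | ⟨h1, h2⟩
    · rw [← h2]; exact (G.hEZ e heZ).2
    · rw [← h1]; exact (G.hEZ e heZ).1
  hE := by
    rw [Finset.insert_subset_iff]
    exact ⟨heZ, G.hE⟩
  ho := Finset.mem_insert_of_mem G.ho
  hEX := by
    intro e' he'
    rw [Finset.mem_insert] at he'
    rcases he' with rfl | he'
    · rcases he with ⟨h1, h2⟩ | ⟨h1, h2⟩ <;> rw [h1, h2] <;> simp [hu]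
    · exact ⟨Finset.mem_insert_of_mem (G.hEX _ he').1, Finset.mem_insert_of_mem (G.hEX _ he').2⟩
  hEZ := G.hEZ
  rX := by
    intro v hv
    rw [Finset.mem_insert] at hv
    rcases hv with rfl | hv
    · obtain ⟨g, hg⟩ := G.rX u hu
      have hg' := hg.mono (Finset.subset_insert e G.EX)
      rcases e with ⟨a, x, b⟩
      simp only at he
      rcases he with ⟨rfl, rfl⟩ | ⟨rfl, rfl⟩
      · exact ⟨_, hg'.fwd (Finset.mem_insert_self _ _)⟩
      · exact ⟨_, hg'.bwd (Finset.mem_insert_self _ _)⟩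
    · obtain ⟨g, hg⟩ := G.rX v hv
      exact ⟨g, hg.mono (Finset.subset_insert _ _)⟩
  rZ := G.rZ

theorem A_absorb (G : GP α) (e : ℕ × α × ℕ) (u n : ℕ) (hu : u ∈ G.VX) (heZ : e ∈ G.EZ)
    (he : (e.1 = u ∧ e.2.2 = n) ∨ (e.1 = n ∧ e.2.2 = u)) (hn : n ∉ G.VX) :
    (G.absorb e u n hu heZ he).A = G.A := by
  rcases e with ⟨a, x, b⟩
  refine pi1_hair (x := x) G.hEX G.rX G.ho hu hn ?_
  simp only at he
  rcases he with ⟨rfl, rfl⟩ | ⟨rfl, rfl⟩ <;> simp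

theorem count_absorb (G : GP α) (e : ℕ × α × ℕ) (u n : ℕ) (hu : u ∈ G.VX) (heZ : e ∈ G.EZ)
    (he : (e.1 = u ∧ e.2.2 = n) ∨ (e.1 = n ∧ e.2.2 = u)) (hn : n ∉ G.VX) :
    (G.absorb e u n hu heZ he).nE + 1 = G.nE ∧ (G.absorb e u n hu heZ he).nV + 1 = G.nV := by
  have hnZ : n ∈ G.VZ := (G.absorb e u n hu heZ he).hV (Finset.mem_insert_self _ _)
  have heX : e ∉ G.EX := by
    intro h
    have := G.hEX e h
    rcases he with ⟨h1, h2⟩ | ⟨h1, h2⟩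
    · exact hn (h2 ▸ this.2)
    · exact hn (h1 ▸ this.1)
  unfold nE nV
  simp only [absorb]
  rw [Finset.sdiff_insert, Finset.sdiff_insert,
    Finset.card_erase_add_one (Finset.mem_sdiff.mpr ⟨heZ, heX⟩),
    Finset.card_erase_add_one (Finset.mem_sdiff.mpr ⟨hnZ, hn⟩)]
  exact ⟨rfl, rfl⟩

open Classical in
theorem freeOver_base (G : GP α) (hVV : G.VZ = G.VX) (hF : Folded G.EZ)
    {p : ℕ → FreeGroup α} (hp : ∀ u ∈ G.VX, Walk G.EX G.o (p u) u) (hpo : p G.o = 1) :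
    FreeOver G.A (fun e : {e // e ∈ G.EZ \ G.EX} =>
      p e.1.1 * FreeGroup.of e.1.2.1 * (p e.1.2.2)⁻¹) := by
  intro Q _ φ hφ y
  let V := {n // n ∈ G.VZ}
  have key : ∀ x : α, ∃ σ : Equiv.Perm V, ∀ a b : V, (b.1, x, a.1) ∈ G.EZ → σ a = b := by
    intro x
    refine exists_perm_extend (fun a b : V => (b.1, x, a.1) ∈ G.EZ) ?_ ?_
    · intro a b b' h h'
      exact Subtype.ext (hF.2 _ _ _ _ h h')
    · intro a a' b h h'
      exact Subtype.ext (hF.1 _ _ _ _ h h')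
  choose σ hσ using key
  let K : ℕ × α × ℕ → Q := fun e =>
    if e ∈ G.EX then φ (p e.1 * FreeGroup.of e.2.1 * (p e.2.2)⁻¹)
    else if h : e ∈ G.EZ \ G.EX then y ⟨e, h⟩ else 1
  let act : α → Equiv.Perm (V × Q) := fun x =>
    Equiv.prodShear (σ x) (fun a => Equiv.mulLeft (K ((σ x a).1, x, a.1)))
  let ρ : FreeGroup α →* Equiv.Perm (V × Q) := FreeGroup.lift act
  have hρ : ∀ (x : α) (a b : V) (q : Q), (b.1, x, a.1) ∈ G.EZ →
      ρ (FreeGroup.of x) (a, q) = (b, K (b.1, x, a.1) * q) := by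
    intro x a b q hab
    simp only [ρ, FreeGroup.lift_apply_of, act, Equiv.prodShear_apply, Equiv.coe_mulLeft]
    rw [hσ x a b hab]
  have hρ' : ∀ (x : α) (a b : V) (q : Q), (b.1, x, a.1) ∈ G.EZ →
      ρ (FreeGroup.of x)⁻¹ (b, q) = (a, (K (b.1, x, a.1))⁻¹ * q) := by
    intro x a b q hab
    rw [map_inv, Equiv.Perm.inv_eq_iff_eq, hρ x a b _ hab, mul_inv_cancel_left]
  have hoZ : G.o ∈ G.VZ := G.hV G.ho
  have hA : ∀ e ∈ G.EX, p e.1 * FreeGroup.of e.2.1 * (p e.2.2)⁻¹ ∈ G.A := by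
    intro e he
    exact ((hp _ (G.hEX _ he).1).fwd he).trans (hp _ (G.hEX _ he).2).symm
  have hwalk : ∀ {u v : ℕ} {g : FreeGroup α}, Walk G.EX u g v → ∀ (hu : u ∈ G.VZ) (hv : v ∈ G.VZ)
      (q : Q), ρ g (⟨v, hv⟩, q) = (⟨u, hu⟩, φ (p u * g * (p v)⁻¹) * q) := by
    intro u v g hw
    induction hw with
    | nil => intro hu hv q; simp [hφ.one]
    | @fwd v w g x hw' he ih =>
      intro hu hw q
      have hv : v ∈ G.VZ := (G.hEZ _ (G.hE he)).1
      rw [map_mul, Equiv.Perm.mul_apply, hρ x ⟨w, hw⟩ ⟨v, hv⟩ q (G.hE he), ih hu hv]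
      have e1 : K (v, x, w) = φ (p v * FreeGroup.of x * (p w)⁻¹) := by
        simp only [K]; rw [if_pos he]
      have e2 := hφ _ (Walk.bound (S := G.A) hA hw') _ (hA _ he)
      simp only at e2
      rw [e1, ← mul_assoc, ← e2]
      congr 3
      group
    | @bwd v w g x hw' he ih =>
      intro hu hw q
      have hv : v ∈ G.VZ := (G.hEZ _ (G.hE he)).2
      rw [map_mul, Equiv.Perm.mul_apply, hρ' x ⟨v, hv⟩ ⟨w, hw⟩ q (G.hE he), ih hu hv]
      have e1 : K (w, x, v) = φ (p w * FreeGroup.of x * (p v)⁻¹) := by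
        simp only [K]; rw [if_pos he]
      have e2 := hφ _ (Walk.bound (S := G.A) hA hw') _ (inv_mem (hA _ he))
      rw [hφ.inv (hA _ he)] at e2
      simp only at e2
      rw [e1, ← mul_assoc, ← e2]
      congr 3
      group
  have hpu : ∀ (u : ℕ) (hu : u ∈ G.VZ) (q : Q),
      ρ (p u) (⟨u, hu⟩, q) = (⟨G.o, hoZ⟩, q) := by
    intro u hu q
    rw [hwalk (hp u (hVV ▸ hu)) hoZ hu q, hpo]
    simp [hφ.one]
  have hc : ∀ (e : {e // e ∈ G.EZ \ G.EX}) (q : Q),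
      ρ (p e.1.1 * FreeGroup.of e.1.2.1 * (p e.1.2.2)⁻¹) (⟨G.o, hoZ⟩, q)
        = (⟨G.o, hoZ⟩, y e * q) := by
    rintro ⟨⟨u, x, v⟩, he⟩ q
    have heZ := (Finset.mem_sdiff.mp he).1
    have heX := (Finset.mem_sdiff.mp he).2
    have hu := (G.hEZ _ heZ).1
    have hv := (G.hEZ _ heZ).2
    have e1 : ρ (p v)⁻¹ (⟨G.o, hoZ⟩, q) = (⟨v, hv⟩, q) := by
      rw [map_inv, Equiv.Perm.inv_eq_iff_eq, hpu]
    simp only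
    rw [map_mul, map_mul, Equiv.Perm.mul_apply, Equiv.Perm.mul_apply, e1,
      hρ x ⟨v, hv⟩ ⟨u, hu⟩ q heZ, hpu]
    have : K (u, x, v) = y ⟨(u, x, v), he⟩ := by
      simp only [K]
      rw [if_neg heX, dif_pos he]
    rw [this]
  let T : Subgroup (FreeGroup α) :=
    { carrier := {b | ∃ r : Q, ∀ q, ρ b (⟨G.o, hoZ⟩, q) = (⟨G.o, hoZ⟩, r * q)}
      mul_mem' := by
        rintro a b ⟨r, hr⟩ ⟨s, hs⟩
        refine ⟨r * s, fun q => ?_⟩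
        rw [map_mul, Equiv.Perm.mul_apply, hs, hr, mul_assoc]
      one_mem' := ⟨1, fun q => by simp⟩
      inv_mem' := by
        rintro a ⟨r, hr⟩
        refine ⟨r⁻¹, fun q => ?_⟩
        rw [map_inv, Equiv.Perm.inv_eq_iff_eq, hr, mul_inv_cancel_left] }
  have hT : G.A ⊔ Subgroup.closure (Set.range fun e : {e // e ∈ G.EZ \ G.EX} =>
      p e.1.1 * FreeGroup.of e.1.2.1 * (p e.1.2.2)⁻¹) ≤ T := by
    rw [sup_le_iff, Subgroup.closure_le]
    constructor
    · intro a ha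
      exact ⟨_, fun q => hwalk ha hoZ hoZ q⟩
    · rintro _ ⟨e, rfl⟩
      exact ⟨_, hc e⟩
  refine ⟨fun b => (ρ b (⟨G.o, hoZ⟩, 1)).2, ?_, ?_, ?_⟩
  · intro a ha b hb
    obtain ⟨r, hr⟩ := hT ha
    obtain ⟨s, hs⟩ := hT hb
    simp only [map_mul, Equiv.Perm.mul_apply, hr, hs]
    simp
  · intro a ha
    simp only [hwalk ha hoZ hoZ]
    simp [hpo]
  · intro e
    simp only [hc]
    simp

theorem freeOver_reindex {Γ ι κ : Type} [Group Γ] (e : κ ≃ ι) {A : Subgroup Γ} {c : ι → Γ}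
    (h : FreeOver A c) : FreeOver A (c ∘ e) := by
  intro Q _ φ hφ y
  obtain ⟨Φ, h1, h2, h3⟩ := h Q φ hφ (y ∘ e.symm)
  refine ⟨Φ, ?_, h2, fun i => ?_⟩
  · rwa [e.surjective.range_comp]
  · simp [h3]

theorem spanFree (N : ℕ) : ∀ G : GP α, G.nV = N → ∃ (m : ℕ) (c : Fin m → FreeGroup α),
    G.nE = G.nV + m ∧ G.B = G.A ⊔ Subgroup.closure (Set.range c) ∧
      (Folded G.EZ → FreeOver G.A c) := by
  induction N with
  | zero =>
    intro G hG
    have hVV : G.VZ = G.VX := by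
      apply Finset.Subset.antisymm _ G.hV
      rw [← Finset.sdiff_eq_empty_iff_subset, ← Finset.card_eq_zero]
      exact hG
    choose! p' hp' using G.rX
    let p := Function.update p' G.o 1
    have hpo : p G.o = 1 := by simp [p]
    have hp : ∀ u ∈ G.VX, Walk G.EX G.o (p u) u := by
      intro u hu
      by_cases h : u = G.o
      · subst h; rw [hpo]; exact Walk.nil _
      · simp only [p, Function.update_of_ne h]; exact hp' u hu
    let e : Fin (G.EZ \ G.EX).card ≃ {e // e ∈ G.EZ \ G.EX} := (Finset.equivFin _).symm
    let c := (fun e : {e // e ∈ G.EZ \ G.EX} =>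
      p e.1.1 * FreeGroup.of e.1.2.1 * (p e.1.2.2)⁻¹)
    refine ⟨_, c ∘ e, ?_, ?_, fun hF => freeOver_reindex e (freeOver_base G hVV hF hp hpo)⟩
    · rw [hG, zero_add]; rfl
    · rw [e.surjective.range_comp]
      apply le_antisymm
      · intro g hg
        have := Walk.bound (p := p) (S := G.A ⊔ Subgroup.closure (Set.range c)) ?_ hg
        · simpa [hpo] using this
        · intro e he
          by_cases heX : e ∈ G.EX
          · exact le_sup_left (a := G.A)
              (((hp _ (G.hEX _ heX).1).fwd heX).trans (hp _ (G.hEX _ heX).2).symm)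
          · exact mem_sup_gen G.A c ⟨e, Finset.mem_sdiff.mpr ⟨he, heX⟩⟩
      · rw [sup_le_iff, Subgroup.closure_le]
        refine ⟨G.A_le_B, ?_⟩
        rintro _ ⟨⟨e, he⟩, rfl⟩
        have heZ := (Finset.mem_sdiff.mp he).1
        have h1 := hp _ (hVV ▸ (G.hEZ _ heZ).1)
        have h2 := hp _ (hVV ▸ (G.hEZ _ heZ).2)
        exact ((h1.mono G.hE).fwd heZ).trans (h2.mono G.hE).symm
  | succ N ih =>
    intro G hG
    have hne : (G.VZ \ G.VX).Nonempty := by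
      rw [← Finset.card_pos]
      have : (G.VZ \ G.VX).card = N + 1 := hG
      omega
    obtain ⟨v, hv⟩ := hne
    rw [Finset.mem_sdiff] at hv
    obtain ⟨g, hg⟩ := G.rZ v hv.1
    obtain ⟨e, heZ, he⟩ := hg.crossing G.ho hv.2
    obtain ⟨u, n, hu, hn, hun⟩ : ∃ u n, u ∈ G.VX ∧ n ∉ G.VX ∧
        ((e.1 = u ∧ e.2.2 = n) ∨ (e.1 = n ∧ e.2.2 = u)) := by
      rcases he with ⟨h1, h2⟩ | ⟨h1, h2⟩
      · exact ⟨_, _, h1, h2, Or.inl ⟨rfl, rfl⟩⟩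
      · exact ⟨_, _, h2, h1, Or.inr ⟨rfl, rfl⟩⟩
    have hcount := G.count_absorb e u n hu heZ hun hn
    have hA := G.A_absorb e u n hu heZ hun hn
    obtain ⟨m, c, h1, h2, h3⟩ := ih (G.absorb e u n hu heZ hun) (by omega)
    rw [hA] at h2 h3
    exact ⟨m, c, by omega, h2, h3⟩

theorem fg_A (G : GP α) : G.A.FG := by
  obtain ⟨m, c, -, h2, -⟩ := spanFree _ G.ptX rfl
  have : G.ptX.A = ⊥ := pi1_empty _
  rw [this, bot_sup_eq] at h2
  have h3 : G.A = Subgroup.closure (Set.range c) := h2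
  rw [h3]
  exact (Subgroup.fg_iff _).mpr ⟨_, rfl, Set.finite_range c⟩

theorem exists_fold {E : Finset (ℕ × α × ℕ)} (h : ¬ Folded E) :
    ∃ e1 ∈ E, ∃ e2 ∈ E, ∃ v w : ℕ, e1 ≠ e2 ∧ v ≠ w ∧ Walk {e1, e2} v 1 w ∧
      emap (mg v w) e1 = emap (mg v w) e2 ∧ emap (mg w v) e1 = emap (mg w v) e2 ∧
      (∀ S : Finset ℕ, e1.1 ∈ S ∧ e1.2.2 ∈ S → v ∈ S) ∧
      (∀ S : Finset ℕ, e2.1 ∈ S ∧ e2.2.2 ∈ S → w ∈ S) := by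
  unfold Folded at h
  rw [not_and_or] at h
  push Not at h
  rcases h with ⟨u, x, v, w, h1, h2, h3⟩ | ⟨u, x, v, w, h1, h2, h3⟩
  · refine ⟨_, h1, _, h2, v, w, by simp [h3], h3, ?_, ?_, ?_, fun S hS => hS.2, fun S hS => hS.2⟩
    · have := ((Walk.nil (E := {(u, x, v), (u, x, w)}) v).bwd (w := u) (x := x) (by simp)).fwd
        (w := w) (x := x) (by simp)
      simpa using this
    · simp [emap, mg]
    · simp [emap, mg]
  · refine ⟨_, h1, _, h2, v, w, by simp [h3], h3, ?_, ?_, ?_, fun S hS => hS.1, fun S hS => hS.1⟩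
    · have := ((Walk.nil (E := {(v, x, u), (w, x, u)}) v).fwd (w := u) (x := x) (by simp)).bwd
        (w := w) (x := x) (by simp)
      simpa using this
    · simp [emap, mg]
    · simp [emap, mg]

end GP
end
end MTCoh

namespace MTCoh

open Function

set_option linter.unusedSectionVars false

section
variable {α : Type} [DecidableEq α]

/-- Admissible pairs of subgroups. -/
def Valid (Θ : FreeGroup α →* FreeGroup α) (B0 K A B : Subgroup (FreeGroup α)) : Prop :=
  A.map Θ ≤ B ∧ B0 ≤ B ∧ B ≤ K

/-- There is an admissible pair of relative rank at most `k`. -/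
def HasK (Θ : FreeGroup α →* FreeGroup α) (B0 K : Subgroup (FreeGroup α)) (k : ℕ) : Prop :=
  ∃ (A : Subgroup (FreeGroup α)) (c : Fin k → FreeGroup α), A.FG ∧
    Valid Θ B0 K A (A ⊔ Subgroup.closure (Set.range c))

theorem GP.B_merge_eq (G : GP α) {v w : ℕ} (hv : v ∈ G.VZ) (hw : w ∈ G.VZ)
    (h : Walk G.EZ v 1 w) : (G.merge v w).B = G.B := by
  choose! p hp using G.rZ
  rw [G.B_merge hv hw hp, sup_eq_left, Subgroup.closure_le, Set.singleton_subset_iff]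
  have := ((hp v hv).trans h).trans (hp w hw).symm
  rw [mul_one] at this
  exact this

theorem lemma1 {Θ : FreeGroup α →* FreeGroup α} (hΘ : Injective Θ)
    {B0 K : Subgroup (FreeGroup α)} (hK : K.map Θ ≤ K) {k : ℕ}
    (hmin : ∀ m < k, ¬ HasK Θ B0 K m) (x : ℕ) : ∀ (y : ℕ) (G : GP α), G.VX.card = x →
      G.VZ.card = y → G.nE ≤ G.nV + k → Valid Θ B0 K G.A G.B →
      ∃ c : Fin k → FreeGroup α, G.B = G.A ⊔ Subgroup.closure (Set.range c) ∧ FreeOver G.A c := by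
  induction x using Nat.strong_induction_on with
  | _ x ihx =>
  intro y
  induction y using Nat.strong_induction_on with
  | _ y ihy =>
  intro G hx hy hcount hval
  by_cases hF : Folded G.EZ
  · obtain ⟨m, c, h1, h2, h3⟩ := GP.spanFree _ G rfl
    have hmk : m = k := by
      by_contra hne
      refine hmin m (by omega) ⟨G.A, c, G.fg_A, ?_⟩
      rw [← h2]; exact hval
    subst hmk
    exact ⟨c, h2, h3 hF⟩
  obtain ⟨e1, he1, e2, he2, v, w, h12, hvw, hwalk, hm1, hm2, hS1, hS2⟩ := GP.exists_fold hF
  have hvZ : v ∈ G.VZ := hS1 _ (G.hEZ _ he1)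
  have hwZ : w ∈ G.VZ := hS2 _ (G.hEZ _ he2)
  have hwalkZ : Walk G.EZ v 1 w := hwalk.mono (by
    intro e he
    simp only [Finset.mem_insert, Finset.mem_singleton] at he
    rcases he with rfl | rfl <;> assumption)
  have caseA : ∀ v w e1 e2, v ∈ G.VZ → w ∈ G.VZ → v ≠ w → w ∉ G.VX → Walk G.EZ v 1 w →
      e1 ∈ G.EZ → e2 ∈ G.EZ → e1 ≠ e2 → e2 ∉ G.EX → emap (mg v w) e1 = emap (mg v w) e2 →
      ∃ c : Fin k → FreeGroup α,
        G.B = G.A ⊔ Subgroup.closure (Set.range c) ∧ FreeOver G.A c := by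
    intro v w e1 e2 hv hw hvw hwX hwalk he1 he2 h12 heX hm
    have hA := G.A_merge_new (v := v) hwX
    have hB := G.B_merge_eq hv hw hwalk
    have c1 := G.nE_merge_lt he1 he2 h12 hm heX
    have c2 := G.nV_merge_new hv hw hvw hwX
    have c3 : (G.merge v w).VX.card = x := by
      simp only [GP.merge]
      rw [GP.image_mg_of_notMem hwX, hx]
    have c4 : (G.merge v w).VZ.card < y := by
      simp only [GP.merge]
      rw [GP.image_mg_of_mem hv hvw, ← hy]
      exact Finset.card_erase_lt_of_mem hw
    have := ihy _ c4 (G.merge v w) c3 rfl (by omega) (by rw [hA, hB]; exact hval)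
    rwa [hA, hB] at this
  by_cases hwX : w ∉ G.VX
  · exact caseA v w e1 e2 hvZ hwZ hvw hwX hwalkZ he1 he2 h12
      (fun h => hwX (hS2 _ (G.hEX _ h))) hm1
  by_cases hvX : v ∉ G.VX
  · exact caseA w v e2 e1 hwZ hvZ hvw.symm hvX (by simpa using hwalkZ.symm) he2 he1 h12.symm
      (fun h => hvX (hS1 _ (G.hEX _ h))) hm2.symm
  rw [not_not] at hwX hvX
  have hB := G.B_merge_eq hvZ hwZ hwalkZ
  have cV := G.nV_merge_old hvX hvw hwX
  have cX : (G.merge v w).VX.card < x := by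
    simp only [GP.merge]
    rw [GP.image_mg_of_mem hvX hvw, ← hx]
    exact Finset.card_erase_lt_of_mem hwX
  choose! p hp using G.rX
  have hA := G.A_merge_old hvX hwX hp
  by_cases hboth : e1 ∈ G.EX ∧ e2 ∈ G.EX
  · -- both edges in `X`
    have hA' : (G.merge v w).A = G.A := by
      rw [hA, sup_eq_left, Subgroup.closure_le, Set.singleton_subset_iff]
      have hwX' : Walk G.EX v 1 w := hwalk.mono (by
        intro e he
        simp only [Finset.mem_insert, Finset.mem_singleton] at he
        rcases he with rfl | rfl
        · exact hboth.1
        · exact hboth.2)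
      have := ((hp v hvX).trans hwX').trans (hp w hwX).symm
      rw [mul_one] at this
      exact this
    have c1 := G.nE_merge_le v w
    have := ihx _ cX _ (G.merge v w) rfl rfl (by omega) (by rw [hA', hB]; exact hval)
    rwa [hA', hB] at this
  · -- exceptional case
    have c1 : (G.merge v w).nE + 1 ≤ G.nE := by
      by_cases h1 : e1 ∈ G.EX
      · exact G.nE_merge_lt he1 he2 h12 hm1 (fun h => hboth ⟨h1, h⟩)
      · exact G.nE_merge_lt he2 he1 h12.symm hm1.symm h1
    set l := p v * (p w)⁻¹ with hl
    have hlB : l ∈ G.B := by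
      have := (((hp v hvX).mono G.hE).trans hwalkZ).trans ((hp w hwX).mono G.hE).symm
      rw [mul_one] at this
      exact this
    obtain ⟨m, d, h1, h2, -⟩ := GP.spanFree _ (G.merge v w) rfl
    obtain ⟨G2, k1, k2, k3, k4, k5⟩ := GP.exists_wedge (Θ l) (G.merge v w)
    have hA2 : G2.A = (G.merge v w).A := by
      unfold GP.A
      rw [k2, k3]
    rw [hB] at k4 h2
    have hval2 : Valid Θ B0 K G2.A G2.B := by
      refine ⟨?_, ?_, ?_⟩
      · rw [hA2, hA, k4, Subgroup.map_sup]
        refine sup_le_sup hval.1 ?_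
        rw [MonoidHom.map_closure, Set.image_singleton]
      · rw [k4]; exact hval.2.1.trans le_sup_left
      · rw [k4, sup_le_iff, Subgroup.closure_le, Set.singleton_subset_iff]
        exact ⟨hval.2.2, hK ⟨l, hval.2.2 hlB, rfl⟩⟩
    obtain ⟨c2, hc2, hfree2⟩ := ihx _ cX _ G2 (by rw [k1]) rfl (by omega) hval2
    have hspan : G2.B = G2.A ⊔ Subgroup.closure
        (Set.range (Fin.cons (Θ l) d : Fin (m + 1) → FreeGroup α)) := by
      rw [sup_cons, k4, h2, hA2, sup_assoc, sup_assoc,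
        sup_comm (Subgroup.closure (Set.range d))]
    have hk : m + 1 = k := by
      by_contra hne
      refine hmin (m + 1) (by omega) ⟨G2.A, (Fin.cons (Θ l) d : Fin (m + 1) → FreeGroup α), G2.fg_A, ?_⟩
      rw [← hspan]; exact hval2
    subst hk
    have hf := hfree2.hopf G2.fg_A (hc2.symm.trans hspan)
    have hd := hf.tail
    have hΘl := hf.head
    rw [hA2, ← h2] at hΘl
    have hlA : FreeOver G.A (fun _ : Unit => l) := hΘl.descend Θ hΘ hval.1
    rw [hA2, hA] at hd
    refine ⟨Fin.cons l d, ?_, hlA.cons hd⟩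
    rw [sup_cons, ← hA, h2]

theorem minimal_free {Θ : FreeGroup α →* FreeGroup α} (hΘ : Injective Θ)
    {B0 K : Subgroup (FreeGroup α)} (hK : K.map Θ ≤ K) {k : ℕ}
    (hmin : ∀ m < k, ¬ HasK Θ B0 K m) {A : Subgroup (FreeGroup α)} (hA : A.FG)
    {c : Fin k → FreeGroup α} (hval : Valid Θ B0 K A (A ⊔ Subgroup.closure (Set.range c))) :
    FreeOver A c := by
  obtain ⟨G, hGA, hGB, hG⟩ := GP.exists_gp hA c
  obtain ⟨c', h1, h2⟩ := lemma1 hΘ hK hmin _ _ G rfl rfl hG (by rw [hGA, hGB]; exact hval)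
  rw [hGA] at h2
  refine h2.hopf hA ?_
  rw [← hGB, h1, hGA]

end
end MTCoh

namespace MTCoh

open Function

set_option linter.unusedSectionVars false

/-- Every element of a free group involves finitely many letters. -/
theorem exists_finite_letters {X : Type} (w : FreeGroup X) :
    ∃ S : Set X, S.Finite ∧ w ∈ Subgroup.closure (FreeGroup.of '' S) := by
  induction w using FreeGroup.induction_on with
  | C1 => exact ⟨∅, Set.finite_empty, one_mem _⟩
  | of x => exact ⟨{x}, Set.finite_singleton x, Subgroup.subset_closure ⟨x, rfl, rfl⟩⟩
  | inv_of x h =>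
    obtain ⟨S, h1, h2⟩ := h
    exact ⟨S, h1, inv_mem h2⟩
  | mul x y hx hy =>
    obtain ⟨S, h1, h2⟩ := hx
    obtain ⟨S', h1', h2'⟩ := hy
    refine ⟨S ∪ S', h1.union h1', mul_mem ?_ ?_⟩
    · exact Subgroup.closure_mono (Set.image_mono Set.subset_union_left) h2
    · exact Subgroup.closure_mono (Set.image_mono Set.subset_union_right) h2'

theorem finite_of_fg_freeGroup {X : Type} (h : Group.FG (FreeGroup X)) : Finite X := by
  classical
  obtain ⟨T, hT⟩ := h
  choose S hS hw using (exists_finite_letters (X := X))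
  set U : Set X := ⋃ w ∈ T, S w with hU
  have hfin : U.Finite := Set.Finite.biUnion T.finite_toSet fun w _ => hS w
  have htop : Subgroup.closure (FreeGroup.of '' U) = ⊤ := by
    rw [eq_top_iff, ← hT, Subgroup.closure_le]
    intro w hwT
    exact Subgroup.closure_mono (Set.image_mono (Set.subset_biUnion_of_mem (u := S) hwT)) (hw w)
  by_contra hinf
  rw [not_finite_iff_infinite] at hinf
  obtain ⟨x, hx⟩ := hfin.exists_notMem
  let φ : FreeGroup X →* Multiplicative ℤ :=
    FreeGroup.lift fun y => if y = x then Multiplicative.ofAdd 1 else 1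
  have hk : Subgroup.closure (FreeGroup.of '' U) ≤ φ.ker := by
    rw [Subgroup.closure_le]
    rintro _ ⟨y, hy, rfl⟩
    have : y ≠ x := fun h => hx (h ▸ hy)
    simp [φ, MonoidHom.mem_ker, this]
  have : FreeGroup.of x ∈ φ.ker := hk (htop ▸ Subgroup.mem_top _)
  simp [φ, MonoidHom.mem_ker] at this

/-- A finitely generated subgroup of a free group has a finite basis. -/
theorem exists_basis {α : Type} {A : Subgroup (FreeGroup α)} (hA : A.FG) :
    ∃ (m : ℕ) (a : Fin m → FreeGroup α), A = Subgroup.closure (Set.range a) ∧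
      ∀ (Q : Type) [Group Q] (y : Fin m → Q), ∃ φ : FreeGroup α → Q, MulOn A φ ∧
        ∀ i, φ (a i) = y i := by
  let e := IsFreeGroup.toFreeGroup A
  have hfg : Group.FG (FreeGroup (IsFreeGroup.Generators A)) := by
    have : Group.FG A := (Group.fg_iff_subgroup_fg A).2 hA
    exact Group.fg_of_surjective (f := e.toMonoidHom) e.surjective
  have hfin := finite_of_fg_freeGroup hfg
  obtain ⟨m, ⟨r⟩⟩ := Finite.exists_equiv_fin (IsFreeGroup.Generators A)
  refine ⟨m, fun i => (e.symm (FreeGroup.of (r.symm i)) : A), ?_, ?_⟩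
  · have : (fun i => ((e.symm (FreeGroup.of (r.symm i)) : A) : FreeGroup α)) =
        (A.subtype.comp e.symm.toMonoidHom) ∘ FreeGroup.of ∘ r.symm := rfl
    rw [this, Set.range_comp, ← MonoidHom.map_closure, EquivLike.range_comp,
      FreeGroup.closure_range_of, ← Subgroup.map_map]
    rw [← MonoidHom.range_eq_map, MonoidHom.range_eq_top.2 e.symm.surjective,
      ← MonoidHom.range_eq_map, Subgroup.range_subtype]
  · intro Q _ y
    obtain ⟨φ, h1, h2⟩ := MulOn.exists_of_hom
      ((FreeGroup.lift fun x => y (r x)).comp e.toMonoidHom : A →* Q)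
    refine ⟨φ, h1, fun i => ?_⟩
    rw [h2]
    simp

theorem exists_fin_gen {Γ : Type} [Group Γ] {B : Subgroup Γ} (hB : B.FG) :
    ∃ (n : ℕ) (s : Fin n → Γ), Subgroup.closure (Set.range s) = B := by
  obtain ⟨S, hS⟩ := hB
  refine ⟨S.card, fun i => (S.equivFin.symm i : Γ), ?_⟩
  rw [← hS]
  congr 1
  ext x
  constructor
  · rintro ⟨i, rfl⟩
    exact (S.equivFin.symm i).2
  · intro hx
    exact ⟨S.equivFin ⟨x, hx⟩, by simp⟩

/-- The chain `A ≤ A ⊔ ⟨c⟩ ≤ A ⊔ ⟨c, Θ c⟩ ≤ ...`. -/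
def chain {α : Type} {k : ℕ} (Θ : FreeGroup α →* FreeGroup α) (A : Subgroup (FreeGroup α))
    (c : Fin k → FreeGroup α) : ℕ → Subgroup (FreeGroup α)
  | 0 => A
  | n + 1 => chain Θ A c n ⊔ Subgroup.closure (Set.range fun l => Θ^[n] (c l))

/-- The letters of the infinitely generated free group. -/
def bigMap {α : Type} {m k : ℕ} (Θ : FreeGroup α →* FreeGroup α) (a : Fin m → FreeGroup α)
    (c : Fin k → FreeGroup α) : FreeGroup (Fin m ⊕ Fin k × ℕ) →* FreeGroup α :=
  FreeGroup.lift (Sum.elim a fun p => Θ^[p.2] (c p.1))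

theorem core {α : Type} {Θ : FreeGroup α →* FreeGroup α} (hΘ : Injective Θ)
    {B0 K : Subgroup (FreeGroup α)} (hB0 : B0.FG) (hle : B0 ≤ K) (hK : K.map Θ ≤ K) :
    ∃ (m k : ℕ) (a : Fin m → FreeGroup α) (c : Fin k → FreeGroup α),
      (∀ i, Θ (a i) ∈ Subgroup.closure (Set.range a) ⊔ Subgroup.closure (Set.range c)) ∧
      B0 ≤ Subgroup.closure (Set.range a) ⊔ Subgroup.closure (Set.range c) ∧
      Subgroup.closure (Set.range a) ⊔ Subgroup.closure (Set.range c) ≤ K ∧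
      Injective (bigMap Θ a c) := by
  classical
  have hex : ∃ k, HasK Θ B0 K k := by
    obtain ⟨n, s, hs⟩ := exists_fin_gen hB0
    refine ⟨n, ⊥, s, Subgroup.FG.bot, ?_, ?_, ?_⟩
    · simp
    · rw [bot_sup_eq, hs]
    · rw [bot_sup_eq, hs]; exact hle
  have hmin : ∀ m < Nat.find hex, ¬ HasK Θ B0 K m := fun m hm => Nat.find_min hex hm
  obtain ⟨A, c, hA, hval⟩ := Nat.find_spec hex
  generalize Nat.find hex = k at hmin c hval
  have hch : ∀ n, (chain Θ A c n).FG ∧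
      Valid Θ B0 K (chain Θ A c n) (chain Θ A c (n + 1)) := by
    intro n
    induction n with
    | zero => exact ⟨hA, hval⟩
    | succ n ih =>
      obtain ⟨h1, h2, h3, h4⟩ := ih
      refine ⟨?_, ?_, ?_, ?_⟩
      · exact h1.sup ((Subgroup.fg_iff _).2 ⟨_, rfl, Set.finite_range _⟩)
      · conv_lhs => rw [chain, Subgroup.map_sup]
        conv_rhs => rw [chain]
        refine sup_le_sup h2 ?_
        rw [MonoidHom.map_closure, ← Set.range_comp]
        refine Subgroup.closure_mono ?_
        rintro _ ⟨l, rfl⟩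
        exact ⟨l, Function.iterate_succ_apply' _ _ _⟩
      · exact h3.trans (le_sup_left (b := Subgroup.closure (Set.range fun l => Θ^[n+1] (c l))))
      · rw [chain, sup_le_iff, Subgroup.closure_le]
        refine ⟨h4, ?_⟩
        rintro _ ⟨l, rfl⟩
        change Θ^[n + 1] (c l) ∈ K
        rw [Function.iterate_succ_apply']
        refine hK ⟨_, h4 ?_, rfl⟩
        exact mem_sup_gen (chain Θ A c n) (fun l => Θ^[n] (c l)) l
  have hfree : ∀ n, FreeOver (chain Θ A c n) (fun l => Θ^[n] (c l)) := fun n =>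
    minimal_free hΘ hK hmin (hch n).1 (hch n).2
  obtain ⟨m, a, haA, hbas⟩ := exists_basis hA
  refine ⟨m, k, a, c, ?_, ?_, ?_, ?_⟩
  · intro i
    rw [← haA]
    refine hval.1 ⟨a i, ?_, rfl⟩
    rw [haA]
    exact Subgroup.subset_closure ⟨i, rfl⟩
  · rw [← haA]; exact hval.2.1
  · rw [← haA]; exact hval.2.2
  · -- build inverse maps on finite levels
    have hΦ : ∀ n, ∃ Φ : FreeGroup α → FreeGroup (Fin m ⊕ Fin k × ℕ),
        MulOn (chain Θ A c n) Φ ∧ (∀ i, Φ (a i) = FreeGroup.of (Sum.inl i)) ∧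
        (∀ i, a i ∈ chain Θ A c n) ∧
        ∀ l, ∀ j < n, Θ^[j] (c l) ∈ chain Θ A c n ∧
          Φ (Θ^[j] (c l)) = FreeGroup.of (Sum.inr (l, j)) := by
      intro n
      induction n with
      | zero =>
        obtain ⟨φ, h1, h2⟩ := hbas (FreeGroup (Fin m ⊕ Fin k × ℕ))
          (fun i => FreeGroup.of (Sum.inl i))
        refine ⟨φ, h1, h2, fun i => ?_, fun l j hj => by omega⟩
        change a i ∈ A
        rw [haA]; exact Subgroup.subset_closure ⟨i, rfl⟩
      | succ n ih =>
        obtain ⟨φ, h1, h2, h3, h4⟩ := ih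
        obtain ⟨Φ, k1, k2, k3⟩ := hfree n (FreeGroup (Fin m ⊕ Fin k × ℕ)) φ h1
          (fun l => FreeGroup.of (Sum.inr (l, n)))
        have hle' : chain Θ A c n ≤ chain Θ A c (n + 1) := le_sup_left
        refine ⟨Φ, k1, fun i => ?_, fun i => hle' (h3 i), fun l j hj => ?_⟩
        · rw [k2 _ (h3 i), h2]
        · rcases Nat.lt_succ_iff_lt_or_eq.1 hj with h | rfl
          · exact ⟨hle' (h4 l j h).1, by rw [k2 _ (h4 l j h).1, (h4 l j h).2]⟩
          · exact ⟨mem_sup_gen (chain Θ A c j) (fun l => Θ^[j] (c l)) l, k3 l⟩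
    have hlev : ∀ w : FreeGroup (Fin m ⊕ Fin k × ℕ), ∃ N, ∀ n ≥ N,
        w ∈ Subgroup.closure
          (FreeGroup.of '' {x : Fin m ⊕ Fin k × ℕ | ∀ p, x = Sum.inr p → p.2 < n}) := by
      intro w
      induction w using FreeGroup.induction_on with
      | C1 => exact ⟨0, fun _ _ => one_mem _⟩
      | of x =>
        rcases x with i | p
        · refine ⟨0, fun n _ => Subgroup.subset_closure ⟨_, ?_, rfl⟩⟩
          rintro p h; cases h
        · refine ⟨p.2 + 1, fun n hn => Subgroup.subset_closure ⟨_, ?_, rfl⟩⟩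
          rintro q h
          cases h
          omega
      | inv_of x h =>
        obtain ⟨N, h⟩ := h
        exact ⟨N, fun n hn => inv_mem (h n hn)⟩
      | mul x y hx hy =>
        obtain ⟨N, h⟩ := hx
        obtain ⟨N', h'⟩ := hy
        exact ⟨max N N', fun n hn => mul_mem (h n (le_of_max_le_left hn))
          (h' n (le_of_max_le_right hn))⟩
    rw [injective_iff_map_eq_one]
    intro w hw
    obtain ⟨n, hn⟩ := hlev w
    specialize hn n le_rfl
    obtain ⟨Φ, h1, h2, h3, h4⟩ := hΦ n
    have key : bigMap Θ a c w ∈ chain Θ A c n ∧ Φ (bigMap Θ a c w) = w := by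
      clear hw
      induction hn using Subgroup.closure_induction with
      | mem x hx =>
        obtain ⟨y, hy, rfl⟩ := hx
        rcases y with i | ⟨l, j⟩
        · simp only [bigMap, FreeGroup.lift_apply_of, Sum.elim_inl]
          exact ⟨h3 i, h2 i⟩
        · simp only [bigMap, FreeGroup.lift_apply_of, Sum.elim_inr]
          exact h4 l j (hy _ rfl)
      | one => rw [map_one]; exact ⟨one_mem _, h1.one⟩
      | mul x y _ _ hx hy =>
        rw [map_mul]
        exact ⟨mul_mem hx.1 hy.1, by rw [h1 _ hx.1 _ hy.1, hx.2, hy.2]⟩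
      | inv x _ hx =>
        rw [map_inv]
        exact ⟨inv_mem hx.1, by rw [h1.inv hx.1, hx.2]⟩
    rw [← key.2, hw, h1.one]

end MTCoh

namespace MTCoh

open Function

theorem normal_form {E : Type} [Group E] {τ : E} {N : Subgroup E}
    (hN : ∀ g ∈ N, τ * g * τ⁻¹ ∈ N) {x : E}
    (hx : x ∈ Subgroup.closure ({τ} ∪ (N : Set E))) :
    ∃ (p q : ℕ) (g : E), g ∈ N ∧ x = (τ ^ p)⁻¹ * g * τ ^ q := by
  have hpow : ∀ p : ℕ, ∀ g ∈ N, τ ^ p * g * (τ ^ p)⁻¹ ∈ N := by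
    intro p
    induction p with
    | zero => intro g hg; simpa using hg
    | succ p ih =>
      intro g hg
      have := hN _ (ih g hg)
      convert this using 1
      rw [pow_succ']
      group
  have hmulN : ∀ n ∈ N, ∀ y : E, (∃ (p q : ℕ) (g : E), g ∈ N ∧ y = (τ ^ p)⁻¹ * g * τ ^ q) →
      ∃ (p q : ℕ) (g : E), g ∈ N ∧ n * y = (τ ^ p)⁻¹ * g * τ ^ q := by
    rintro n hn _ ⟨p, q, g, hg, rfl⟩
    exact ⟨p, q, _, mul_mem (hpow p n hn) hg, by group⟩
  induction hx using Subgroup.closure_induction_left with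
  | one => exact ⟨0, 0, 1, one_mem _, by simp⟩
  | mul_left x hx y hy ih =>
    rcases hx with rfl | hx
    · obtain ⟨p, q, g, hg, rfl⟩ := ih
      rcases p with _ | p
      · exact ⟨0, q + 1, _, hN g hg, by rw [pow_succ']; group⟩
      · exact ⟨p, q, g, hg, by rw [pow_succ]; group⟩
    · exact hmulN x hx _ ih
  | inv_mul_cancel x hx y hy ih =>
    rcases hx with rfl | hx
    · obtain ⟨p, q, g, hg, rfl⟩ := ih
      exact ⟨p + 1, q, g, hg, by rw [pow_succ]; group⟩
    · exact hmulN x⁻¹ (inv_mem hx) _ ih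

theorem asc_fp {α : Type} {Θ : FreeGroup α →* FreeGroup α} (hΘ : Injective Θ)
    {E : Type} [Group E] (ι : FreeGroup α →* E) (hι : Injective ι) (τ : E)
    (hτ : ∀ g, τ * ι g * τ⁻¹ = ι (Θ g)) (χ : E →* Multiplicative ℤ)
    (hχτ : χ τ = Multiplicative.ofAdd 1) (hχι : ∀ g, χ (ι g) = 1)
    (htop : Subgroup.closure ({τ} ∪ (ι.range : Set E)) = ⊤)
    {H : Subgroup E} (hτH : τ ∈ H) (hH : H.FG) : Group.IsFinitelyPresented H := by
  classical
  have hrange : ∀ g ∈ ι.range, τ * g * τ⁻¹ ∈ ι.range := by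
    rintro _ ⟨g, rfl⟩
    exact ⟨_, (hτ g).symm⟩
  obtain ⟨r, s, hs⟩ := exists_fin_gen hH
  have hsH : ∀ i, s i ∈ H := fun i => hs ▸ Subgroup.subset_closure ⟨i, rfl⟩
  have hnf : ∀ i, ∃ (p q : ℕ) (g : FreeGroup α), s i = (τ ^ p)⁻¹ * ι g * τ ^ q := by
    intro i
    obtain ⟨p, q, _, ⟨g, rfl⟩, h⟩ := normal_form (x := s i) hrange (htop ▸ Subgroup.mem_top _)
    exact ⟨p, q, g, h⟩
  choose p q g hg using hnf
  set B0 := Subgroup.closure (Set.range g) with hB0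
  set K := H.comap ι with hK
  have hgK : B0 ≤ K := by
    rw [hB0, Subgroup.closure_le]
    rintro _ ⟨i, rfl⟩
    change ι (g i) ∈ H
    have : ι (g i) = τ ^ p i * s i * (τ ^ q i)⁻¹ := by rw [hg]; group
    rw [this]
    exact mul_mem (mul_mem (pow_mem hτH _) (hsH i)) (inv_mem (pow_mem hτH _))
  have hKΘ : K.map Θ ≤ K := by
    rintro _ ⟨x, hx, rfl⟩
    change ι (Θ x) ∈ H
    rw [← hτ]
    exact mul_mem (mul_mem hτH hx) (inv_mem hτH)
  obtain ⟨m, k, a, c, h1, h2, h3, h4⟩ := core hΘ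
    ((Subgroup.fg_iff _).2 ⟨_, rfl, Set.finite_range g⟩) hgK hKΘ
  have hw : ∀ i, ∃ w : FreeGroup (Fin m ⊕ Fin k), FreeGroup.lift (Sum.elim a c) w = Θ (a i) := by
    intro i
    have := h1 i
    rw [← Subgroup.closure_union, ← Set.Sum.elim_range, ← FreeGroup.range_lift_eq_closure] at this
    exact this
  choose w hw using hw
  let rels : Set (FreeGroup (Option (Fin m ⊕ Fin k))) := Set.range fun i : Fin m =>
    FreeGroup.of none * FreeGroup.of (some (Sum.inl i)) * (FreeGroup.of none)⁻¹ *
      (FreeGroup.map some (w i))⁻¹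
  have : Finite rels := Set.finite_range _
  let f : Option (Fin m ⊕ Fin k) → E := fun o => o.elim τ fun x => ι (Sum.elim a c x)
  have hfmap : ∀ v : FreeGroup (Fin m ⊕ Fin k), FreeGroup.lift f (FreeGroup.map some v) =
      ι (FreeGroup.lift (Sum.elim a c) v) := by
    intro v
    have : (FreeGroup.lift f).comp (FreeGroup.map some) =
        ι.comp (FreeGroup.lift (Sum.elim a c)) := by
      ext x; simp [f]
    exact DFunLike.congr_fun this v
  have hrel : ∀ x ∈ rels, FreeGroup.lift f x = 1 := by
    rintro _ ⟨i, rfl⟩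
    simp only [map_mul, map_inv, hfmap, hw, FreeGroup.lift_apply_of]
    simp only [f, Option.elim, Sum.elim_inl]
    rw [hτ, mul_inv_cancel]
  let π : PresentedGroup rels →* E := PresentedGroup.toGroup hrel
  let T : PresentedGroup rels := PresentedGroup.of none
  let L : FreeGroup (Fin m ⊕ Fin k × ℕ) →* PresentedGroup rels :=
    FreeGroup.lift (Sum.elim (fun i => PresentedGroup.of (some (Sum.inl i)))
      (fun z => T ^ z.2 * PresentedGroup.of (some (Sum.inr z.1)) * (T ^ z.2)⁻¹))
  have hπT : π T = τ := PresentedGroup.toGroup.of hrel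
  have hpow : ∀ (j : ℕ) (x : FreeGroup α), τ ^ j * ι x * (τ ^ j)⁻¹ = ι (Θ^[j] x) := by
    intro j
    induction j with
    | zero => intro x; simp
    | succ j ih =>
      intro x
      rw [Function.iterate_succ_apply', ← hτ, ← ih, pow_succ']
      group
  have hπL : ∀ v, π (L v) = ι (bigMap Θ a c v) := by
    intro v
    have : π.comp L = ι.comp (bigMap Θ a c) := by
      ext x
      rcases x with i | ⟨l, j⟩
      · simp only [MonoidHom.comp_apply, L, bigMap, FreeGroup.lift_apply_of, Sum.elim_inl]
        exact PresentedGroup.toGroup.of hrel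
      · simp only [MonoidHom.comp_apply, L, bigMap, FreeGroup.lift_apply_of, Sum.elim_inr,
          map_mul, map_inv, map_pow, hπT]
        rw [← hpow]
        congr 2
        exact PresentedGroup.toGroup.of hrel
    exact DFunLike.congr_fun this v
  let u : FreeGroup (Fin m ⊕ Fin k) →* FreeGroup (Fin m ⊕ Fin k × ℕ) :=
    FreeGroup.map (Sum.map id fun l => (l, 0))
  have hLu : ∀ v, L (u v) = PresentedGroup.mk rels (FreeGroup.map some v) := by
    intro v
    have : L.comp u = (PresentedGroup.mk rels).comp (FreeGroup.map some) := by
      ext x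
      rcases x with i | l
      · simp [L, u]; rfl
      · simp [L, u]; rfl
    exact DFunLike.congr_fun this v
  have hTN : ∀ y ∈ L.range, T * y * T⁻¹ ∈ L.range := by
    rintro _ ⟨v, rfl⟩
    have hle : (⊤ : Subgroup (FreeGroup (Fin m ⊕ Fin k × ℕ))) ≤
        L.range.comap ((MulAut.conj T).toMonoidHom.comp L) := by
      rw [← FreeGroup.closure_range_of, Subgroup.closure_le]
      rintro _ ⟨x, rfl⟩
      change T * L (FreeGroup.of x) * T⁻¹ ∈ L.range
      rcases x with i | ⟨l, j⟩
      · refine ⟨u (w i), ?_⟩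
        rw [hLu]
        have hone : PresentedGroup.mk rels (FreeGroup.of none * FreeGroup.of (some (Sum.inl i)) *
            (FreeGroup.of none)⁻¹ * (FreeGroup.map some (w i))⁻¹) = 1 :=
          PresentedGroup.one_of_mem ⟨i, rfl⟩
        rw [map_mul, map_inv, mul_inv_eq_one] at hone
        rw [← hone]
        simp only [L, FreeGroup.lift_apply_of, Sum.elim_inl, map_mul, map_inv]
        rfl
      · refine ⟨FreeGroup.of (Sum.inr (l, j + 1)), ?_⟩
        simp only [L, FreeGroup.lift_apply_of, Sum.elim_inr]
        rw [pow_succ']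
        group
    exact hle (Subgroup.mem_top v)
  have hPtop : Subgroup.closure ({T} ∪ (L.range : Set (PresentedGroup rels))) = ⊤ := by
    rw [eq_top_iff, ← PresentedGroup.closure_range_of, Subgroup.closure_le]
    rintro _ ⟨x, rfl⟩
    apply Subgroup.subset_closure
    rcases x with _ | i | l
    · exact Or.inl rfl
    · exact Or.inr ⟨FreeGroup.of (Sum.inl i), by simp [L]⟩
    · exact Or.inr ⟨FreeGroup.of (Sum.inr (l, 0)), by simp [L]⟩
  have hinj : Injective π := by
    rw [injective_iff_map_eq_one]
    intro x hx
    obtain ⟨p, q, _, ⟨v, rfl⟩, rfl⟩ := normal_form (x := x) hTN (hPtop ▸ Subgroup.mem_top _)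
    rw [map_mul, map_mul, map_inv, map_pow, map_pow, hπT, hπL] at hx
    have hpq : p = q := by
      have := congrArg χ hx
      rw [map_mul, map_mul, map_inv, map_pow, map_pow, hχτ, hχι, map_one χ, mul_one,
        inv_mul_eq_one, ← ofAdd_nsmul, ← ofAdd_nsmul] at this
      simpa using this
    subst hpq
    have : ι (bigMap Θ a c v) = 1 := by
      have := congrArg (fun z => τ ^ p * z * (τ ^ p)⁻¹) hx
      simpa [mul_assoc] using this
    rw [← map_one ι] at this
    have := hι this
    rw [← map_one (bigMap Θ a c)] at this
    rw [h4 this]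
    simp
  have hran : π.range = H := by
    apply le_antisymm
    · rw [MonoidHom.range_eq_map, ← PresentedGroup.closure_range_of, MonoidHom.map_closure,
        Subgroup.closure_le]
      rintro _ ⟨_, ⟨x, rfl⟩, rfl⟩
      rcases x with _ | i | l
      · change π T ∈ H
        rw [hπT]; exact hτH
      · have e : π (PresentedGroup.of (some (Sum.inl i))) = ι (a i) :=
          PresentedGroup.toGroup.of hrel
        rw [e]
        exact h3 (le_sup_left (a := Subgroup.closure (Set.range a))
          (Subgroup.subset_closure ⟨i, rfl⟩))
      · have e : π (PresentedGroup.of (some (Sum.inr l))) = ι (c l) :=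
          PresentedGroup.toGroup.of hrel
        rw [e]
        exact h3 (mem_sup_gen _ c l)
    · rw [← hs, Subgroup.closure_le]
      have hB : (Subgroup.closure (Set.range a) ⊔ Subgroup.closure (Set.range c)).map ι ≤
          π.range := by
        rw [Subgroup.map_sup, MonoidHom.map_closure, MonoidHom.map_closure, sup_le_iff,
          Subgroup.closure_le, Subgroup.closure_le]
        constructor
        · rintro _ ⟨_, ⟨i, rfl⟩, rfl⟩
          exact ⟨PresentedGroup.of (some (Sum.inl i)), PresentedGroup.toGroup.of hrel⟩
        · rintro _ ⟨_, ⟨i, rfl⟩, rfl⟩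
          exact ⟨PresentedGroup.of (some (Sum.inr i)), PresentedGroup.toGroup.of hrel⟩
      have hτπ : τ ∈ π.range := ⟨T, hπT⟩
      rintro _ ⟨i, rfl⟩
      rw [hg]
      refine mul_mem (mul_mem (inv_mem (pow_mem hτπ _)) (hB ⟨g i, h2 ?_, rfl⟩)) (pow_mem hτπ _)
      exact Subgroup.subset_closure ⟨i, rfl⟩
  have := Group.IsFinitelyPresented.equiv (MonoidHom.ofInjective hinj)
  rw [hran] at this
  exact this

end MTCoh
namespace MTCoh

open Function

theorem fp_retract {M E : Type} [Group M] [Group E] (a : M →* E) (γ : E →* M) (τ : E)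
    (hγa : ∀ x, γ (a x) = x) (hγτ : γ τ = 1)
    (hE : ∀ H : Subgroup E, τ ∈ H → H.FG → Group.IsFinitelyPresented H)
    (H : Subgroup M) (hH : H.FG) : Group.IsFinitelyPresented H := by
  set H' := H.map a ⊔ Subgroup.closure {τ} with hH'
  have hτ : τ ∈ H' := le_sup_right (a := H.map a) (Subgroup.subset_closure rfl)
  have haH : ∀ x ∈ H, a x ∈ H' := fun x hx =>
    le_sup_left (a := H.map a) (Subgroup.mem_map_of_mem a hx)
  have hmapfg : (H.map a).FG := by
    obtain ⟨S, hS⟩ := hH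
    exact (Subgroup.fg_iff _).2 ⟨a '' S, by rw [← hS, MonoidHom.map_closure],
      S.finite_toSet.image a⟩
  have hfg : H'.FG := hmapfg.sup ((Subgroup.fg_iff _).2 ⟨_, rfl, Set.finite_singleton τ⟩)
  have hfp : Group.IsFinitelyPresented H' := hE H' hτ hfg
  have hγH : ∀ x : H', (γ.comp H'.subtype) x ∈ H := by
    have : H' ≤ H.comap γ := by
      rw [hH', sup_le_iff, Subgroup.closure_le, Set.singleton_subset_iff]
      constructor
      · rintro _ ⟨x, hx, rfl⟩
        change γ (a x) ∈ H
        rw [hγa]; exact hx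
      · change γ τ ∈ H
        rw [hγτ]; exact one_mem _
    exact fun x => this x.2
  let ρ : H' →* H := (γ.comp H'.subtype).codRestrict H hγH
  let σ : H →* H' := (a.comp H.subtype).codRestrict H' fun x => haH x x.2
  have hρσ : ∀ x, ρ (σ x) = x := fun x => Subtype.ext (hγa x)
  have hρτ : ρ ⟨τ, hτ⟩ = 1 := Subtype.ext hγτ
  refine Group.IsFinitelyPresented.of_surjective ρ (fun x => ⟨σ x, hρσ x⟩) ?_
  refine ⟨{⟨τ, hτ⟩}, Set.finite_singleton _, ?_⟩
  apply le_antisymm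
  · apply Subgroup.normalClosure_le_normal
    rw [Set.singleton_subset_iff]
    exact hρτ
  · set N := Subgroup.normalClosure {(⟨τ, hτ⟩ : H')} with hN
    let Q := QuotientGroup.mk' N
    have key : H' ≤ (Q.eqLocus (Q.comp (σ.comp ρ))).map H'.subtype := by
      conv_lhs => rw [hH']
      rw [sup_le_iff, Subgroup.closure_le, Set.singleton_subset_iff]
      constructor
      · rintro _ ⟨x, hx, rfl⟩
        refine ⟨σ ⟨x, hx⟩, ?_, rfl⟩
        change Q (σ ⟨x, hx⟩) = Q (σ (ρ (σ ⟨x, hx⟩)))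
        rw [hρσ]
      · refine ⟨⟨τ, hτ⟩, ?_, rfl⟩
        change Q ⟨τ, hτ⟩ = Q (σ (ρ ⟨τ, hτ⟩))
        rw [hρτ, map_one, map_one]
        exact (QuotientGroup.eq_one_iff _).2 (Subgroup.subset_normalClosure rfl)
    intro x hx
    obtain ⟨y, hy, hyx⟩ := key x.2
    have hyx' : y = x := Subtype.ext hyx
    subst hyx'
    have h1 : Q y = Q (σ (ρ y)) := hy
    rw [MonoidHom.mem_ker.1 hx, map_one, map_one] at h1
    exact (QuotientGroup.eq_one_iff _).1 h1

section
variable {I : Type} (J : Set I) (Ψ : freeFactor J →* FreeGroup I)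

/-- The alphabet of the large free group. -/
abbrev Alph (I : Type) : Type := Option I ⊕ Option I × ℕ

/-- The map `FreeGroup J → freeFactor J`. -/
def jmap : FreeGroup J →* freeFactor J :=
  FreeGroup.lift fun j => ⟨FreeGroup.of (j : I),
    Subgroup.subset_closure (Set.mem_image_of_mem _ j.2)⟩

theorem jmap_injective : Injective (jmap J) := by
  have h : (freeFactor J).subtype.comp (jmap J) = FreeGroup.map Subtype.val := by
    ext j; simp [jmap]
  have h2 : Injective ((freeFactor J).subtype.comp (jmap J)) := by
    rw [h]; exact FreeGroup.map_injective Subtype.val_injective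
  exact Injective.of_comp (f := (freeFactor J).subtype) (by simpa using h2)

/-- The map `e_j ↦ s Ψ(e_j) s⁻¹`. -/
def hmap : FreeGroup J →* FreeGroup (Option I) :=
  (MulAut.conj (FreeGroup.of none)).toMonoidHom.comp
    ((FreeGroup.map some).comp (Ψ.comp (jmap J)))

theorem hmap_injective (hΨ : Injective Ψ) : Injective (hmap J Ψ) := by
  unfold hmap
  simp only [MonoidHom.coe_comp]
  exact (MulAut.conj (FreeGroup.of (none : Option I))).injective.comp
    ((FreeGroup.map_injective (Option.some_injective I)).comp (hΨ.comp (jmap_injective J)))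

open Classical in
/-- The images of the letters under `Θ`. -/
noncomputable def thetaLetter : Alph I → FreeGroup (Alph I)
  | Sum.inl none => FreeGroup.of (Sum.inr (none, 0))
  | Sum.inl (some i) => if h : i ∈ J then FreeGroup.map Sum.inl (hmap J Ψ (FreeGroup.of ⟨i, h⟩))
      else FreeGroup.of (Sum.inr (some i, 0))
  | Sum.inr p => FreeGroup.of (Sum.inr (p.1, p.2 + 1))

/-- The injective endomorphism of the large free group. -/
noncomputable def theta : FreeGroup (Alph I) →* FreeGroup (Alph I) :=
  FreeGroup.lift (thetaLetter J Ψ)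

/-- Undoing the shift of letters. -/
def unshift : Option I × ℕ → Alph I
  | (i, 0) => Sum.inl i
  | (i, n + 1) => Sum.inr (i, n)

theorem theta_injective (hΨ : Injective Ψ) : Injective (theta J Ψ) := by
  have hg : Injective (FreeGroup.map (fun j : J => (Sum.inl (some (j : I)) : Alph I))) :=
    FreeGroup.map_injective fun x y h => by
      simpa [Subtype.ext_iff] using h
  obtain ⟨P, _, i, j, hi, hj, hij⟩ := exists_amalgam _ _ (hmap_injective J Ψ hΨ) hg
  let μ : FreeGroup (Alph I) →* P := FreeGroup.lift
    (Sum.elim (fun l => i (FreeGroup.of l)) fun p => j (FreeGroup.of (unshift p)))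
  have hμ : ∀ v, μ (FreeGroup.map Sum.inl v) = i v := by
    intro v
    have : μ.comp (FreeGroup.map Sum.inl) = i := by
      ext x; simp [μ]
    exact DFunLike.congr_fun this v
  have h : μ.comp (theta J Ψ) = j := by
    ext x
    simp only [MonoidHom.comp_apply, theta, FreeGroup.lift_apply_of]
    rcases x with (_ | x) | ⟨x, n⟩
    · simp [thetaLetter, μ, unshift]
    · by_cases hx : x ∈ J
      · simp only [thetaLetter, hx, dif_pos, hμ, hij, FreeGroup.map.of]
      · simp [thetaLetter, μ, unshift, hx]
    · simp [thetaLetter, μ, unshift]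
  have h2 : Injective (μ.comp (theta J Ψ)) := by rw [h]; exact hj
  exact Injective.of_comp (f := μ) (by simpa using h2)

theorem mt_fp (hΨ : Injective Ψ) (H : Subgroup (MTRel J Ψ)) (hH : H.FG) :
    Group.IsFinitelyPresented H := by
  classical
  have hΘ := theta_injective J Ψ hΨ
  let φ : (⊤ : Subgroup (FreeGroup (Alph I))) ≃* (theta J Ψ).range :=
    Subgroup.topEquiv.trans (MonoidHom.ofInjective hΘ)
  let E := HNNExtension (FreeGroup (Alph I)) ⊤ (theta J Ψ).range φ
  let ι : FreeGroup (Alph I) →* E := HNNExtension.of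
  let τ : E := HNNExtension.t
  have hι : Injective ι := HNNExtension.of_injective φ
  have hτ : ∀ g, τ * ι g * τ⁻¹ = ι (theta J Ψ g) := by
    intro g
    exact (HNNExtension.equiv_eq_conj (φ := φ) ⟨g, Subgroup.mem_top g⟩).symm
  let χ : E →* Multiplicative ℤ := HNNExtension.lift 1 (Multiplicative.ofAdd 1) (by simp)
  have hχτ : χ τ = Multiplicative.ofAdd 1 := HNNExtension.lift_t _ _ _
  have hχι : ∀ g, χ (ι g) = 1 := fun g => HNNExtension.lift_of _ _ _ g
  have htop : Subgroup.closure ({τ} ∪ (ι.range : Set E)) = ⊤ := by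
    rw [eq_top_iff]
    intro x _
    induction x using HNNExtension.induction_on with
    | of g => exact Subgroup.subset_closure (Or.inr ⟨g, rfl⟩)
    | t => exact Subgroup.subset_closure (Or.inl rfl)
    | mul x y hx hy => exact mul_mem (hx trivial) (hy trivial)
    | inv x hx => exact inv_mem (hx trivial)
  let t : MTRel J Ψ := PresentedGroup.of none
  let e : I → MTRel J Ψ := fun i => PresentedGroup.of (some i)
  let γ0 : FreeGroup (Alph I) →* MTRel J Ψ := FreeGroup.lift
    (Sum.elim (fun o => o.elim t⁻¹ e)
      (fun p => p.1.elim t⁻¹ (fun i => if i ∈ J then 1 else e i)))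
  have hpsi : ∀ (j : I) (hj : j ∈ J), t * e j * t⁻¹ = PresentedGroup.mk (mtRelsRel J Ψ)
      (FreeGroup.map some (Ψ (jmap J (FreeGroup.of ⟨j, hj⟩)))) := by
    intro j hj
    have hone : PresentedGroup.mk (mtRelsRel J Ψ) _ = 1 :=
      PresentedGroup.one_of_mem (Set.mem_range_self (⟨j, hj⟩ : J))
    rw [map_mul, map_inv, mul_inv_eq_one] at hone
    simp only [jmap, FreeGroup.lift_apply_of]
    rw [← hone, map_mul, map_mul, map_inv]
    rfl
  have hγ0 : ∀ v, γ0 (FreeGroup.map Sum.inl (FreeGroup.map some v)) =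
      PresentedGroup.mk (mtRelsRel J Ψ) (FreeGroup.map some v) := by
    intro v
    have : γ0.comp ((FreeGroup.map Sum.inl).comp (FreeGroup.map some)) =
        (PresentedGroup.mk (mtRelsRel J Ψ)).comp (FreeGroup.map some) := by
      ext x
      simp only [MonoidHom.comp_apply, FreeGroup.map.of, γ0, FreeGroup.lift_apply_of,
        Sum.elim_inl]
      rfl
    exact DFunLike.congr_fun this v
  have hγΘ : ∀ g, γ0 (theta J Ψ g) = γ0 g := by
    intro g
    have : γ0.comp (theta J Ψ) = γ0 := by
      ext x
      simp only [MonoidHom.comp_apply, theta, FreeGroup.lift_apply_of]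
      rcases x with (_ | x) | ⟨x, n⟩
      · simp [thetaLetter, γ0]
      · by_cases hx : x ∈ J
        · simp only [thetaLetter, hx, dif_pos, hmap, MonoidHom.comp_apply,
            MulEquiv.toMonoidHom_eq_coe, MonoidHom.coe_coe, MulAut.conj_apply, map_mul, map_inv,
            hγ0, FreeGroup.map.of]
          rw [← hpsi x hx]
          simp only [γ0, FreeGroup.lift_apply_of, Sum.elim_inl, Option.elim]
          group
        · simp [thetaLetter, γ0, hx]
      · simp [thetaLetter, γ0]
    exact DFunLike.congr_fun this g
  let γ : E →* MTRel J Ψ := HNNExtension.lift γ0 1 (by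
    intro a
    rw [one_mul, mul_one]
    exact (hγΘ a).symm)
  have hγτ : γ τ = 1 := HNNExtension.lift_t _ _ _
  have hγι : ∀ g, γ (ι g) = γ0 g := fun g => HNNExtension.lift_of _ _ _ g
  let s : E := ι (FreeGroup.of (Sum.inl none))
  let f : Option I → E := fun o => o.elim (s⁻¹ * τ) fun i => ι (FreeGroup.of (Sum.inl (some i)))
  have hf : ∀ v, FreeGroup.lift f (FreeGroup.map some v) =
      ι (FreeGroup.map Sum.inl (FreeGroup.map some v)) := by
    intro v
    have : (FreeGroup.lift f).comp (FreeGroup.map some) =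
        ι.comp ((FreeGroup.map Sum.inl).comp (FreeGroup.map some)) := by
      ext x
      simp [f]
    exact DFunLike.congr_fun this v
  have hrel : ∀ x ∈ mtRelsRel J Ψ, FreeGroup.lift f x = 1 := by
    rintro _ ⟨j, rfl⟩
    simp only [map_mul, map_inv, hf, FreeGroup.lift_apply_of]
    rw [mul_inv_eq_one]
    have h1 : ι (theta J Ψ (FreeGroup.of (Sum.inl (some (j : I))))) =
        s * ι (FreeGroup.map Sum.inl (FreeGroup.map some (Ψ ⟨FreeGroup.of (j : I),
          Subgroup.subset_closure (Set.mem_image_of_mem _ j.2)⟩))) * s⁻¹ := by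
      simp only [theta, FreeGroup.lift_apply_of, thetaLetter, j.2, dif_pos, hmap,
        MonoidHom.comp_apply, jmap,
        MulEquiv.toMonoidHom_eq_coe, MonoidHom.coe_coe, MulAut.conj_apply, map_mul, map_inv,
        FreeGroup.map.of]
      rfl
    rw [← hτ] at h1
    change s⁻¹ * τ * ι (FreeGroup.of (Sum.inl (some (j : I)))) * (s⁻¹ * τ)⁻¹ = _
    have h2 : s⁻¹ * τ * ι (FreeGroup.of (Sum.inl (some (j : I)))) * (s⁻¹ * τ)⁻¹ =
        s⁻¹ * (τ * ι (FreeGroup.of (Sum.inl (some (j : I)))) * τ⁻¹) * s := by group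
    rw [h2, h1]
    group
  let a : MTRel J Ψ →* E := PresentedGroup.toGroup hrel
  have hγa : ∀ x, γ (a x) = x := by
    intro x
    have : γ.comp a = MonoidHom.id _ := by
      ext o
      have ha : a (PresentedGroup.of o) = f o := PresentedGroup.toGroup.of hrel
      rw [MonoidHom.comp_apply, ha, MonoidHom.id_apply]
      rcases o with _ | i
      · change γ (s⁻¹ * τ) = _
        rw [map_mul, map_inv, hγτ, hγι]
        simp only [γ0, FreeGroup.lift_apply_of, Sum.elim_inl, Option.elim, inv_inv, mul_one]
        rfl
      · change γ (ι (FreeGroup.of (Sum.inl (some i)))) = _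
        rw [hγι]
        simp only [γ0, FreeGroup.lift_apply_of, Sum.elim_inl, Option.elim]
        rfl
    exact DFunLike.congr_fun this x
  exact fp_retract a γ τ hγa hγτ
    (fun H' h1 h2 => asc_fp hΘ ι hι τ hτ χ hχτ hχι htop h1 h2) H hH

end
end MTCoh

/-- Every finitely generated subgroup of `M(Ψ)` is finitely presented; that is,
`M(Ψ)` is coherent. -/
theorem mappingTorusRel_coherent {I : Type} (J : Set I) (Ψ : freeFactor J →* FreeGroup I)
    (hΨ : Function.Injective Ψ) (H : Subgroup (MTRel J Ψ)) (hH : H.FG) :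
    FinitelyPresented H := by
  have := MTCoh.mt_fp J Ψ hΨ H hH
  obtain ⟨n, s, hs, ⟨e⟩⟩ := Group.IsFinitelyPresented.exists_mulEquiv_presentedGroup (G := H)
  exact ⟨n, s, hs, ⟨e.symm⟩⟩
end
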